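/- Let 0 < γ ≤ 1 and δ > 0 satisfy 1714(1−γ) + 1725δ < 46. Then there exist ε > 0 and C > 0, depending only on γ and δ, such that for every integer N ≥ 2 and every real α one has |T₃(N,α) − S₃(N,α)| ≤ C·P^{1−δ−ε}, where P = N^{1/3}. -/

import Mathlib

open scoped Classical

/-- `e(x) = exp(2πix)`. -/
noncomputable def eexp (x : ℝ) : ℂ := Complex.exp (2 * Real.pi * Complex.I * x)

/-- The Piatetski-Shapiro prime set `𝒫_γ = {p prime : p = ⌊n^{1/γ}⌋ for some n ∈ ℕ, n ≥ 1}`. -/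
def PiatetskiShapiroSet (γ : ℝ) : Set ℕ :=
  {p | Nat.Prime p ∧ ∃ n : ℕ, 0 < n ∧ p = ⌊(n : ℝ) ^ ((1 : ℝ) / γ)⌋₊}

/-- `S₃(N,α) = Σ_{p ≤ N^{1/3}, p prime} e(αp³)`. -/
noncomputable def S₃ (N : ℕ) (α : ℝ) : ℂ :=
  ∑ p ∈ (Finset.range (N + 1)).filter
      (fun p => Nat.Prime p ∧ (p : ℝ) ≤ (N : ℝ) ^ ((1 : ℝ) / 3)),
    eexp (α * (p : ℝ) ^ 3)

/-- `T₃(N,α) = γ⁻¹ Σ_{p ≤ N^{1/3}, p ∈ 𝒫_γ} p^{1-γ} e(αp³)`. -/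
noncomputable def T₃ (γ : ℝ) (N : ℕ) (α : ℝ) : ℂ :=
  (γ⁻¹ : ℝ) * ∑ p ∈ (Finset.range (N + 1)).filter
      (fun p => p ∈ PiatetskiShapiroSet γ ∧ (p : ℝ) ≤ (N : ℝ) ^ ((1 : ℝ) / 3)),
    (((p : ℝ) ^ (1 - γ) : ℝ) : ℂ) * eexp (α * (p : ℝ) ^ 3)

/-!
For a prime `p`, the indicator of `𝒫_γ` is `(p + 1) ^ γ - p ^ γ` plus the increment of the
sawtooth function from `-p ^ γ` to `-(p + 1) ^ γ`. Multiplied by `γ⁻¹ p ^ (1 - γ)`, the smooth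
part is `1 + O(1 / p)`, which gives `S₃`. Expanding a smoothed sawtooth in its Fourier series leaves
sums over primes of `e(α p³ - h (p + u) ^ γ)` with `h ≤ P ^ (1 / 16)`, and Vaughan's identity turns
these into Type I and bilinear sums. After Cauchy–Schwarz every phase is a cubic polynomial, whose
coefficient depends on `α`, plus a smooth function. Since the fourth derivative no longer sees the
cubic, three Weyl–van der Corput differencings followed by the Kusmin–Landau inequality save a power
of `P` uniformly in `α`.
-/

section

open Finset Real ComplexConjugate

lemma eexp_add (x y : ℝ) : eexp (x + y) = eexp x * eexp y := by
  simp only [eexp, ← Complex.exp_add, Complex.ofReal_add, mul_add]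

lemma eexp_eq_exp_mul_I (x : ℝ) : eexp x = Complex.exp ((2 * π * x : ℝ) * Complex.I) := by
  rw [eexp]
  push_cast
  ring_nf

lemma norm_eexp (x : ℝ) : ‖eexp x‖ = 1 := by
  rw [eexp_eq_exp_mul_I, Complex.norm_exp_ofReal_mul_I]

lemma eexp_neg (x : ℝ) : eexp (-x) = conj (eexp x) := by
  simp [eexp, ← Complex.exp_conj, Complex.conj_ofNat]

lemma eexp_eq_cos_add_sin_mul_I (x : ℝ) :
    eexp x = cos (2 * π * x) + sin (2 * π * x) * Complex.I := by
  rw [eexp_eq_exp_mul_I, Complex.exp_mul_I, Complex.ofReal_cos, Complex.ofReal_sin]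

lemma norm_sum_eexp_Ioc_le {a b N : ℕ} (hab : b ≤ a + N) (g : ℕ → ℝ) :
    ‖∑ n ∈ Ioc a b, eexp (g n)‖ ≤ N :=
  calc ‖∑ n ∈ Ioc a b, eexp (g n)‖
      ≤ ∑ _ ∈ Ioc a b, (1 : ℝ) := norm_sum_le_of_le _ fun _ _ ↦ (norm_eexp _).le
    _ = (b - a : ℕ) := by simp
    _ ≤ N := by exact_mod_cast (by omega)

/-- The reciprocal `1 / (1 - e(d))`, which turns `e(g n)` into the multiple
`invOneSubEexp (g (n + 1) - g n) * (e(g n) - e(g (n + 1)))` of a difference. -/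
noncomputable def invOneSubEexp (d : ℝ) : ℂ := 1 / 2 + cot (π * d) / 2 * Complex.I

lemma invOneSubEexp_mul {d : ℝ} (hd : sin (π * d) ≠ 0) :
    invOneSubEexp d * (1 - eexp d) = 1 := by
  have hsc := sin_sq_add_cos_sq (π * d)
  rw [invOneSubEexp, eexp_eq_cos_add_sin_mul_I, cot_eq_cos_div_sin,
    show 2 * π * d = 2 * (π * d) by ring, cos_two_mul, sin_two_mul]
  generalize sin (π * d) = s at *
  generalize cos (π * d) = c at *
  apply Complex.ext
  · simp [pow_two]
    field_simp
    nlinarith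
  · simp [pow_two]
    field_simp
    linear_combination (-2 * c) * hsc

lemma two_mul_le_sin_pi_mul {d : ℝ} (h0 : 0 < d) (h1 : d ≤ 1 / 2) : 2 * d ≤ sin (π * d) := by
  have h := mul_le_sin (x := π * d) (by positivity) (by nlinarith [pi_pos])
  rwa [show 2 / π * (π * d) = 2 * d by field_simp] at h

lemma cos_pi_mul_nonneg {d : ℝ} (h0 : 0 < d) (h1 : d ≤ 1 / 2) : 0 ≤ cos (π * d) :=
  cos_nonneg_of_neg_pi_div_two_le_of_le (by nlinarith [pi_pos]) (by nlinarith [pi_pos])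

lemma cot_pi_mul_nonneg {d : ℝ} (h0 : 0 < d) (h1 : d ≤ 1 / 2) : 0 ≤ cot (π * d) := by
  rw [cot_eq_cos_div_sin]
  exact div_nonneg (cos_pi_mul_nonneg h0 h1) (by linarith [two_mul_le_sin_pi_mul h0 h1])

lemma cot_pi_mul_le {d : ℝ} (h0 : 0 < d) (h1 : d ≤ 1 / 2) : cot (π * d) ≤ 1 / (2 * d) := by
  rw [cot_eq_cos_div_sin]
  exact div_le_div₀ zero_le_one (cos_le_one _) (by positivity) (two_mul_le_sin_pi_mul h0 h1)

lemma antitoneOn_cot_pi_mul : AntitoneOn (fun d ↦ cot (π * d)) (Set.Ioc 0 (1 / 2)) := by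
  intro d hd e he hde
  have hπ := pi_pos
  simp only [cot_eq_cos_div_sin]
  refine div_le_div₀ (cos_pi_mul_nonneg hd.1 hd.2) ?_ ?_ ?_
  · exact cos_le_cos_of_nonneg_of_le_pi (by nlinarith [hd.1]) (by nlinarith [he.2]) (by nlinarith)
  · linarith [two_mul_le_sin_pi_mul hd.1 hd.2, hd.1]
  · exact sin_le_sin_of_le_of_le_pi_div_two (by nlinarith [hd.1]) (by nlinarith [he.2])
      (by nlinarith)

lemma norm_invOneSubEexp_le {d : ℝ} (h0 : 0 < d) (h1 : d ≤ 1 / 2) :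
    ‖invOneSubEexp d‖ ≤ 1 / 2 + cot (π * d) / 2 := by
  refine (norm_add_le _ _).trans_eq ?_
  rw [norm_mul, Complex.norm_I, mul_one, norm_div, norm_div, Complex.norm_real,
    norm_of_nonneg (cot_pi_mul_nonneg h0 h1)]
  norm_num

lemma norm_sum_mul_sub_le (w z : ℕ → ℂ) (hz : ∀ i, ‖z i‖ ≤ 1) (K : ℕ) :
    ‖∑ i ∈ range (K + 1), w i * (z i - z (i + 1))‖ ≤
      ‖w 0‖ + ‖w K‖ + ∑ i ∈ range K, ‖w (i + 1) - w i‖ := by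
  have hmul (c : ℂ) (i : ℕ) : ‖c * z i‖ ≤ ‖c‖ :=
    (norm_mul_le _ _).trans (mul_le_of_le_one_right (norm_nonneg _) (hz i))
  have hparts : ∑ i ∈ range (K + 1), w i * (z i - z (i + 1)) =
      w 0 * z 0 - w K * z (K + 1) + ∑ i ∈ range K, (w (i + 1) - w i) * z (i + 1) := by
    induction K with
    | zero => simp; ring
    | succ K ih => rw [sum_range_succ, ih, sum_range_succ]; ring
  rw [hparts]
  exact (norm_add_le _ _).trans (add_le_add
    ((norm_sub_le _ _).trans (add_le_add (hmul _ _) (hmul _ _)))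
    (norm_sum_le_of_le _ fun i _ ↦ hmul _ _))

lemma norm_sum_range_eexp_le_one_add_cot (g : ℕ → ℝ) (K : ℕ)
    (hd : ∀ i ≤ K, g (i + 1) - g i ∈ Set.Ioc 0 (1 / 2))
    (hanti : ∀ i < K, g (i + 2) - g (i + 1) ≤ g (i + 1) - g i) :
    ‖∑ i ∈ range (K + 1), eexp (g i)‖ ≤ 1 + cot (π * (g (K + 1) - g K)) := by
  set d : ℕ → ℝ := fun i ↦ g (i + 1) - g i with hd_def
  set t : ℕ → ℝ := fun i ↦ cot (π * d i) with ht
  have hterm : ∀ i ≤ K, eexp (g i) = invOneSubEexp (d i) * (eexp (g i) - eexp (g (i + 1))) := by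
    intro i hi
    have hsin : 0 < sin (π * d i) :=
      (mul_pos two_pos (hd i hi).1).trans_le (two_mul_le_sin_pi_mul (hd i hi).1 (hd i hi).2)
    have hnext : eexp (g (i + 1)) = eexp (g i) * eexp (d i) := by
      rw [← eexp_add, hd_def, add_sub_cancel]
    rw [hnext]
    linear_combination (-eexp (g i)) * invOneSubEexp_mul hsin.ne'
  have hvar : ∀ i < K, ‖invOneSubEexp (d (i + 1)) - invOneSubEexp (d i)‖ =
      t (i + 1) / 2 - t i / 2 := by
    intro i hi
    have hmono : t i ≤ t (i + 1) :=
      antitoneOn_cot_pi_mul (hd (i + 1) hi) (hd i hi.le) (hanti i hi)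
    have : invOneSubEexp (d (i + 1)) - invOneSubEexp (d i) =
        ((t (i + 1) / 2 - t i / 2 : ℝ) : ℂ) * Complex.I := by
      simp only [invOneSubEexp, ht]
      push_cast
      ring
    rw [this, norm_mul, Complex.norm_I, mul_one, Complex.norm_real, norm_of_nonneg (by linarith)]
  rw [sum_congr rfl fun i hi ↦ hterm i (Nat.le_of_lt_succ (mem_range.mp hi))]
  refine (norm_sum_mul_sub_le (fun i ↦ invOneSubEexp (d i)) (fun i ↦ eexp (g i))
    (fun i ↦ (norm_eexp _).le) K).trans ?_
  rw [sum_congr rfl fun i hi ↦ hvar i (mem_range.mp hi), sum_range_sub (fun i ↦ t i / 2)]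
  have h0 := norm_invOneSubEexp_le (hd 0 K.zero_le).1 (hd 0 K.zero_le).2
  have hK := norm_invOneSubEexp_le (hd K le_rfl).1 (hd K le_rfl).2
  linarith

/-- The Kusmin–Landau inequality. -/
theorem norm_sum_range_eexp_le (g : ℕ → ℝ) (K : ℕ) {lo : ℝ} (hlo : 0 < lo) (hlo' : lo ≤ 1 / 2)
    (hd : ∀ i < K, g (i + 1) - g i ∈ Set.Icc lo (1 / 2))
    (hanti : ∀ i, i + 1 < K → g (i + 2) - g (i + 1) ≤ g (i + 1) - g i) :
    ‖∑ i ∈ range (K + 1), eexp (g i)‖ ≤ 2 / lo := by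
  have hlo2 : 1 ≤ 1 / (2 * lo) := by rw [le_div_iff₀ (by positivity)]; linarith
  have hsplit : 2 / lo = 4 * (1 / (2 * lo)) := by field_simp; norm_num
  rcases K with _ | K
  · simp only [zero_add, range_one, sum_singleton, norm_eexp]
    linarith
  have hd' (i : ℕ) (hi : i ≤ K) : g (i + 1) - g i ∈ Set.Ioc 0 (1 / 2) :=
    ⟨hlo.trans_le (hd i (by omega)).1, (hd i (by omega)).2⟩
  have hinit := norm_sum_range_eexp_le_one_add_cot g K hd' fun i hi ↦ hanti i (by omega)
  have hcot : cot (π * (g (K + 1) - g K)) ≤ 1 / (2 * lo) :=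
    (cot_pi_mul_le (hd' K le_rfl).1 (hd' K le_rfl).2).trans
      (one_div_le_one_div_of_le (by positivity) (by linarith [(hd K (by omega)).1]))
  rw [sum_range_succ]
  refine (norm_add_le _ _).trans ?_
  rw [norm_eexp]
  linarith

end

section

open Finset Real ComplexConjugate

lemma norm_sum_sq_le_card_mul {ι : Type*} (s : Finset ι) (f : ι → ℂ) :
    ‖∑ i ∈ s, f i‖ ^ 2 ≤ #s * ∑ i ∈ s, ‖f i‖ ^ 2 :=
  (pow_le_pow_left₀ (norm_nonneg _) (norm_sum_le _ _) 2).trans sq_sum_le_card_mul_sum_sq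

lemma sum_norm_sum_sq_le {ι κ : Type*} (s : Finset ι) (t : Finset κ) (F : ι → κ → ℂ) :
    ∑ k ∈ s, ‖∑ j ∈ t, F k j‖ ^ 2 ≤ ∑ i ∈ t, ∑ j ∈ t, ‖∑ k ∈ s, F k i * conj (F k j)‖ := by
  have hexpand : ((∑ k ∈ s, ‖∑ j ∈ t, F k j‖ ^ 2 : ℝ) : ℂ) =
      ∑ i ∈ t, ∑ j ∈ t, ∑ k ∈ s, F k i * conj (F k j) := by
    push_cast
    simp only [← Complex.mul_conj', map_sum, sum_mul_sum]
    rw [sum_comm]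
    exact sum_congr rfl fun i _ ↦ sum_comm
  calc ∑ k ∈ s, ‖∑ j ∈ t, F k j‖ ^ 2
      = ‖((∑ k ∈ s, ‖∑ j ∈ t, F k j‖ ^ 2 : ℝ) : ℂ)‖ := by
        rw [Complex.norm_real, norm_of_nonneg (by positivity)]
    _ ≤ _ := by
        rw [hexpand]
        exact (norm_sum_le _ _).trans (sum_le_sum fun i _ ↦ norm_sum_le _ _)

lemma sum_range_dist_le {c : ℕ → ℝ} (hc : ∀ n, 0 ≤ c n) {Q i : ℕ} (hi : i < Q) :
    ∑ j ∈ range Q, c (Nat.dist i j) ≤ c 0 + 2 * ∑ q ∈ Ioo 0 Q, c q := by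
  have hside (s : Finset ℕ) (hs : ∀ j ∈ s, Nat.dist i j ∈ Ioo 0 Q)
      (hinj : Set.InjOn (Nat.dist i) s) : ∑ j ∈ s, c (Nat.dist i j) ≤ ∑ q ∈ Ioo 0 Q, c q := by
    rw [← sum_image (f := c) hinj]
    exact sum_le_sum_of_subset_of_nonneg (image_subset_iff.mpr hs) fun q _ _ ↦ hc q
  have hleft : ∑ j ∈ range i, c (Nat.dist i j) ≤ ∑ q ∈ Ioo 0 Q, c q := by
    refine hside _ (fun j hj ↦ ?_) fun j hj k hk hjk ↦ ?_
    · simp only [Nat.dist, mem_range, mem_Ioo] at *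
      omega
    · simp only [Nat.dist, coe_range, Set.mem_Iio] at *
      omega
  have hright : ∑ j ∈ Ioo i Q, c (Nat.dist i j) ≤ ∑ q ∈ Ioo 0 Q, c q := by
    refine hside _ (fun j hj ↦ ?_) fun j hj k hk hjk ↦ ?_
    · simp only [Nat.dist, mem_Ioo] at *
      omega
    · simp only [Nat.dist, coe_Ioo, Set.mem_Ioo] at *
      omega
  rw [range_eq_Ico, ← sum_Ico_consecutive _ i.zero_le hi.le, ← range_eq_Ico,
    ← Ioo_insert_left hi, sum_insert left_notMem_Ioo, Nat.dist_self]
  linarith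

lemma sum_Ioc_ite_shift (F : ℕ → ℂ) (a : ℕ) {b B j : ℕ} (hB : b + j ≤ B) :
    ∑ k ∈ Ioc a B, (if k ∈ Ioc (a + j) (b + j) then F (k - j) else 0) = ∑ n ∈ Ioc a b, F n := by
  have hfilter : {k ∈ Ioc a B | k ∈ Ioc (a + j) (b + j)} = (Ioc a b).map (addRightEmbedding j) := by
    rw [map_add_right_Ioc]
    ext k
    simp only [mem_filter, mem_Ioc]
    omega
  rw [← sum_filter, hfilter, sum_map]
  simp

lemma norm_sum_ite_shift_mul_conj (z : ℕ → ℂ) (a b : ℕ) {i j Q : ℕ} (hi : i < Q) (hj : j < Q) :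
    ‖∑ k ∈ Ioc a (b + Q), (if k ∈ Ioc (a + i) (b + i) then z (k - i) else 0) *
        conj (if k ∈ Ioc (a + j) (b + j) then z (k - j) else 0)‖ =
      ‖∑ n ∈ Ioc a (b - Nat.dist i j), z (n + Nat.dist i j) * conj (z n)‖ := by
  wlog hij : i ≤ j generalizing i j
  · rw [Nat.dist_comm, ← this hj hi (by omega), ← Complex.norm_conj, map_sum]
    simp only [map_mul, Complex.conj_conj, mul_comm]
  rw [Nat.dist_eq_sub_of_le hij,
    ← sum_Ioc_ite_shift (fun n ↦ z (n + (j - i)) * conj (z n)) a (by omega : _ + j ≤ b + Q)]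
  congr 1
  refine sum_congr rfl fun k _ ↦ ?_
  simp only [mem_Ioc]
  by_cases hk : a + j < k ∧ k ≤ b - (j - i) + j
  · rw [if_pos hk, if_pos (by omega), if_pos (by omega), show k - j + (j - i) = k - i by omega]
  · rw [if_neg hk]
    by_cases hki : a + i < k ∧ k ≤ b + i
    · rw [if_neg (show ¬(a + j < k ∧ k ≤ b + j) by omega), map_zero, mul_zero]
    · rw [if_neg hki, zero_mul]

/-- Weyl–van der Corput differencing. -/
theorem norm_sum_Ioc_sq_le {z : ℕ → ℂ} (hz : ∀ n, ‖z n‖ ≤ 1) {a b N Q : ℕ} (hab : b ≤ a + N)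
    (hQ : 1 ≤ Q) (hQN : Q ≤ N) :
    ‖∑ n ∈ Ioc a b, z n‖ ^ 2 ≤ 2 * (N : ℝ) / Q *
      (N + 2 * ∑ q ∈ Ioo 0 Q, ‖∑ n ∈ Ioc a (b - q), z (n + q) * conj (z n)‖) := by
  set c : ℕ → ℝ := fun q ↦ ‖∑ n ∈ Ioc a (b - q), z (n + q) * conj (z n)‖
  set Y : ℕ → ℕ → ℂ := fun k j ↦ if k ∈ Ioc (a + j) (b + j) then z (k - j) else 0
  set S := ∑ n ∈ Ioc a b, z n
  have hQ0 : (0 : ℝ) < Q := by exact_mod_cast hQ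
  have hshift : Q * S = ∑ k ∈ Ioc a (b + Q), ∑ j ∈ range Q, Y k j := by
    rw [sum_comm, sum_congr rfl fun j hj ↦
      sum_Ioc_ite_shift z a (by grind : b + j ≤ b + Q), sum_const, card_range, nsmul_eq_mul]
  have hcorr : ∑ k ∈ Ioc a (b + Q), ‖∑ j ∈ range Q, Y k j‖ ^ 2 ≤
      Q * (N + 2 * ∑ q ∈ Ioo 0 Q, c q) :=
    calc _ ≤ ∑ i ∈ range Q, ∑ j ∈ range Q, c (Nat.dist i j) :=
          (sum_norm_sum_sq_le _ _ _).trans_eq <| sum_congr rfl fun i hi ↦ sum_congr rfl fun j hj ↦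
            norm_sum_ite_shift_mul_conj z a b (mem_range.mp hi) (mem_range.mp hj)
      _ ≤ ∑ i ∈ range Q, (c 0 + 2 * ∑ q ∈ Ioo 0 Q, c q) :=
          sum_le_sum fun i hi ↦ sum_range_dist_le (c := c) (fun q ↦ norm_nonneg _) (mem_range.mp hi)
      _ = Q * (c 0 + 2 * ∑ q ∈ Ioo 0 Q, c q) := by rw [sum_const, card_range, nsmul_eq_mul]
      _ ≤ _ := by
          gcongr
          calc c 0 ≤ ∑ _ ∈ Ioc a b, (1 : ℝ) := norm_sum_le_of_le _ fun n _ ↦ by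
                rw [norm_mul, Complex.norm_conj]
                exact mul_le_one₀ (hz _) (norm_nonneg _) (hz _)
            _ = (b - a : ℕ) := by simp
            _ ≤ N := by exact_mod_cast (by omega)
  have hcard : (#(Ioc a (b + Q)) : ℝ) ≤ 2 * N := by
    rw [Nat.card_Ioc]
    exact_mod_cast (by omega : b + Q - a ≤ 2 * N)
  have hsq : (Q * ‖S‖) ^ 2 ≤ 2 * N * (Q * (N + 2 * ∑ q ∈ Ioo 0 Q, c q)) := by
    rw [show Q * ‖S‖ = ‖Q * S‖ by rw [norm_mul, Complex.norm_natCast], hshift]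
    exact (norm_sum_sq_le_card_mul _ _).trans (by gcongr)
  refine le_of_mul_le_mul_left ?_ (pow_pos hQ0 2)
  calc (Q : ℝ) ^ 2 * ‖S‖ ^ 2 = (Q * ‖S‖) ^ 2 := by ring
    _ ≤ _ := hsq
    _ = _ := by field_simp

end

section

open Finset Real ComplexConjugate

/-- `f` is `k` times differentiable on `[a, b]`, with a `k`-th derivative that is antitone and
takes values in `[lo, hi]` there. -/
def HasAntitoneIterDeriv : ℕ → (ℝ → ℝ) → ℝ → ℝ → ℝ → ℝ → Prop
  | 0, f, lo, hi, a, b => AntitoneOn f (Set.Icc a b) ∧ ∀ x ∈ Set.Icc a b, f x ∈ Set.Icc lo hi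
  | k + 1, f, lo, hi, a, b => ∃ f' : ℝ → ℝ, (∀ x ∈ Set.Icc a b, HasDerivAt f (f' x) x) ∧
      HasAntitoneIterDeriv k f' lo hi a b

namespace HasAntitoneIterDeriv

variable {f : ℝ → ℝ} {k : ℕ} {lo hi a b q : ℝ}

lemma hasDerivAt_sub {f' : ℝ → ℝ} (hq : 0 ≤ q) (h : ∀ x ∈ Set.Icc a b, HasDerivAt f (f' x) x) :
    ∀ x ∈ Set.Icc a (b - q), HasDerivAt (fun x ↦ f (x + q) - f x) (f' (x + q) - f' x) x := by
  intro x hx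
  exact ((h (x + q) ⟨by linarith [hx.1], by linarith [hx.2]⟩).comp_add_const x q).sub
    (h x ⟨hx.1, by linarith [hx.2]⟩)

lemma sub_of_one (hq : 0 ≤ q) (hf : HasAntitoneIterDeriv 1 f lo hi a b) :
    HasAntitoneIterDeriv 0 (fun x ↦ f (x + q) - f x) (q * lo) (q * hi) a (b - q) := by
  obtain ⟨f', hf', hanti, hbd⟩ := hf
  have hd := hasDerivAt_sub hq hf'
  constructor
  · refine antitoneOn_of_hasDerivWithinAt_nonpos (convex_Icc _ _)
      (fun x hx ↦ (hd x hx).continuousAt.continuousWithinAt)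
      (fun x hx ↦ (hd x (interior_subset hx)).hasDerivWithinAt) fun x hx ↦ ?_
    have hx := interior_subset hx
    exact sub_nonpos.mpr (hanti ⟨hx.1, by linarith [hx.2]⟩
      ⟨by linarith [hx.1], by linarith [hx.2]⟩ (by linarith))
  · intro x hx
    have hsub : Set.Icc x (x + q) ⊆ Set.Icc a b := Set.Icc_subset_Icc hx.1 (by linarith [hx.2])
    rcases hq.eq_or_lt with rfl | hq
    · simp
    obtain ⟨c, hc, hslope⟩ := exists_hasDerivAt_eq_slope f f' (lt_add_of_pos_right x hq)
      (fun y hy ↦ (hf' y (hsub hy)).continuousAt.continuousWithinAt)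
      (fun y hy ↦ hf' y (hsub (Set.Ioo_subset_Icc_self hy)))
    have hbdc := hbd c (hsub (Set.Ioo_subset_Icc_self hc))
    rw [add_sub_cancel_left, eq_div_iff hq.ne'] at hslope
    exact ⟨by nlinarith [hbdc.1], by nlinarith [hbdc.2]⟩

lemma sub (hq : 0 ≤ q) (hf : HasAntitoneIterDeriv (k + 1) f lo hi a b) :
    HasAntitoneIterDeriv k (fun x ↦ f (x + q) - f x) (q * lo) (q * hi) a (b - q) := by
  induction k generalizing f with
  | zero => exact hf.sub_of_one hq
  | succ k ih =>
    obtain ⟨f', hf', hk⟩ := hf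
    exact ⟨fun x ↦ f' (x + q) - f' x, hasDerivAt_sub hq hf', ih hk⟩

theorem norm_sum_eexp_le {a b : ℕ} (hf : HasAntitoneIterDeriv 1 f lo hi a b) (hlo : 0 < lo)
    (hhi : hi ≤ 1 / 2) : ‖∑ n ∈ Ioc a b, eexp (f n)‖ ≤ 2 / lo := by
  obtain hab | hab := le_or_gt b a
  · simp only [Ioc_eq_empty_of_le hab, sum_empty, norm_zero]
    positivity
  obtain ⟨K, rfl⟩ := Nat.exists_eq_add_of_lt hab
  obtain ⟨hanti, hbd⟩ := hf.sub_of_one zero_le_one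
  push_cast at hanti hbd
  simp only [one_mul, add_sub_cancel_right] at hanti hbd
  have hmem (i : ℕ) (hi : i < K) : (a + (i + 1) : ℝ) ∈ Set.Icc (a : ℝ) (a + K) :=
    ⟨by linarith [Nat.cast_nonneg (α := ℝ) i], by gcongr; exact_mod_cast hi⟩
  have hsum : ∑ n ∈ Ioc a (a + K + 1), eexp (f n) =
      ∑ i ∈ range (K + 1), eexp (f (a + (i + 1))) := by
    rw [← Ico_add_one_add_one_eq_Ioc, sum_Ico_eq_sum_range,
      show a + K + 1 + 1 - (a + 1) = K + 1 by omega]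
    refine sum_congr rfl fun i _ ↦ ?_
    push_cast
    rw [add_assoc, add_comm (1 : ℝ)]
  rw [hsum]
  refine norm_sum_range_eexp_le (fun i ↦ f (a + (i + 1))) K hlo ?_ (fun i hi ↦ ?_) fun i hi ↦ ?_
  · have ha := hbd a ⟨le_rfl, by linarith [Nat.cast_nonneg (α := ℝ) K]⟩
    exact ha.1.trans (ha.2.trans hhi)
  · have hd := hbd _ (hmem i hi)
    push_cast
    rw [← add_assoc]
    exact ⟨hd.1, hd.2.trans hhi⟩
  · have hle := hanti (hmem i (by omega)) (hmem (i + 1) hi) (by push_cast; linarith)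
    push_cast at hle ⊢
    simpa only [add_assoc, one_add_one_eq_two] using hle

end HasAntitoneIterDeriv

lemma sum_Ioo_one_div_le (Q : ℕ) : ∑ q ∈ Ioo 0 Q, (1 : ℝ) / q ≤ 1 + log Q := by
  refine le_trans ?_ (harmonic_le_one_add_log Q)
  rw [harmonic_eq_sum_Icc]
  push_cast
  simp only [one_div]
  exact sum_le_sum_of_subset_of_nonneg (fun q hq ↦ by grind) fun _ _ _ ↦ by positivity

lemma sum_pow_le_card_pow_mul_sum_pow {ι : Type*} {s : Finset ι} {c : ι → ℝ}
    (hc : ∀ i ∈ s, 0 ≤ c i) (p : ℕ) :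
    (∑ i ∈ s, c i) ^ (p + 1) ≤ #s ^ p * ∑ i ∈ s, c i ^ (p + 1) := by
  rcases s.eq_empty_or_nonempty with rfl | hs
  · simp
  · rw [← div_le_iff₀' (by have := hs.card_pos; positivity)]
    exact pow_sum_div_card_le_sum_pow hc p

lemma sum_Ioo_div_pow_le {c : ℕ → ℝ} (hc : ∀ q, 0 ≤ c q) {p Q : ℕ} (hQ : 1 ≤ Q) {A B : ℝ}
    (hA : 0 ≤ A) (hB : 0 ≤ B) (h : ∀ q ∈ Ioo 0 Q, c q ^ (p + 1) ≤ A + B / q) :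
    ((∑ q ∈ Ioo 0 Q, c q) / Q) ^ (p + 1) ≤ A + B * (1 + log Q) / Q := by
  have : (0 : ℝ) < Q := by exact_mod_cast hQ
  have hcard : (#(Ioo 0 Q) : ℝ) ≤ Q := by simp
  rw [div_pow, div_le_iff₀ (by positivity)]
  calc (∑ q ∈ Ioo 0 Q, c q) ^ (p + 1)
      ≤ #(Ioo 0 Q) ^ p * ∑ q ∈ Ioo 0 Q, c q ^ (p + 1) :=
        sum_pow_le_card_pow_mul_sum_pow (fun q _ ↦ hc q) p
    _ ≤ Q ^ p * ∑ q ∈ Ioo 0 Q, (A + B * (1 / q)) := by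
        gcongr with q hq
        · exact sum_nonneg fun q _ ↦ by have := hc q; positivity
        · rw [mul_one_div]
          exact h q hq
    _ = Q ^ p * (#(Ioo 0 Q) * A + B * ∑ q ∈ Ioo 0 Q, (1 : ℝ) / q) := by
        rw [sum_add_distrib, mul_sum, sum_const, nsmul_eq_mul]
    _ ≤ Q ^ p * (Q * A + B * (1 + log Q)) := by
        gcongr
        exact sum_Ioo_one_div_le Q
    _ = (A + B * (1 + log Q) / Q) * Q ^ (p + 1) := by field_simp; ring

lemma norm_sum_eexp_pow_le_of_differenced {f : ℝ → ℝ} {p a b N Q : ℕ} (hab : b ≤ a + N)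
    (hQ : 1 ≤ Q) (hQN : Q ≤ N) {A B : ℝ} (hA : 0 ≤ A) (hB : 0 ≤ B)
    (h : ∀ q ∈ Ioo 0 Q, q ≤ b →
      ‖∑ n ∈ Ioc a (b - q), eexp (f (n + q) - f n)‖ ^ (p + 1) ≤ A + B / q) :
    ‖∑ n ∈ Ioc a b, eexp (f n)‖ ^ (2 * (p + 1)) ≤
      8 ^ (p + 1) * N ^ (p + 1) * ((N / Q) ^ (p + 1) + (A + B * (1 + log N) / Q)) := by
  set c : ℕ → ℝ := fun q ↦ ‖∑ n ∈ Ioc a (b - q), eexp (f (n + q) - f n)‖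
  set W := ∑ q ∈ Ioo 0 Q, c q
  have hQ0 : (0 : ℝ) < Q := by exact_mod_cast hQ
  have : 0 ≤ W := sum_nonneg fun q _ ↦ norm_nonneg _
  have hweyl : ‖∑ n ∈ Ioc a b, eexp (f n)‖ ^ 2 ≤ 4 * N * (N / Q + W / Q) := by
    have h := norm_sum_Ioc_sq_le (fun n ↦ (norm_eexp (f n)).le) hab hQ hQN
    simp only [← eexp_neg, ← eexp_add, ← sub_eq_add_neg, Nat.cast_add] at h
    refine h.trans ?_
    rw [div_mul_eq_mul_div, ← add_div, mul_div_assoc', div_le_div_iff_of_pos_right hQ0]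
    nlinarith [sq_nonneg (N : ℝ)]
  have hmean : (W / Q) ^ (p + 1) ≤ A + B * (1 + log N) / Q := by
    refine (sum_Ioo_div_pow_le (fun q ↦ norm_nonneg _) hQ hA hB fun q hq ↦ ?_).trans ?_
    · by_cases hqb : q ≤ b
      · exact h q hq hqb
      · simp only [Ioc_eq_empty_of_le (show b - q ≤ a by omega), sum_empty, norm_zero,
          zero_pow p.succ_ne_zero]
        positivity
    · gcongr
  rw [pow_mul]
  calc (‖∑ n ∈ Ioc a b, eexp (f n)‖ ^ 2) ^ (p + 1)
      ≤ (4 * N * (N / Q + W / Q)) ^ (p + 1) := by gcongr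
    _ = (4 * N) ^ (p + 1) * (N / Q + W / Q) ^ (p + 1) := mul_pow _ _ _
    _ ≤ (4 * N) ^ (p + 1) *
        (2 ^ (p + 1) * ((N / Q) ^ (p + 1) + (A + B * (1 + log N) / Q))) := by
        gcongr
        refine (add_pow_le (by positivity) (by positivity) _).trans ?_
        gcongr
        · norm_num
        · omega
    _ = _ := by
        rw [show (8 : ℝ) = 4 * 2 by norm_num, mul_pow, mul_pow]
        ring

lemma HasAntitoneIterDeriv.sub_natCast {f : ℝ → ℝ} {k : ℕ} {lo hi : ℝ} {a b q : ℕ} (hqb : q ≤ b)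
    (hf : HasAntitoneIterDeriv (k + 1) f lo hi a b) :
    HasAntitoneIterDeriv k (fun x ↦ f (x + q) - f x) (q * lo) (q * hi) a ↑(b - q) := by
  rw [Nat.cast_sub hqb]
  exact hf.sub q.cast_nonneg

theorem HasAntitoneIterDeriv.norm_sum_eexp_pow_le (k : ℕ) :
    ∃ C : ℝ, 1 ≤ C ∧ ∀ {f : ℝ → ℝ} {lo hi : ℝ} {a b N : ℕ} {Q : ℕ → ℕ}, 0 < lo → b ≤ a + N →
      (∀ i < k, Q i ∈ Set.Icc 1 N) → (∏ i ∈ range k, (Q i : ℝ)) * hi ≤ 1 / 2 →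
      HasAntitoneIterDeriv (k + 1) f lo hi a b →
      ‖∑ n ∈ Ioc a b, eexp (f n)‖ ^ 2 ^ k ≤ C * N ^ 2 ^ k *
        (∑ i ∈ range k, 1 / (Q i : ℝ) ^ 2 ^ i +
          (1 + log N) ^ k / (N * (∏ i ∈ range k, (Q i : ℝ)) * lo)) := by
  induction k with
  | zero =>
    refine ⟨2, one_le_two, fun {f lo hi a b N Q} hlo hab _ hhi hf ↦ ?_⟩
    rcases N.eq_zero_or_pos with rfl | hN
    · simp [Ioc_eq_empty_of_le (show b ≤ a from hab)]
    · refine (pow_one _).trans_le ((hf.norm_sum_eexp_le hlo (by simpa using hhi)).trans_eq ?_)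
      simp only [pow_zero, pow_one, range_zero, sum_empty, prod_empty, mul_one, zero_add]
      field_simp
  | succ k ih =>
    obtain ⟨C, hC, hk⟩ := ih
    refine ⟨8 ^ 2 ^ k * C, one_le_mul_of_one_le_of_one_le (one_le_pow₀ (by norm_num)) hC,
      fun {f lo hi a b N Q} hlo hab hQ hhi hf ↦ ?_⟩
    obtain ⟨p, hp⟩ := Nat.exists_eq_add_one_of_ne_zero (pow_ne_zero k two_ne_zero)
    set s := ∑ i ∈ range k, 1 / (Q i : ℝ) ^ 2 ^ i with hs
    set P := ∏ i ∈ range k, (Q i : ℝ) with hP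
    have hQpos (i : ℕ) (hi : i < k + 1) : (0 : ℝ) < Q i := by exact_mod_cast (hQ i hi).1
    have hQk : (0 : ℝ) < Q k := hQpos k k.lt_succ_self
    have hN : (0 : ℝ) < N := hQk.trans_le (by exact_mod_cast (hQ k k.lt_succ_self).2)
    have hPpos : 0 < P := prod_pos fun i hi ↦ hQpos i (by grind)
    have hlog := log_natCast_nonneg N
    rw [prod_range_succ] at hhi
    have hdiff : ‖∑ n ∈ Ioc a b, eexp (f n)‖ ^ (2 * 2 ^ k) ≤
        8 ^ 2 ^ k * N ^ 2 ^ k * ((N / Q k) ^ 2 ^ k + (C * N ^ 2 ^ k * s +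
          C * N ^ 2 ^ k * ((1 + log N) ^ k / (N * P * lo)) * (1 + log N) / Q k)) := by
      rw [hp]
      refine norm_sum_eexp_pow_le_of_differenced hab (hQ k k.lt_succ_self).1
        (hQ k k.lt_succ_self).2 (by positivity) (by positivity) fun q hq hqb ↦ ?_
      obtain ⟨hq0, hqQ⟩ := mem_Ioo.mp hq
      have hq0 : (0 : ℝ) < q := by exact_mod_cast hq0
      rw [← hp]
      refine (hk (by positivity) (by omega) (fun i hi ↦ hQ i (by omega)) ?_
        (hf.sub_natCast hqb)).trans_eq ?_
      · rcases le_total 0 hi with hhi0 | hhi0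
        · calc P * (q * hi) ≤ P * (Q k * hi) := by gcongr
            _ ≤ 1 / 2 := by rwa [← mul_assoc]
        · exact (mul_nonpos_of_nonneg_of_nonpos hPpos.le
            (mul_nonpos_of_nonneg_of_nonpos hq0.le hhi0)).trans (by norm_num)
      · rw [← hs, ← hP]
        field_simp
    rw [pow_succ', sum_range_succ, prod_range_succ, ← hs, ← hP]
    calc _ ≤ _ := hdiff
      _ ≤ 8 ^ 2 ^ k * N ^ 2 ^ k * (C * (N / Q k) ^ 2 ^ k + (C * N ^ 2 ^ k * s +
          C * N ^ 2 ^ k * ((1 + log N) ^ k / (N * P * lo)) * (1 + log N) / Q k)) := by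
        gcongr
        exact le_mul_of_one_le_left (by positivity) hC
      _ = _ := by
        rw [div_pow, pow_mul', sq]
        field_simp
        ring

end

section

open Finset Real

lemma one_add_log_le_rpow {x ε : ℝ} (hx : 1 ≤ x) (hε : 0 < ε) :
    1 + log x ≤ (1 + 1 / ε) * x ^ ε := by
  have hlog := log_le_rpow_div (zero_le_one.trans hx) hε
  have hone := one_le_rpow hx hε.le
  rw [add_mul, one_mul, one_div_mul_eq_div]
  linarith

lemma half_le_natFloor {y : ℝ} (hy : 1 ≤ y) : y / 2 ≤ ⌊y⌋₊ := by
  have hlt := Nat.lt_floor_add_one y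
  have hone : (1 : ℝ) ≤ ⌊y⌋₊ := by exact_mod_cast (Nat.one_le_floor_iff y).mpr hy
  linarith

lemma natFloor_mem_Icc {y : ℝ} {N : ℕ} (hy : 1 ≤ y) (hyN : y ≤ N) : ⌊y⌋₊ ∈ Set.Icc 1 N :=
  ⟨(Nat.one_le_floor_iff y).mpr hy, Nat.floor_le_of_le hyN⟩

namespace HasAntitoneIterDeriv

/-- The fourth derivative test with differencing steps of lengths `q`, `y` and `y`. -/
theorem norm_sum_eexp_pow_eight_le_of_steps :
    ∃ C : ℝ, 1 ≤ C ∧ ∀ {f : ℝ → ℝ} {lo hi q y : ℝ} {a b N : ℕ}, 0 < lo → 0 ≤ hi → b ≤ a + N →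
      1 ≤ q → q ≤ N → 1 ≤ y → y ≤ N → q * y ^ 2 * hi ≤ 1 / 2 → HasAntitoneIterDeriv 4 f lo hi a b →
      ‖∑ n ∈ Ioc a b, eexp (f n)‖ ^ 8 ≤
        C * N ^ 8 * (1 / q + 1 / y ^ 2 + (1 + log N) ^ 3 / (N * (q * y ^ 2) * lo)) := by
  obtain ⟨C, hC, hbound⟩ := HasAntitoneIterDeriv.norm_sum_eexp_pow_le 3
  refine ⟨20 * C, by linarith, fun {f lo hi q y a b N} hlo hhi hab hq hqN hy hyN hqy hf ↦ ?_⟩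
  have h := hbound (Q := fun i ↦ if i = 0 then ⌊q⌋₊ else ⌊y⌋₊) hlo hab (fun i _ ↦ ?_) ?_ hf
  · have : 0 ≤ log N := log_natCast_nonneg N
    have : (0 : ℝ) < N := by linarith
    have hq2 := half_le_natFloor hq
    have hy2 := half_le_natFloor hy
    norm_num [sum_range_succ, prod_range_succ, -one_div] at h
    calc ‖∑ n ∈ Ioc a b, eexp (f n)‖ ^ 8
        ≤ C * N ^ 8 * (1 / (q / 2) + 1 / (y / 2) ^ 2 + 1 / (y / 2) ^ 4 +
          (1 + log N) ^ 3 / (N * (q / 2 * (y / 2) * (y / 2)) * lo)) := h.trans (by gcongr)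
      _ = C * N ^ 8 * (2 * (1 / q) + 4 * (1 / y ^ 2) + 16 * (1 / y ^ 4) +
          8 * ((1 + log N) ^ 3 / (N * (q * y ^ 2) * lo))) := by field_simp; ring
      _ ≤ C * N ^ 8 * (20 * (1 / q + 1 / y ^ 2 + (1 + log N) ^ 3 / (N * (q * y ^ 2) * lo))) := by
        have hy4 : 1 / y ^ 4 ≤ 1 / y ^ 2 := by
          gcongr
          norm_num
        gcongr
        have : 0 ≤ 1 / q := by positivity
        have : 0 ≤ (1 + log N) ^ 3 / (N * (q * y ^ 2) * lo) := by positivity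
        linarith
      _ = _ := by ring
  · split_ifs
    · exact natFloor_mem_Icc hq hqN
    · exact natFloor_mem_Icc hy hyN
  · calc _ = ⌊q⌋₊ * (⌊y⌋₊ : ℝ) ^ 2 * hi := by simp [prod_range_succ, sq, mul_assoc]
      _ ≤ q * y ^ 2 * hi := by
        gcongr
        · exact Nat.floor_le (by linarith)
        · exact Nat.floor_le (by linarith)
      _ ≤ 1 / 2 := hqy

lemma exists_one_le_sq_mul_le_one {x N : ℝ} (hx : 0 < x) (hx1 : x ≤ 1) (hN : 1 ≤ N) :
    ∃ y, 1 ≤ y ∧ y ≤ N ∧ y ^ 2 * x ≤ 1 ∧ 1 / y ^ 2 ≤ x + 1 / N ^ 2 := by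
  have hsqrt : 1 ≤ 1 / √x := (one_le_div (sqrt_pos.mpr hx)).mpr (sqrt_le_one.mpr hx1)
  have hsq : (1 / √x) ^ 2 = 1 / x := by rw [div_pow, sq_sqrt hx.le, one_pow]
  rcases le_total (1 / √x) N with h | h
  · refine ⟨1 / √x, hsqrt, h, ?_, ?_⟩
    · rw [hsq, one_div_mul_cancel hx.ne']
    · rw [hsq, one_div_one_div]
      exact le_add_of_nonneg_right (by positivity)
  · refine ⟨N, hN, le_rfl, ?_, le_add_of_nonneg_left hx.le⟩
    calc N ^ 2 * x ≤ (1 / √x) ^ 2 * x := by gcongr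
      _ = 1 := by rw [hsq, one_div_mul_cancel hx.ne']

/-- The fourth derivative test with a free parameter `q`; the lengths of the other two
differencing steps are balanced against `q`. -/
theorem norm_sum_eexp_pow_eight_le {K : ℝ} (hK : 0 < K) :
    ∃ C : ℝ, 1 ≤ C ∧ ∀ {f : ℝ → ℝ} {lo q : ℝ} {a b N : ℕ}, 0 < lo → b ≤ a + N → 0 < q → q ≤ N →
      HasAntitoneIterDeriv 4 f lo (K * lo) a b →
      ‖∑ n ∈ Ioc a b, eexp (f n)‖ ^ 8 ≤ C * N ^ 8 *
        (1 / q + lo * q + (1 + log N) ^ 3 * (1 / N + 1 / (N ^ 3 * q * lo))) := by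
  obtain ⟨C, hC, hbound⟩ := norm_sum_eexp_pow_eight_le_of_steps
  refine ⟨2 * (K + 1) * C, by nlinarith, fun {f lo q a b N} hlo hab hq hqN hf ↦ ?_⟩
  have hN : (0 : ℝ) < N := hq.trans_le hqN
  have hlog := log_natCast_nonneg N
  set x := 2 * K * (lo * q) with hx
  by_cases htriv : 1 / q ≤ 1 ∧ x ≤ 1
  swap
  · have hone : 1 ≤ 2 * (K + 1) * (1 / q + lo * q) := by
      have : 0 < 1 / q := by positivity
      have : 0 < lo * q := by positivity
      rcases not_and_or.mp htriv with h | h <;> nlinarith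
    calc ‖∑ n ∈ Ioc a b, eexp (f n)‖ ^ 8 ≤ (N : ℝ) ^ 8 := by
          gcongr
          exact norm_sum_eexp_Ioc_le hab _
      _ ≤ (2 * (K + 1) * (1 / q + lo * q)) * C * N ^ 8 :=
          le_mul_of_one_le_left (by positivity) (one_le_mul_of_one_le_of_one_le hone hC)
      _ = 2 * (K + 1) * C * N ^ 8 * (1 / q + lo * q) := by ring
      _ ≤ _ := mul_le_mul_of_nonneg_left (le_add_of_nonneg_right (by positivity)) (by positivity)
  obtain ⟨hq1, hx1⟩ := htriv
  have hxpos : 0 < x := by positivity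
  have hN1 : (1 : ℝ) ≤ N := by exact_mod_cast hN
  obtain ⟨y, hy1, hyN, hyx, hyinv⟩ := exists_one_le_sq_mul_le_one hxpos hx1 hN1
  refine (hbound hlo (by positivity) hab ((div_le_one hq).mp hq1) hqN hy1 hyN
    (by rw [hx] at hyx; linarith) hf).trans ?_
  calc C * N ^ 8 * (1 / q + 1 / y ^ 2 + (1 + log N) ^ 3 / (N * (q * y ^ 2) * lo))
      = C * N ^ 8 * (1 / q + 1 / y ^ 2 * (1 + (1 + log N) ^ 3 / (N * q * lo))) := by
        field_simp
        ring
    _ ≤ C * N ^ 8 * (1 / q + (x + 1 / N ^ 2) * (1 + (1 + log N) ^ 3 / (N * q * lo))) := by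
        gcongr
    _ = C * N ^ 8 * (1 / q + x + 2 * K * ((1 + log N) ^ 3 * (1 / N)) + 1 / N ^ 2 +
          (1 + log N) ^ 3 * (1 / (N ^ 3 * q * lo))) := by
        rw [hx]
        field_simp
        ring
    _ ≤ C * N ^ 8 * (2 * (K + 1) *
          (1 / q + lo * q + (1 + log N) ^ 3 * (1 / N + 1 / (N ^ 3 * q * lo)))) := by
        have hN2 : 1 / (N : ℝ) ^ 2 ≤ (1 + log N) ^ 3 * (1 / N) := by
          refine (one_div_le_one_div_of_le hN (le_self_pow₀ hN1 two_ne_zero)).trans ?_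
          exact le_mul_of_one_le_left (by positivity) (one_le_pow₀ (by linarith))
        have : 0 < 1 / q := by positivity
        have : 0 < lo * q := by positivity
        have : 0 ≤ (1 + log N) ^ 3 * (1 / N) := by positivity
        have : 0 ≤ (1 + log N) ^ 3 * (1 / (N ^ 3 * q * lo)) := by positivity
        gcongr
        rw [hx]
        nlinarith
    _ = _ := by ring

end HasAntitoneIterDeriv

lemma rpow_half_le_of_le_sq {Z : ℝ} {N : ℕ} (hZN : Z ≤ 16 * (N : ℝ) ^ 2) :
    Z ^ (1 / 2 : ℝ) ≤ 4 * N := by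
  rw [← sqrt_eq_rpow]
  exact sqrt_le_iff.mpr ⟨by positivity, by linarith [mul_pow (4 : ℝ) N 2]⟩

lemma rpow_le_of_le_four_mul {x Z ε : ℝ} (hx : 0 ≤ x) (hxZ : x ≤ 4 * Z) (hε : 0 ≤ ε)
    (hε1 : ε ≤ 1) : x ^ ε ≤ 4 * Z ^ ε :=
  calc x ^ ε ≤ (4 * Z) ^ ε := by gcongr
    _ = 4 ^ ε * Z ^ ε := mul_rpow (by norm_num) (by linarith)
    _ ≤ 4 * Z ^ ε := by
        have : 0 ≤ Z := by linarith
        gcongr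
        exact rpow_le_self_of_one_le (by norm_num) hε1

lemma one_add_log_le_of_le_four_mul {x Z ε : ℝ} (hx : 1 ≤ x) (hxZ : x ≤ 4 * Z) (hε : 0 < ε)
    (hε1 : ε ≤ 1) : 1 + log x ≤ 4 * (1 + 1 / ε) * Z ^ ε :=
  calc 1 + log x ≤ (1 + 1 / ε) * x ^ ε := one_add_log_le_rpow hx hε
    _ ≤ (1 + 1 / ε) * (4 * Z ^ ε) := by
        gcongr
        exact rpow_le_of_le_four_mul (by linarith) hxZ hε.le hε1
    _ = _ := by ring

lemma natCast_pos_of_le_sq {Z : ℝ} {N : ℕ} (hZ : 0 < Z) (hZN : Z ≤ 16 * (N : ℝ) ^ 2) : 0 < N := by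
  rcases N.eq_zero_or_pos with rfl | h
  · norm_num at hZN
    linarith
  · exact h

lemma fourth_derivative_test_terms_le {c B Z lo : ℝ} {N : ℕ} (hc : 0 < c) (hZ : 1 ≤ Z)
    (hZN : Z ≤ 16 * (N : ℝ) ^ 2) (hNZ : N ≤ 4 * Z) (hlo : c * Z ^ (-3 / 100 : ℝ) ≤ lo * N ^ 3)
    (hlo' : lo ≤ B * Z ^ (-15 / 16 : ℝ)) :
    1 / (Z ^ (48 / 100 : ℝ) / 4) + lo * (Z ^ (48 / 100 : ℝ) / 4) +
        (1 + log N) ^ 3 * (1 / N + 1 / (N ^ 3 * (Z ^ (48 / 100 : ℝ) / 4) * lo)) ≤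
      (4 + B / 4 + 8004 ^ 3 * (4 + 4 / c)) * Z ^ (-448 / 1000 : ℝ) := by
  have hZ0 : 0 < Z := by linarith
  have hN : 0 < N := natCast_pos_of_le_sq hZ0 hZN
  have hW {s t : ℝ} (hst : s ≤ t) : Z ^ s ≤ Z ^ t := rpow_le_rpow_of_exponent_le hZ hst
  have hlo0 : 0 < lo := pos_of_mul_pos_left ((by positivity : (0 : ℝ) < _).trans_le hlo)
    (by positivity)
  have : 0 < B := pos_of_mul_pos_left (hlo0.trans_le hlo') (by positivity)
  have hq : 1 / (Z ^ (48 / 100 : ℝ) / 4) = 4 * Z ^ (-48 / 100 : ℝ) := by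
    rw [one_div_div, div_eq_mul_inv, ← rpow_neg hZ0.le, neg_div]
  have hloq : lo * (Z ^ (48 / 100 : ℝ) / 4) ≤ B / 4 * Z ^ (-448 / 1000 : ℝ) := by
    calc lo * (Z ^ (48 / 100 : ℝ) / 4)
        ≤ B * Z ^ (-15 / 16 : ℝ) * (Z ^ (48 / 100 : ℝ) / 4) := by gcongr
      _ = B / 4 * Z ^ (-15 / 16 + 48 / 100 : ℝ) := by rw [rpow_add hZ0]; ring
      _ ≤ B / 4 * Z ^ (-448 / 1000 : ℝ) := by gcongr B / 4 * ?_; exact hW (by norm_num)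
  have hinvN : 1 / N ≤ 4 * Z ^ (-45 / 100 : ℝ) := by
    calc 1 / (N : ℝ) ≤ 1 / (Z ^ (1 / 2 : ℝ) / 4) := by
          gcongr
          linarith [rpow_half_le_of_le_sq hZN]
      _ = 4 * Z ^ (-1 / 2 : ℝ) := by
          rw [one_div_div, div_eq_mul_inv, ← rpow_neg hZ0.le, neg_div]
      _ ≤ 4 * Z ^ (-45 / 100 : ℝ) := by gcongr 4 * ?_; exact hW (by norm_num)
  have hinv : 1 / (N ^ 3 * (Z ^ (48 / 100 : ℝ) / 4) * lo) ≤ 4 / c * Z ^ (-45 / 100 : ℝ) := by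
    calc 1 / (N ^ 3 * (Z ^ (48 / 100 : ℝ) / 4) * lo)
        = 1 / (Z ^ (48 / 100 : ℝ) / 4) * (1 / (lo * N ^ 3)) := by rw [one_div_mul_one_div]; ring_nf
      _ ≤ 1 / (Z ^ (48 / 100 : ℝ) / 4) * (1 / (c * Z ^ (-3 / 100 : ℝ))) := by gcongr
      _ = 4 / c * Z ^ (-48 / 100 - -3 / 100 : ℝ) := by rw [hq, rpow_sub hZ0]; ring
      _ = 4 / c * Z ^ (-45 / 100 : ℝ) := by norm_num
  calc _ ≤ 4 * Z ^ (-48 / 100 : ℝ) + B / 4 * Z ^ (-448 / 1000 : ℝ) +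
        (8004 * Z ^ (1 / 2000 : ℝ)) ^ 3 *
          (4 * Z ^ (-45 / 100 : ℝ) + 4 / c * Z ^ (-45 / 100 : ℝ)) := by
        have : 0 ≤ log N := log_natCast_nonneg N
        rw [hq]
        gcongr
        exact (one_add_log_le_of_le_four_mul (mod_cast hN) hNZ (ε := 1 / 2000)
          (by norm_num) (by norm_num)).trans_eq (by norm_num)
    _ = 4 * Z ^ (-48 / 100 : ℝ) + B / 4 * Z ^ (-448 / 1000 : ℝ) +
        8004 ^ 3 * (4 + 4 / c) * Z ^ (1 / 2000 * (3 : ℕ) + -45 / 100 : ℝ) := by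
        rw [rpow_add hZ0, rpow_mul hZ0.le, rpow_natCast]
        ring
    _ ≤ 4 * Z ^ (-448 / 1000 : ℝ) + B / 4 * Z ^ (-448 / 1000 : ℝ) +
        8004 ^ 3 * (4 + 4 / c) * Z ^ (-448 / 1000 : ℝ) := by
        gcongr ?_ * ?_ + _ + ?_ * ?_
        · exact hW (by norm_num)
        · exact hW (by norm_num)
    _ = _ := by ring

theorem HasAntitoneIterDeriv.norm_sum_eexp_le_of_scale {K c B : ℝ} (hK : 0 < K) (hc : 0 < c)
    (hB : 0 < B) :
    ∃ C : ℝ, 1 ≤ C ∧ ∀ {Z lo : ℝ} {f : ℝ → ℝ} {a b N : ℕ}, 1 ≤ Z → b ≤ a + N →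
      Z ≤ 16 * (N : ℝ) ^ 2 → N ≤ 4 * Z → c * Z ^ (-3 / 100 : ℝ) ≤ lo * N ^ 3 →
      lo ≤ B * Z ^ (-15 / 16 : ℝ) → HasAntitoneIterDeriv 4 f lo (K * lo) a b →
      ‖∑ n ∈ Ioc a b, eexp (f n)‖ ≤ C * (N * Z ^ (-56 / 1000 : ℝ)) := by
  obtain ⟨C, hC, hbound⟩ := norm_sum_eexp_pow_eight_le hK
  set D := 4 + B / 4 + 8004 ^ 3 * (4 + 4 / c) with hD
  have hCD : 1 ≤ C * D := one_le_mul_of_one_le_of_one_le hC (by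
    have : 0 < B / 4 + 8004 ^ 3 * (4 + 4 / c) := by positivity
    linarith)
  refine ⟨C * D, hCD, fun {Z lo f a b N} hZ hab hZN hNZ hlo hlo' hf ↦ ?_⟩
  have hZ0 : 0 < Z := by linarith
  have hN : (0 : ℝ) < N := Nat.cast_pos.mpr (natCast_pos_of_le_sq hZ0 hZN)
  have hlopos : 0 < lo := pos_of_mul_pos_left ((by positivity : (0 : ℝ) < _).trans_le hlo)
    (by positivity)
  have hqN : Z ^ (48 / 100 : ℝ) / 4 ≤ N := by
    have := rpow_le_rpow_of_exponent_le hZ (by norm_num : (48 / 100 : ℝ) ≤ 1 / 2)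
    linarith [rpow_half_le_of_le_sq hZN]
  have hpow : ‖∑ n ∈ Ioc a b, eexp (f n)‖ ^ 8 ≤ (C * D * (N * Z ^ (-56 / 1000 : ℝ))) ^ 8 := by
    calc ‖∑ n ∈ Ioc a b, eexp (f n)‖ ^ 8
        ≤ C * N ^ 8 * (D * Z ^ (-448 / 1000 : ℝ)) := by
          refine (hbound hlopos hab (by positivity) hqN hf).trans ?_
          gcongr
          exact fourth_derivative_test_terms_le hc hZ hZN hNZ hlo hlo'
      _ = C * D * (N * Z ^ (-56 / 1000 : ℝ)) ^ 8 := by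
          rw [mul_pow, ← rpow_mul_natCast hZ0.le]
          norm_num
          ring
      _ ≤ (C * D) ^ 8 * (N * Z ^ (-56 / 1000 : ℝ)) ^ 8 := by
          gcongr
          exact le_self_pow₀ hCD (by norm_num)
      _ = _ := (mul_pow _ _ _).symm
  exact le_of_pow_le_pow_left₀ (by norm_num) (by positivity) hpow

end

section

open Finset Real ComplexConjugate

/-- The `j`-th derivative of `x ↦ (x * l + u) ^ γ`. -/
noncomputable def affinePowDeriv (γ l u : ℝ) (j : ℕ) (x : ℝ) : ℝ :=
  (∏ i ∈ range j, (γ - i)) * (l ^ j * (x * l + u) ^ (γ - j))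

lemma hasDerivAt_affinePowDeriv {γ l u x : ℝ} (j : ℕ) (hx : 0 < x * l + u) :
    HasDerivAt (affinePowDeriv γ l u j) (affinePowDeriv γ l u (j + 1) x) x := by
  have haffine : HasDerivAt (fun x ↦ x * l + u) l x := by
    simpa only [one_mul] using ((hasDerivAt_id' x).mul_const l).add_const u
  refine (((haffine.rpow_const (p := γ - j) (Or.inl hx.ne')).const_mul (l ^ j)).const_mul
    (∏ i ∈ range j, (γ - i))).congr_deriv ?_
  rw [affinePowDeriv, prod_range_succ, Nat.cast_add_one, sub_add_eq_sub_sub]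
  ring

lemma affinePowDeriv_zero (γ l u x : ℝ) : affinePowDeriv γ l u 0 x = (x * l + u) ^ γ := by
  simp [affinePowDeriv]

lemma affinePowDeriv_four (γ l u x : ℝ) : affinePowDeriv γ l u 4 x =
    -(γ * (1 - γ) * (2 - γ) * (3 - γ) * (l ^ 4 * (x * l + u) ^ (γ - 4))) := by
  simp only [affinePowDeriv, prod_range_succ, prod_range_zero]
  push_cast
  ring

lemma affinePowDeriv_five (γ l u x : ℝ) : affinePowDeriv γ l u 5 x =
    γ * (1 - γ) * (2 - γ) * (3 - γ) * (4 - γ) * (l ^ 5 * (x * l + u) ^ (γ - 5)) := by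
  simp only [affinePowDeriv, prod_range_succ, prod_range_zero]
  push_cast
  ring

lemma hasAntitoneIterDeriv_cubic_sub {A h lo hi a b : ℝ} {g : ℕ → ℝ → ℝ}
    (hg : ∀ j, ∀ x ∈ Set.Icc a b, HasDerivAt (g j) (g (j + 1) x) x)
    (hfour : ∀ x ∈ Set.Icc a b, -(h * g 4 x) ∈ Set.Icc lo hi)
    (hfive : ∀ x ∈ Set.Icc a b, 0 ≤ h * g 5 x) :
    HasAntitoneIterDeriv 4 (fun x ↦ A * x ^ 3 - h * g 0 x) lo hi a b := by
  have hgh : ∀ j, ∀ x ∈ Set.Icc a b, HasDerivAt (fun x ↦ h * g j x) (h * g (j + 1) x) x :=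
    fun j x hx ↦ (hg j x hx).const_mul h
  refine ⟨fun x ↦ 3 * A * x ^ 2 - h * g 1 x, fun x hx ↦ ?_, fun x ↦ 6 * A * x - h * g 2 x,
    fun x hx ↦ ?_, fun x ↦ 6 * A - h * g 3 x, fun x hx ↦ ?_, fun x ↦ -(h * g 4 x),
    fun x hx ↦ ?_, ?_, hfour⟩
  · refine (((hasDerivAt_pow 3 x).const_mul A).sub (hgh 0 x hx)).congr_deriv ?_
    norm_num
    ring
  · refine (((hasDerivAt_pow 2 x).const_mul (3 * A)).sub (hgh 1 x hx)).congr_deriv ?_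
    norm_num
    ring
  · refine (((hasDerivAt_id' x).const_mul (6 * A)).sub (hgh 2 x hx)).congr_deriv ?_
    ring
  · refine ((hasDerivAt_const x (6 * A)).sub (hgh 3 x hx)).congr_deriv ?_
    ring
  · have hderiv : ∀ x ∈ Set.Icc a b, HasDerivAt (fun x ↦ -(h * g 4 x)) (-(h * g 5 x)) x :=
      fun x hx ↦ (hgh 4 x hx).neg
    refine antitoneOn_of_hasDerivWithinAt_nonpos (convex_Icc a b)
      (fun x hx ↦ (hderiv x hx).continuousAt.continuousWithinAt)
      (fun x hx ↦ (hderiv x (interior_subset hx)).hasDerivWithinAt)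
      fun x hx ↦ neg_nonpos.mpr (hfive x (interior_subset hx))

lemma rpow_sub_four_mem_Icc {γ Z w : ℝ} (hγ : 0 < γ) (hγ1 : γ < 1) (hZ : 0 < Z)
    (hw : w ∈ Set.Icc (Z / 2) (3 * Z)) :
    w ^ (γ - 4) ∈ Set.Icc (1 / 81 * Z ^ (γ - 4)) (16 * Z ^ (γ - 4)) := by
  have hw0 : 0 < w := (half_pos hZ).trans_le hw.1
  constructor
  · calc 1 / 81 * Z ^ (γ - 4) = 3 ^ (-4 : ℝ) * Z ^ (γ - 4) := by
          rw [rpow_neg (by norm_num)]; norm_num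
      _ ≤ 3 ^ (γ - 4) * Z ^ (γ - 4) := by gcongr <;> linarith
      _ = (3 * Z) ^ (γ - 4) := (mul_rpow (by norm_num) hZ.le).symm
      _ ≤ w ^ (γ - 4) := rpow_le_rpow_of_nonpos hw0 hw.2 (by linarith)
  · calc w ^ (γ - 4) ≤ (1 / 2 * Z) ^ (γ - 4) :=
          rpow_le_rpow_of_nonpos (by positivity) (by linarith [hw.1]) (by linarith)
      _ = (1 / 2) ^ (γ - 4) * Z ^ (γ - 4) := mul_rpow (by norm_num) hZ.le
      _ ≤ (1 / 2) ^ (-4 : ℝ) * Z ^ (γ - 4) := by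
          refine mul_le_mul_of_nonneg_right ?_ (by positivity)
          exact rpow_le_rpow_of_exponent_ge (by norm_num) (by norm_num) (by linarith)
      _ = 16 * Z ^ (γ - 4) := by
          rw [rpow_neg (by norm_num)]; norm_num

lemma pow_mul_rpow_le_pow_mul_rpow {s x u l₁ l₂ : ℝ} {j : ℕ} (hs : s ≤ 0) (hsj : 0 ≤ j + s)
    (hu : 0 ≤ u) (hl₂ : 0 < l₂) (hl : l₂ ≤ l₁) (hp₁ : 0 < x * l₁ + u) (hp₂ : 0 < x * l₂ + u) :
    l₂ ^ j * (x * l₂ + u) ^ s ≤ l₁ ^ j * (x * l₁ + u) ^ s := by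
  have hl₁ : 0 < l₁ := hl₂.trans_le hl
  have hsplit {l : ℝ} (hl : 0 < l) (hp : 0 < x * l + u) :
      l ^ j * (x * l + u) ^ s = l ^ (j + s) * (l / (x * l + u)) ^ (-s) := by
    rw [div_rpow hl.le hp.le, rpow_neg hp.le, rpow_neg hl.le, rpow_add hl, rpow_natCast]
    have : 0 < l ^ s := rpow_pos_of_pos hl s
    field_simp
  have hdiv : l₂ / (x * l₂ + u) ≤ l₁ / (x * l₁ + u) := by
    rw [div_le_div_iff₀ hp₂ hp₁]
    nlinarith
  rw [hsplit hl₂ hp₂, hsplit hl₁ hp₁]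
  have : 0 ≤ -s := neg_nonneg.mpr hs
  gcongr

lemma hasDerivAt_pow_four_mul_rpow (γ : ℝ) {x u l : ℝ} (hp : 0 < x * l + u) :
    HasDerivAt (fun l ↦ l ^ 4 * (x * l + u) ^ (γ - 4))
      (l ^ 3 * (x * l + u) ^ (γ - 4) * (4 - (4 - γ) * (x * l / (x * l + u)))) l := by
  have haffine : HasDerivAt (fun l ↦ x * l + u) x l := by
    simpa only [mul_one] using ((hasDerivAt_id' l).const_mul x).add_const u
  refine ((hasDerivAt_pow 4 l).mul
    (haffine.rpow_const (p := γ - 4) (Or.inl hp.ne'))).congr_deriv ?_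
  rw [rpow_sub_one hp.ne']
  norm_num
  field_simp
  ring

/-- The phase `e(α n³ - h (n + u) ^ γ)`; `h` is a frequency in the Fourier expansion of the
indicator function of the Piatetski-Shapiro integers, and `u ∈ {0, 1}` there. -/
noncomputable def psPhase (γ α h u : ℝ) (n : ℕ) : ℂ := eexp (α * n ^ 3 - h * (n + u) ^ γ)

lemma norm_psPhase (γ α h u : ℝ) (n : ℕ) : ‖psPhase γ α h u n‖ = 1 := norm_eexp _

variable {γ : ℝ} (hγ : 97 / 100 < γ) (hγ1 : γ < 1)

include hγ hγ1

lemma pow_four_mul_rpow_sub_mem_Icc {Z x u l₁ l₂ : ℝ} (hZ : 0 < Z) (hx : 0 ≤ x) (hu : 0 ≤ u)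
    (hl₂ : 0 < l₂) (hl : l₂ < l₁) (hZ₂ : Z / 2 ≤ x * l₂ + u) (hZ₁ : x * l₁ + u ≤ 3 * Z) :
    l₁ ^ 4 * (x * l₁ + u) ^ (γ - 4) - l₂ ^ 4 * (x * l₂ + u) ^ (γ - 4) ∈
      Set.Icc (1 / 162 * ((l₁ - l₂) * l₂ ^ 3 * Z ^ (γ - 4)))
        (64 * ((l₁ - l₂) * l₁ ^ 3 * Z ^ (γ - 4))) := by
  have hwindow : ∀ l ∈ Set.Icc l₂ l₁, x * l + u ∈ Set.Icc (Z / 2) (3 * Z) := fun l hl ↦ by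
    have h₂ := mul_le_mul_of_nonneg_left hl.1 hx
    have h₁ := mul_le_mul_of_nonneg_left hl.2 hx
    constructor <;> linarith
  have hpos : ∀ l ∈ Set.Icc l₂ l₁, 0 < x * l + u :=
    fun l hl ↦ (half_pos hZ).trans_le (hwindow l hl).1
  have hderiv := fun l hl ↦ hasDerivAt_pow_four_mul_rpow γ (hpos l hl)
  obtain ⟨l, hlmem, hslope⟩ := exists_hasDerivAt_eq_slope _ _ hl
    (fun l hl ↦ (hderiv l hl).continuousAt.continuousWithinAt)
    (fun l hl ↦ hderiv l (Set.Ioo_subset_Icc_self hl))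
  have hd : 0 < l₁ - l₂ := sub_pos.mpr hl
  rw [eq_div_iff hd.ne'] at hslope
  rw [← hslope]
  have hl0 : 0 < l := hl₂.trans hlmem.1
  have : 0 < l₁ := hl₂.trans hl
  have hmem := Set.Ioo_subset_Icc_self hlmem
  have hp := hpos l hmem
  obtain ⟨hlow, hupp⟩ := rpow_sub_four_mem_Icc (by linarith) hγ1 hZ (hwindow l hmem)
  have hratio0 : 0 ≤ x * l / (x * l + u) := by positivity
  have hratio1 : x * l / (x * l + u) ≤ 1 := (div_le_one hp).mpr (by linarith)
  constructor
  · calc 1 / 162 * ((l₁ - l₂) * l₂ ^ 3 * Z ^ (γ - 4))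
        = l₂ ^ 3 * (1 / 81 * Z ^ (γ - 4)) * (1 / 2) * (l₁ - l₂) := by ring
      _ ≤ _ := by
        gcongr
        · exact hlmem.1.le
        · nlinarith
  · calc _ ≤ l₁ ^ 3 * (16 * Z ^ (γ - 4)) * 4 * (l₁ - l₂) := by
          gcongr
          · nlinarith
          · exact hlmem.2.le
          · nlinarith
      _ = _ := by ring

lemma quartic_coeff_pos : 0 < γ * (1 - γ) * (2 - γ) * (3 - γ) := by
  have : 0 < γ := by linarith
  have : 0 < 1 - γ := by linarith
  have : 0 < 2 - γ := by linarith
  have : 0 < 3 - γ := by linarith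
  positivity

/-- In the applications `q` is `l ^ 4` for a sum over `m l`, and of order `(l₁ - l₂) l₂ ^ 3` for
the correlation of sums over `m l₁` and `m l₂`. -/
theorem norm_sum_eexp_cubic_sub_le {k₁ k₂ : ℝ} (hk₁ : 0 < k₁) (hk₂ : 0 < k₂) :
    ∃ C : ℝ, 1 ≤ C ∧ ∀ {Z A h q : ℝ} {a b N : ℕ} {g : ℕ → ℝ → ℝ}, 1 ≤ Z →
      h ∈ Set.Icc 1 (Z ^ (1 / 16 : ℝ)) → 0 < q → b ≤ a + N → Z ≤ 16 * (N : ℝ) ^ 2 → N ≤ 4 * Z →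
      Z ^ 3 ≤ 8 * (q * N ^ 3) → q * N ^ 4 ≤ 16 * Z ^ 4 →
      (∀ j, ∀ x ∈ Set.Icc (a : ℝ) b, HasDerivAt (g j) (g (j + 1) x) x) →
      (∀ x ∈ Set.Icc (a : ℝ) b,
        -g 4 x ∈ Set.Icc (k₁ * (q * Z ^ (γ - 4))) (k₂ * (q * Z ^ (γ - 4)))) →
      (∀ x ∈ Set.Icc (a : ℝ) b, 0 ≤ g 5 x) →
      ‖∑ n ∈ Ioc a b, eexp (A * n ^ 3 - h * g 0 n)‖ ≤ C * (N * Z ^ (-56 / 1000 : ℝ)) := by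
  obtain ⟨C, hC, hbound⟩ := HasAntitoneIterDeriv.norm_sum_eexp_le_of_scale (K := k₂ / k₁)
    (c := k₁ / 8) (B := k₁ * 4096) (by positivity) (by positivity) (by positivity)
  refine ⟨C, hC, fun {Z A h q a b N g} hZ hh hq hab hZN hNZ hqN hqN' hg hfour hfive ↦ ?_⟩
  have hZ0 : 0 < Z := by linarith
  have hh0 : 0 < h := zero_lt_one.trans_le hh.1
  have hN : (0 : ℝ) < N := Nat.cast_pos.mpr (natCast_pos_of_le_sq hZ0 hZN)
  refine hbound (f := fun x ↦ A * x ^ 3 - h * g 0 x) (lo := k₁ * (h * q * Z ^ (γ - 4)))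
    hZ hab hZN hNZ ?_ ?_ (hasAntitoneIterDeriv_cubic_sub hg (fun x hx ↦ ?_)
      fun x hx ↦ mul_nonneg hh0.le (hfive x hx))
  · calc k₁ / 8 * Z ^ (-3 / 100 : ℝ) ≤ k₁ / 8 * Z ^ ((3 : ℕ) + (γ - 4)) := by
          gcongr
          norm_num
          linarith
      _ = k₁ / 8 * (Z ^ 3 * Z ^ (γ - 4)) := by rw [rpow_add hZ0, rpow_natCast]
      _ ≤ k₁ / 8 * (8 * (q * N ^ 3) * Z ^ (γ - 4)) := by gcongr
      _ = k₁ * (1 * q * Z ^ (γ - 4)) * N ^ 3 := by ring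
      _ ≤ k₁ * (h * q * Z ^ (γ - 4)) * N ^ 3 := by gcongr; exact hh.1
  · have hscale : h * q * Z ^ (γ - 4) * N ^ 4 ≤ 4096 * Z ^ (-15 / 16 : ℝ) * N ^ 4 := by
      calc h * q * Z ^ (γ - 4) * N ^ 4 = h * (q * N ^ 4) * Z ^ (γ - 4) := by ring
        _ ≤ Z ^ (1 / 16 : ℝ) * (16 * Z ^ 4) * Z ^ (γ - 4) := by gcongr; exact hh.2
        _ = 16 * Z ^ (1 / 16 + (4 : ℕ) + (γ - 4)) := by
            rw [rpow_add hZ0, rpow_add hZ0, rpow_natCast]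
            ring
        _ ≤ 16 * Z ^ (-15 / 16 + (2 : ℕ) : ℝ) := by
            gcongr 16 * ?_
            exact rpow_le_rpow_of_exponent_le hZ (by norm_num; linarith)
        _ = 16 * (Z ^ (-15 / 16 : ℝ) * Z ^ 2) := by rw [rpow_add hZ0, rpow_natCast]
        _ ≤ 16 * (Z ^ (-15 / 16 : ℝ) * (16 * N ^ 2) ^ 2) := by gcongr
        _ = _ := by ring
    rw [mul_assoc k₁ 4096]
    exact mul_le_mul_of_nonneg_left (le_of_mul_le_mul_right hscale (by positivity)) hk₁.le
  · have hcomm (k : ℝ) : k * (h * q * Z ^ (γ - 4)) = h * (k * (q * Z ^ (γ - 4))) := by ring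
    rw [← mul_assoc (k₂ / k₁), div_mul_cancel₀ _ hk₁.ne', hcomm, hcomm, ← mul_neg]
    exact ⟨mul_le_mul_of_nonneg_left (hfour x hx).1 hh0.le,
      mul_le_mul_of_nonneg_left (hfour x hx).2 hh0.le⟩

theorem norm_sum_psPhase_mul_le :
    ∃ C : ℝ, 1 ≤ C ∧ ∀ {Z α h u : ℝ} {l a b N : ℕ}, 1 ≤ Z → h ∈ Set.Icc 1 (Z ^ (1 / 16 : ℝ)) →
      u ∈ Set.Icc 0 1 → 0 < l → Z / 2 ≤ a * l → b * l ≤ 2 * Z → b ≤ a + N →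
      Z ≤ 16 * (N : ℝ) ^ 2 → Z ≤ 2 * (N * l) → N * l ≤ 2 * Z →
      ‖∑ m ∈ Ioc a b, psPhase γ α h u (m * l)‖ ≤ C * (N * Z ^ (-56 / 1000 : ℝ)) := by
  have hK := quartic_coeff_pos hγ hγ1
  set K := γ * (1 - γ) * (2 - γ) * (3 - γ)
  obtain ⟨C, hC, hbound⟩ := norm_sum_eexp_cubic_sub_le hγ hγ1 (k₁ := K / 81) (k₂ := K * 16)
    (by positivity) (by positivity)
  refine ⟨C, hC, fun {Z α h u l a b N} hZ hh hu hl ha hb hab hZN hZNl hNlZ ↦ ?_⟩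
  have hZ0 : 0 < Z := by linarith
  have hl1 : (1 : ℝ) ≤ l := by exact_mod_cast hl
  have hwindow : ∀ x ∈ Set.Icc (a : ℝ) b, x * l + u ∈ Set.Icc (Z / 2) (3 * Z) := fun x hx ↦ by
    have hlow : (a : ℝ) * l ≤ x * l := by gcongr; exact hx.1
    have hupp : x * l ≤ (b : ℝ) * l := by gcongr; exact hx.2
    constructor <;> linarith [hu.1, hu.2]
  have hpos : ∀ x ∈ Set.Icc (a : ℝ) b, 0 < x * l + u :=
    fun x hx ↦ (half_pos hZ0).trans_le (hwindow x hx).1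
  have hN : (N : ℝ) ≤ 4 * Z := by nlinarith [N.cast_nonneg (α := ℝ)]
  have key := hbound (A := α * l ^ 3) (q := (l : ℝ) ^ 4) (g := affinePowDeriv γ l u) hZ hh
    (by positivity) hab hZN hN ?_ ?_ (fun j x hx ↦ hasDerivAt_affinePowDeriv j (hpos x hx))
    (fun x hx ↦ ?_) fun x hx ↦ ?_
  · convert key using 4 with m
    rw [psPhase, affinePowDeriv_zero, Nat.cast_mul, mul_pow, mul_assoc, mul_comm ((l : ℝ) ^ 3)]
  · calc Z ^ 3 ≤ (2 * ((N : ℝ) * l)) ^ 3 := by gcongr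
      _ = 8 * ((l : ℝ) ^ 3 * (N : ℝ) ^ 3) := by ring
      _ ≤ 8 * ((l : ℝ) ^ 4 * (N : ℝ) ^ 3) := by
          gcongr
          norm_num
  · calc (l : ℝ) ^ 4 * (N : ℝ) ^ 4 = ((N : ℝ) * l) ^ 4 := by ring
      _ ≤ (2 * Z) ^ 4 := by gcongr
      _ = 16 * Z ^ 4 := by ring
  · obtain ⟨hlow, hupp⟩ := rpow_sub_four_mem_Icc (by linarith) hγ1 hZ0 (hwindow x hx)
    rw [affinePowDeriv_four, neg_neg]
    constructor
    · calc K / 81 * ((l : ℝ) ^ 4 * Z ^ (γ - 4)) = K * (l ^ 4 * (1 / 81 * Z ^ (γ - 4))) := by ring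
        _ ≤ K * (l ^ 4 * (x * l + u) ^ (γ - 4)) := by gcongr
    · calc K * ((l : ℝ) ^ 4 * (x * l + u) ^ (γ - 4)) ≤ K * (l ^ 4 * (16 * Z ^ (γ - 4))) := by gcongr
        _ = K * 16 * (l ^ 4 * Z ^ (γ - 4)) := by ring
  · have := hpos x hx
    have : 0 < 4 - γ := by linarith
    rw [affinePowDeriv_five]
    positivity

lemma neg_affinePowDeriv_four_sub_mem_Icc {Z x u l₁ l₂ : ℝ} (hZ : 0 < Z) (hx : 0 ≤ x) (hu : 0 ≤ u)
    (hl₂ : 0 < l₂) (hl : l₂ < l₁) (hratio : l₁ ≤ 4 * l₂) (hZ₂ : Z / 2 ≤ x * l₂ + u)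
    (hZ₁ : x * l₁ + u ≤ 3 * Z) :
    -(affinePowDeriv γ l₁ u 4 x - affinePowDeriv γ l₂ u 4 x) ∈
      Set.Icc (γ * (1 - γ) * (2 - γ) * (3 - γ) / 162 * ((l₁ - l₂) * l₂ ^ 3 * Z ^ (γ - 4)))
        (γ * (1 - γ) * (2 - γ) * (3 - γ) * 4096 * ((l₁ - l₂) * l₂ ^ 3 * Z ^ (γ - 4))) := by
  have hK := quartic_coeff_pos hγ hγ1
  obtain ⟨hge, hle⟩ := pow_four_mul_rpow_sub_mem_Icc hγ hγ1 hZ hx hu hl₂ hl hZ₂ hZ₁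
  rw [affinePowDeriv_four, affinePowDeriv_four]
  set K := γ * (1 - γ) * (2 - γ) * (3 - γ)
  rw [show -(-(K * (l₁ ^ 4 * (x * l₁ + u) ^ (γ - 4))) - -(K * (l₂ ^ 4 * (x * l₂ + u) ^ (γ - 4)))) =
    K * (l₁ ^ 4 * (x * l₁ + u) ^ (γ - 4) - l₂ ^ 4 * (x * l₂ + u) ^ (γ - 4)) by ring]
  constructor
  · refine le_trans (le_of_eq ?_) (mul_le_mul_of_nonneg_left hge hK.le)
    ring
  · have : 0 < l₁ - l₂ := sub_pos.mpr hl
    have : 0 < l₁ := hl₂.trans hl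
    calc _ ≤ K * (64 * ((l₁ - l₂) * l₁ ^ 3 * Z ^ (γ - 4))) := by gcongr
      _ ≤ K * (64 * ((l₁ - l₂) * (4 * l₂) ^ 3 * Z ^ (γ - 4))) := by gcongr
      _ = K * 4096 * ((l₁ - l₂) * l₂ ^ 3 * Z ^ (γ - 4)) := by ring

theorem norm_sum_psPhase_mul_conj_le :
    ∃ C : ℝ, 1 ≤ C ∧ ∀ {Z α h u : ℝ} {l₁ l₂ a b N : ℕ}, 1 ≤ Z →
      h ∈ Set.Icc 1 (Z ^ (1 / 16 : ℝ)) → u ∈ Set.Icc 0 1 → 0 < l₂ → l₂ < l₁ → Z / 2 ≤ a * l₂ →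
      b * l₁ ≤ 2 * Z → b ≤ a + N → Z ≤ 16 * (N : ℝ) ^ 2 → Z ≤ 2 * (N * l₂) → N * l₁ ≤ 2 * Z →
      ‖∑ m ∈ Ioc a b, psPhase γ α h u (m * l₁) * conj (psPhase γ α h u (m * l₂))‖ ≤
        C * (N * Z ^ (-56 / 1000 : ℝ)) := by
  have hK := quartic_coeff_pos hγ hγ1
  set K := γ * (1 - γ) * (2 - γ) * (3 - γ)
  obtain ⟨C, hC, hbound⟩ := norm_sum_eexp_cubic_sub_le hγ hγ1 (k₁ := K / 162) (k₂ := K * 4096)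
    (by positivity) (by positivity)
  refine ⟨C, hC, fun {Z α h u l₁ l₂ a b N} hZ hh hu hl hll ha hb hab hZN hZNl hNlZ ↦ ?_⟩
  have hZ0 : 0 < Z := by linarith
  have hl0 : (0 : ℝ) < l₂ := by exact_mod_cast hl
  have hdiff : (1 : ℝ) ≤ l₁ - l₂ := by rw [le_sub_iff_add_le']; exact_mod_cast hll
  have hN : (0 : ℝ) < N := Nat.cast_pos.mpr (natCast_pos_of_le_sq hZ0 hZN)
  have hratio : (l₁ : ℝ) ≤ 4 * l₂ := le_of_mul_le_mul_left (by linarith) hN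
  have hwindow : ∀ x ∈ Set.Icc (a : ℝ) b,
      0 ≤ x ∧ Z / 2 ≤ x * l₂ + u ∧ x * l₁ + u ≤ 3 * Z ∧ x * l₂ ≤ x * l₁ := fun x hx ↦ by
    have hx0 : 0 ≤ x := a.cast_nonneg.trans hx.1
    have hlow : (a : ℝ) * l₂ ≤ x * l₂ := by gcongr; exact hx.1
    have hupp : x * l₁ ≤ (b : ℝ) * l₁ := by gcongr; exact hx.2
    exact ⟨hx0, by linarith [hu.1], by linarith [hu.2], by gcongr⟩
  have hpos : ∀ x ∈ Set.Icc (a : ℝ) b, 0 < x * l₁ + u ∧ 0 < x * l₂ + u := fun x hx ↦ by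
    obtain ⟨-, hlow, -, hle⟩ := hwindow x hx
    constructor <;> linarith
  have key := hbound (A := α * (l₁ ^ 3 - l₂ ^ 3)) (q := (l₁ - l₂) * (l₂ : ℝ) ^ 3)
    (g := fun j x ↦ affinePowDeriv γ l₁ u j x - affinePowDeriv γ l₂ u j x) hZ hh
    (by positivity) hab hZN (by nlinarith) ?_ ?_
    (fun j x hx ↦ (hasDerivAt_affinePowDeriv j (hpos x hx).1).sub
      (hasDerivAt_affinePowDeriv j (hpos x hx).2)) (fun x hx ↦ ?_) fun x hx ↦ ?_
  · convert key using 3 with m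
    rw [psPhase, psPhase, ← eexp_neg, ← eexp_add, affinePowDeriv_zero, affinePowDeriv_zero]
    congr 1
    push_cast
    ring
  · calc Z ^ 3 ≤ (2 * ((N : ℝ) * l₂)) ^ 3 := by gcongr
      _ = 8 * (1 * (l₂ : ℝ) ^ 3 * (N : ℝ) ^ 3) := by ring
      _ ≤ 8 * (((l₁ : ℝ) - l₂) * (l₂ : ℝ) ^ 3 * (N : ℝ) ^ 3) := by gcongr
  · calc ((l₁ : ℝ) - l₂) * (l₂ : ℝ) ^ 3 * (N : ℝ) ^ 4 ≤ l₁ * (l₁ : ℝ) ^ 3 * (N : ℝ) ^ 4 := by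
          gcongr
          linarith
      _ = ((N : ℝ) * l₁) ^ 4 := by ring
      _ ≤ (2 * Z) ^ 4 := by gcongr
      _ = 16 * Z ^ 4 := by ring
  · obtain ⟨hx0, hlow, hupp, -⟩ := hwindow x hx
    exact neg_affinePowDeriv_four_sub_mem_Icc hγ hγ1 hZ0 hx0 hu.1 hl0 (by linarith) hratio hlow hupp
  · have hmono := pow_mul_rpow_le_pow_mul_rpow (s := γ - 5) (j := 5) (by linarith)
      (by norm_num; linarith) hu.1 hl0 (by linarith : (l₂ : ℝ) ≤ l₁) (hpos x hx).1 (hpos x hx).2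
    have : 0 < 4 - γ := by linarith
    rw [affinePowDeriv_five, affinePowDeriv_five, ← mul_sub]
    exact mul_nonneg (by positivity) (sub_nonneg.mpr hmono)

end

section

open Finset Real
open scoped ComplexConjugate

theorem norm_sum_sum_mul_sq_le {ι κ : Type*} {s : Finset ι} {t : Finset κ}
    {a : ι → ℂ} {b : κ → ℂ} {G : ι → κ → ℂ} {A B V : ℝ} (hV : 0 ≤ V)
    (ha : ∀ i ∈ s, ‖a i‖ ≤ A) (hb : ∀ j ∈ t, ‖b j‖ ≤ B) (hG : ∀ i j, ‖G i j‖ ≤ 1)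
    (hcorr : ∀ j ∈ t, ∀ k ∈ t, j ≠ k → ‖∑ i ∈ s, G i j * conj (G i k)‖ ≤ V) :
    ‖∑ i ∈ s, ∑ j ∈ t, a i * b j * G i j‖ ^ 2 ≤
      (A * B) ^ 2 * (#s * (#s * #t + #t ^ 2 * V)) := by
  classical
  have hpair : ∀ j ∈ t, ∀ k ∈ t, ‖∑ i ∈ s, b j * G i j * conj (b k * G i k)‖ ≤
      B ^ 2 * ((if j = k then (#s : ℝ) else 0) + V) := fun j hj k hk ↦ by
    have hfactor : ∑ i ∈ s, b j * G i j * conj (b k * G i k) =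
        b j * conj (b k) * ∑ i ∈ s, G i j * conj (G i k) := by
      simp only [map_mul, mul_sum]
      exact sum_congr rfl fun i _ ↦ by ring
    have hsum : ‖∑ i ∈ s, G i j * conj (G i k)‖ ≤ (if j = k then (#s : ℝ) else 0) + V := by
      split_ifs with hjk
      · have htriv := norm_sum_le_of_le s fun i _ ↦ show ‖G i j * conj (G i k)‖ ≤ 1 by
          rw [norm_mul, Complex.norm_conj]
          exact mul_le_one₀ (hG i j) (norm_nonneg _) (hG i k)
        rw [sum_const, nsmul_one] at htriv
        linarith
      · rw [zero_add]
        exact hcorr j hj k hk hjk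
    have : 0 ≤ B := (norm_nonneg _).trans (hb j hj)
    rw [hfactor, norm_mul, norm_mul, Complex.norm_conj, sq]
    gcongr
    exacts [hb j hj, hb k hk]
  calc ‖∑ i ∈ s, ∑ j ∈ t, a i * b j * G i j‖ ^ 2
      ≤ #s * ∑ i ∈ s, ‖∑ j ∈ t, a i * b j * G i j‖ ^ 2 := norm_sum_sq_le_card_mul _ _
    _ ≤ #s * ∑ i ∈ s, A ^ 2 * ‖∑ j ∈ t, b j * G i j‖ ^ 2 := by
        gcongr with i hi
        simp only [mul_assoc]
        rw [← mul_sum, norm_mul, mul_pow]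
        gcongr
        exact ha i hi
    _ ≤ #s * (A ^ 2 * ∑ j ∈ t, ∑ k ∈ t, B ^ 2 * ((if j = k then (#s : ℝ) else 0) + V)) := by
        rw [← mul_sum]
        gcongr
        exact (sum_norm_sum_sq_le s t fun i j ↦ b j * G i j).trans
          (sum_le_sum fun j hj ↦ sum_le_sum fun k hk ↦ hpair j hj k hk)
    _ = _ := by
        have hdiag : ∑ j ∈ t, ∑ k ∈ t, (if j = k then (#s : ℝ) else 0) = #s * #t := by
          simp +contextual [mul_comm]
        simp only [← mul_sum, sum_add_distrib, hdiag, sum_const, nsmul_eq_mul]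
        ring

theorem norm_bilinear_sum_sq_le {F a b : ℕ → ℂ} {A B V : ℝ} {Z M : ℕ} (hM : 0 < M) (hV : 0 ≤ V)
    (hF : ∀ n, ‖F n‖ ≤ 1) (hsupp : ∀ n ∉ Ioc Z (2 * Z), F n = 0)
    (ha : ∀ m ∈ Ioc M (2 * M), ‖a m‖ ≤ A) (hb : ∀ l ∈ Ioc 0 (2 * Z), ‖b l‖ ≤ B)
    (hcorr : ∀ l₁ l₂, l₁ ≠ l₂ → Z < 2 * (M * l₁) → M * l₁ < 2 * Z → Z < 2 * (M * l₂) →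
      M * l₂ < 2 * Z → ‖∑ m ∈ Ioc M (2 * M), F (m * l₁) * conj (F (m * l₂))‖ ≤ M * V) :
    ‖∑ m ∈ Ioc M (2 * M), ∑ l ∈ Ioc 0 (2 * Z), a m * b l * F (m * l)‖ ^ 2 ≤
      (A * B) ^ 2 * (2 * M * Z + 4 * Z ^ 2 * V) := by
  set S := {l ∈ Ioc 0 (2 * Z) | Z < 2 * (M * l) ∧ M * l < 2 * Z} with hS
  have hrestrict : ∀ m ∈ Ioc M (2 * M), ∑ l ∈ Ioc 0 (2 * Z), a m * b l * F (m * l) =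
      ∑ l ∈ S, a m * b l * F (m * l) := fun m hm ↦ by
    refine (sum_subset (filter_subset _ _) fun l hl hlS ↦ ?_).symm
    rw [mem_Ioc] at hm hl
    rw [hsupp, mul_zero]
    refine fun hml ↦ hlS (mem_filter.mpr ⟨mem_Ioc.mpr hl, ?_, ?_⟩)
    · nlinarith [(mem_Ioc.mp hml).1]
    · nlinarith [(mem_Ioc.mp hml).2]
  have hcardM : #(Ioc M (2 * M)) = M := by rw [Nat.card_Ioc]; omega
  have hcardS : (M : ℝ) * #S ≤ 2 * Z := by
    have hsub : S ⊆ Ioc 0 (2 * Z / M) := fun l hl ↦ by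
      obtain ⟨hl, -, hlt⟩ := mem_filter.mp hl
      rw [mem_Ioc, Nat.le_div_iff_mul_le hM, mul_comm]
      exact ⟨(mem_Ioc.mp hl).1, hlt.le⟩
    have hcard := (card_le_card hsub).trans_eq (Nat.card_Ioc _ _)
    exact_mod_cast (Nat.mul_le_mul_left M hcard).trans (Nat.mul_div_le _ _)
  rw [sum_congr rfl hrestrict]
  refine (norm_sum_sum_mul_sq_le (V := M * V) (by positivity) ha
    (fun l hl ↦ hb l (mem_filter.mp hl).1) (fun m l ↦ hF (m * l)) fun l₁ h₁ l₂ h₂ hne ↦ ?_).trans ?_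
  · obtain ⟨-, h₁, h₁'⟩ := mem_filter.mp h₁
    obtain ⟨-, h₂, h₂'⟩ := mem_filter.mp h₂
    exact hcorr l₁ l₂ hne h₁ h₁' h₂ h₂'
  · rw [hcardM]
    gcongr
    calc (M : ℝ) * (M * #S + #S ^ 2 * (M * V)) = M * (M * #S) + (M * #S) ^ 2 * V := by ring
      _ ≤ M * (2 * Z) + (2 * Z) ^ 2 * V := by gcongr
      _ = _ := by ring

/-- The phase `psPhase` cut off to the interval `(Z, Z']`. -/
noncomputable def psWindow (γ α h u : ℝ) (Z Z' : ℕ) : ℕ → ℂ :=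
  Set.indicator (Set.Ioc Z Z') (psPhase γ α h u)

lemma norm_psWindow_le_one (γ α h u : ℝ) (Z Z' n : ℕ) : ‖psWindow γ α h u Z Z' n‖ ≤ 1 :=
  (norm_indicator_le_norm_self _ n).trans (norm_psPhase γ α h u n).le

lemma psWindow_eq_zero {γ α h u : ℝ} {Z Z' n : ℕ} (hZ' : Z' ≤ 2 * Z) (hn : n ∉ Ioc Z (2 * Z)) :
    psWindow γ α h u Z Z' n = 0 :=
  Set.indicator_of_notMem (fun hn' ↦ hn (mem_Ioc.mpr ⟨hn'.1, hn'.2.trans hZ'⟩)) _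

lemma psWindow_mul_apply {γ α h u : ℝ} {Z Z' m l : ℕ} (hl : 0 < l) :
    psWindow γ α h u Z Z' (m * l) =
      if m ∈ Ioc (Z / l) (Z' / l) then psPhase γ α h u (m * l) else 0 := by
  rw [psWindow, Set.indicator_apply]
  simp only [Set.mem_Ioc, mem_Ioc, Nat.div_lt_iff_lt_mul hl, Nat.le_div_iff_mul_le hl]

variable {γ : ℝ} (hγ : 97 / 100 < γ) (hγ1 : γ < 1)

include hγ hγ1

theorem norm_sum_psWindow_mul_le :
    ∃ C : ℝ, 1 ≤ C ∧ ∀ {Z Z' d y : ℕ} {α h u : ℝ}, 1 ≤ Z → Z' ≤ 2 * Z →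
      h ∈ Set.Icc 1 ((Z : ℝ) ^ (1 / 16 : ℝ)) → u ∈ Set.Icc 0 1 → 0 < d → d ^ 2 ≤ Z →
      ‖∑ m ∈ Ioc 0 y, psWindow γ α h u Z Z' (m * d)‖ ≤ C * (Z : ℝ) ^ (1 - 56 / 1000 : ℝ) / d := by
  obtain ⟨C, hC, hbound⟩ := norm_sum_psPhase_mul_le hγ hγ1
  refine ⟨2 * C, by linarith, fun {Z Z' d y α h u} hZ hZ' hh hu hd hdZ ↦ ?_⟩
  have hZ0 : (0 : ℝ) < Z := by exact_mod_cast hZ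
  have hwindow : ∑ m ∈ Ioc 0 y, psWindow γ α h u Z Z' (m * d) =
      ∑ m ∈ Ioc (Z / d) (min y (Z' / d)), psPhase γ α h u (m * d) := by
    simp only [psWindow_mul_apply hd, ← sum_filter]
    congr 1
    ext m
    simp only [mem_filter, mem_Ioc, le_min_iff]
    generalize Z / d = q
    omega
  have hupp : min y (Z' / d) * d ≤ 2 * Z :=
    (Nat.mul_le_mul_right d (min_le_right _ _)).trans ((Nat.div_mul_le_self _ _).trans hZ')
  have hdiv := Nat.div_add_mod Z d
  have hmod := Nat.mod_lt Z hd
  rw [hwindow]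
  generalize min y (Z' / d) = b at hupp ⊢
  generalize Z / d = q at hdiv ⊢
  generalize Z % d = r at hdiv hmod
  have hd1 : d ≤ q := by
    by_contra! hq
    nlinarith
  have hlen : b ≤ q + (q + 1) := by
    by_contra! hb
    nlinarith
  have hle : (q + 1) * d ≤ 2 * Z := by nlinarith
  have : Z ≤ (q + 1) * d := by nlinarith
  have key := hbound (α := α) (N := q + 1) (mod_cast hZ) hh hu hd
    (by rw [div_le_iff₀ two_pos]; norm_cast; nlinarith) (mod_cast hupp) hlen
    (by norm_cast; nlinarith) (by norm_cast; nlinarith) (by exact_mod_cast hle)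
  calc _ ≤ _ := key
    _ ≤ C * (2 * Z / d * (Z : ℝ) ^ (-56 / 1000 : ℝ)) := by
      gcongr
      rw [le_div_iff₀ (by exact_mod_cast hd)]
      exact_mod_cast hle
    _ = 2 * C * (Z ^ (1 : ℝ) * Z ^ (-56 / 1000 : ℝ)) / d := by rw [rpow_one]; ring
    _ = _ := by rw [← rpow_add hZ0]; norm_num

theorem norm_sum_psWindow_mul_conj_le :
    ∃ C : ℝ, 1 ≤ C ∧ ∀ {Z Z' M l₁ l₂ : ℕ} {α h u : ℝ}, 1 ≤ Z → Z' ≤ 2 * Z → Z ≤ 16 * M ^ 2 →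
      h ∈ Set.Icc 1 ((Z : ℝ) ^ (1 / 16 : ℝ)) → u ∈ Set.Icc 0 1 → l₁ ≠ l₂ →
      Z < 2 * (M * l₁) → M * l₁ < 2 * Z → Z < 2 * (M * l₂) → M * l₂ < 2 * Z →
      ‖∑ m ∈ Ioc M (2 * M), psWindow γ α h u Z Z' (m * l₁) * conj (psWindow γ α h u Z Z' (m * l₂))‖
        ≤ M * (C * (Z : ℝ) ^ (-56 / 1000 : ℝ)) := by
  obtain ⟨C, hC, hbound⟩ := norm_sum_psPhase_mul_conj_le hγ hγ1
  refine ⟨C, hC, fun {Z Z' M l₁ l₂ α h u} hZ hZ' hM hh hu hne h₁ h₁' h₂ h₂' ↦ ?_⟩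
  wlog hl : l₂ < l₁ generalizing l₁ l₂
  · rw [← Complex.norm_conj, map_sum]
    simp only [map_mul, Complex.conj_conj]
    simpa only [mul_comm] using this hne.symm h₂ h₂' h₁ h₁' (by omega)
  have hl₂ : 0 < l₂ := pos_of_mul_pos_right (by omega : 0 < M * l₂) M.zero_le
  set lo := max M (max (Z / l₁) (Z / l₂))
  set up := min (2 * M) (min (Z' / l₁) (Z' / l₂))
  have hwindow : ∑ m ∈ Ioc M (2 * M),
      psWindow γ α h u Z Z' (m * l₁) * conj (psWindow γ α h u Z Z' (m * l₂)) =
      ∑ m ∈ Ioc lo up, psPhase γ α h u (m * l₁) * conj (psPhase γ α h u (m * l₂)) := by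
    have hfilter : Ioc lo up =
        {m ∈ Ioc M (2 * M) | m ∈ Ioc (Z / l₁) (Z' / l₁) ∧ m ∈ Ioc (Z / l₂) (Z' / l₂)} := by
      ext m
      simp only [mem_filter, mem_Ioc]
      omega
    rw [hfilter, sum_filter]
    refine sum_congr rfl fun m _ ↦ ?_
    rw [psWindow_mul_apply (hl₂.trans hl), psWindow_mul_apply hl₂]
    by_cases hm₁ : m ∈ Ioc (Z / l₁) (Z' / l₁) <;> by_cases hm₂ : m ∈ Ioc (Z / l₂) (Z' / l₂) <;>
      simp only [hm₁, hm₂, if_true, if_false, map_zero, mul_zero, zero_mul, and_self, and_true,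
        and_false]
  have hlow : (Z : ℝ) / 2 ≤ lo * l₂ := by
    rw [div_le_iff₀ two_pos]
    have : M * l₂ ≤ lo * l₂ := Nat.mul_le_mul_right _ (le_max_left _ _)
    norm_cast
    omega
  have hupp : (up : ℝ) * l₁ ≤ 2 * Z := by
    have : up * l₁ ≤ Z' / l₁ * l₁ := Nat.mul_le_mul_right _ (by omega)
    exact_mod_cast this.trans ((Nat.div_mul_le_self _ _).trans hZ')
  rw [hwindow]
  refine (hbound (N := M) (mod_cast hZ) hh hu hl₂ hl hlow hupp (by omega) (mod_cast hM)
    (mod_cast h₂.le) (mod_cast h₁'.le)).trans_eq (by ring)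

theorem norm_bilinear_sum_psWindow_le :
    ∃ C : ℝ, 1 ≤ C ∧ ∀ {Z Z' M : ℕ} {α h u A B : ℝ} {a b : ℕ → ℂ}, 1 ≤ Z → Z' ≤ 2 * Z →
      Z ≤ 16 * M ^ 2 → (M : ℝ) ≤ 2 * (Z : ℝ) ^ (9 / 10 : ℝ) →
      h ∈ Set.Icc 1 ((Z : ℝ) ^ (1 / 16 : ℝ)) → u ∈ Set.Icc 0 1 →
      (∀ m ∈ Ioc M (2 * M), ‖a m‖ ≤ A) → (∀ l ∈ Ioc 0 (2 * Z), ‖b l‖ ≤ B) →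
      ‖∑ m ∈ Ioc M (2 * M), ∑ l ∈ Ioc 0 (2 * Z), a m * b l * psWindow γ α h u Z Z' (m * l)‖ ≤
        C * (A * B * (Z : ℝ) ^ (1 - 28 / 1000 : ℝ)) := by
  obtain ⟨C, hC, hbound⟩ := norm_sum_psWindow_mul_conj_le hγ hγ1
  refine ⟨6 * C, by linarith, fun {Z Z' M α h u A B a b} hZ hZ' hM hMZ hh hu ha hb ↦ ?_⟩
  have hZr : (1 : ℝ) ≤ Z := by exact_mod_cast hZ
  have hZ0 : (0 : ℝ) < Z := by linarith
  have hM0 : 0 < M := Nat.pos_of_ne_zero (by rintro rfl; omega)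
  have hA : 0 ≤ A := (norm_nonneg _).trans (ha (2 * M) (mem_Ioc.mpr ⟨by omega, le_rfl⟩))
  have hB : 0 ≤ B := (norm_nonneg _).trans (hb 1 (mem_Ioc.mpr ⟨one_pos, by omega⟩))
  set W := (Z : ℝ) ^ (1 - 28 / 1000 : ℝ) with hW
  have hW2 : (Z : ℝ) ^ (2 - 56 / 1000 : ℝ) = W ^ 2 := by
    rw [hW, ← rpow_mul_natCast hZ0.le]
    norm_num
  have hdiag : (M : ℝ) * Z ≤ 2 * W ^ 2 := by
    calc (M : ℝ) * Z ≤ 2 * Z ^ (9 / 10 : ℝ) * Z ^ (1 : ℝ) := by rw [rpow_one]; gcongr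
      _ = 2 * Z ^ (9 / 10 + 1 : ℝ) := by rw [mul_assoc, rpow_add hZ0]
      _ ≤ 2 * Z ^ (2 - 56 / 1000 : ℝ) := by
          gcongr 2 * ?_
          exact rpow_le_rpow_of_exponent_le hZr (by norm_num)
      _ = 2 * W ^ 2 := by rw [hW2]
  have hoff : (Z : ℝ) ^ 2 * Z ^ (-56 / 1000 : ℝ) = W ^ 2 := by
    rw [← rpow_natCast, ← rpow_add hZ0, ← hW2]
    norm_num
  refine le_of_pow_le_pow_left₀ two_ne_zero (by positivity) ?_
  calc _ ≤ (A * B) ^ 2 * (2 * M * Z + 4 * Z ^ 2 * (C * (Z : ℝ) ^ (-56 / 1000 : ℝ))) :=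
        norm_bilinear_sum_sq_le hM0 (by positivity) (norm_psWindow_le_one γ α h u Z Z')
          (fun n ↦ psWindow_eq_zero hZ') ha hb fun l₁ l₂ ↦ hbound hZ hZ' hM hh hu
    _ = (A * B) ^ 2 * (2 * (M * Z) + 4 * C * (Z ^ 2 * (Z : ℝ) ^ (-56 / 1000 : ℝ))) := by ring
    _ ≤ (A * B) ^ 2 * (2 * (2 * W ^ 2) + 4 * C * W ^ 2) := by rw [hoff]; gcongr
    _ ≤ (A * B) ^ 2 * ((6 * C) ^ 2 * W ^ 2) := by
        rw [← mul_assoc 2, ← add_mul]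
        gcongr
        nlinarith
    _ = _ := by ring

end

section

open Finset Real

section DivisorBound

lemma add_one_le_mul_two_rpow {ε : ℝ} (hε : 0 < ε) (k : ℕ) :
    (k : ℝ) + 1 ≤ (1 + 1 / (ε * log 2)) * 2 ^ (k * ε) := by
  have : 0 < log 2 := log_pos one_lt_two
  calc (k : ℝ) + 1 ≤ (1 + 1 / (ε * log 2)) * (1 + log 2 * (k * ε)) := by
        have : 0 ≤ 1 / (ε * log 2) + log 2 * (k * ε) := by positivity
        calc (k : ℝ) + 1 ≤ k + 1 + (1 / (ε * log 2) + log 2 * (k * ε)) := by linarith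
          _ = _ := by field_simp; ring
    _ ≤ (1 + 1 / (ε * log 2)) * 2 ^ (k * ε) := by
        rw [rpow_def_of_pos two_pos]
        gcongr
        linarith [add_one_le_exp (log 2 * (k * ε))]

lemma add_one_le_mul_pow_rpow {ε : ℝ} (hε : 0 < ε) {p : ℕ} (hp : 2 ≤ p) (k : ℕ) :
    (k : ℝ) + 1 ≤
      (if p < ⌈(2 : ℝ) ^ (1 / ε)⌉₊ then 1 + 1 / (ε * log 2) else 1) * ((p : ℝ) ^ k) ^ ε := by
  have hpow : ((p : ℝ) ^ k) ^ ε = (p : ℝ) ^ (k * ε) := by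
    rw [← rpow_natCast, ← rpow_mul p.cast_nonneg]
  rw [hpow]
  split_ifs with hsmall
  · have : 0 < log 2 := log_pos one_lt_two
    refine (add_one_le_mul_two_rpow hε k).trans ?_
    gcongr
    exact_mod_cast hp
  · have hlarge : (2 : ℝ) ^ (1 / ε) ≤ p := Nat.ceil_le.mp (not_lt.mp hsmall)
    calc (k : ℝ) + 1 ≤ 2 ^ k := mod_cast Nat.lt_two_pow_self
      _ = ((2 : ℝ) ^ (1 / ε)) ^ (k * ε) := by
          rw [← rpow_mul two_pos.le, ← rpow_natCast]
          congr 1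
          field_simp
      _ ≤ 1 * (p : ℝ) ^ (k * ε) := by
          rw [one_mul]
          gcongr

theorem exists_card_divisors_le {ε : ℝ} (hε : 0 < ε) :
    ∃ C : ℝ, 1 ≤ C ∧ ∀ n : ℕ, (#n.divisors : ℝ) ≤ C * (n : ℝ) ^ ε := by
  set K := 1 + 1 / (ε * log 2)
  set P := ⌈(2 : ℝ) ^ (1 / ε)⌉₊
  have hK : 1 ≤ K := le_add_of_nonneg_right (by have := log_pos one_lt_two; positivity)
  refine ⟨K ^ P, one_le_pow₀ hK, fun n ↦ ?_⟩
  rcases eq_or_ne n 0 with rfl | hn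
  · simp only [Nat.divisors_zero, card_empty, CharP.cast_eq_zero]
    positivity
  have hfactor : (n : ℝ) ^ ε = ∏ p ∈ n.primeFactors, ((p : ℝ) ^ n.factorization p) ^ ε := by
    rw [finsetProd_rpow _ _ fun p _ ↦ by positivity]
    congr 1
    exact_mod_cast (Nat.prod_factorization_pow_eq_self hn).symm
  calc (#n.divisors : ℝ) = ∏ p ∈ n.primeFactors, ((n.factorization p : ℝ) + 1) := by
        exact_mod_cast Nat.card_divisors hn
    _ ≤ ∏ p ∈ n.primeFactors, (if p < P then K else 1) * ((p : ℝ) ^ n.factorization p) ^ ε :=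
        prod_le_prod (fun p _ ↦ by positivity) fun p hp ↦
          add_one_le_mul_pow_rpow hε (Nat.prime_of_mem_primeFactors hp).two_le _
    _ = K ^ #{p ∈ n.primeFactors | p < P} * (n : ℝ) ^ ε := by
        rw [prod_mul_distrib, ← hfactor, prod_ite, prod_const, prod_const_one, mul_one]
    _ ≤ K ^ P * (n : ℝ) ^ ε := by
        gcongr
        refine (card_le_card fun p hp ↦ ?_).trans_eq (card_range P)
        exact mem_range.mpr (mem_filter.mp hp).2

end DivisorBound

section PartialSummation

variable {E : Type*} [SeminormedAddCommGroup E] [NormedSpace ℝ E]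

lemma sum_Ioc_smul_eq_sub_sum {w : ℕ → ℝ} {z : ℕ → E} {a b : ℕ} (hab : a ≤ b) :
    ∑ n ∈ Ioc a b, w n • z n = w b • ∑ n ∈ Ioc a b, z n -
      ∑ j ∈ Ico a b, (w (j + 1) - w j) • ∑ n ∈ Ioc a j, z n := by
  induction b, hab using Nat.le_induction with
  | base => simp
  | succ b hab ih =>
    rw [sum_Ioc_succ_top (by omega), sum_Ioc_succ_top (by omega), sum_Ico_succ_top hab, ih]
    module

lemma norm_sum_Ioc_smul_le {w : ℕ → ℝ} {z : ℕ → E} {a b : ℕ} {B : ℝ} (hab : a ≤ b)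
    (hz : ∀ y ≤ b, ‖∑ n ∈ Ioc a y, z n‖ ≤ B) :
    ‖∑ n ∈ Ioc a b, w n • z n‖ ≤ (|w b| + ∑ j ∈ Ico a b, |w (j + 1) - w j|) * B := by
  rw [sum_Ioc_smul_eq_sub_sum hab, add_mul, sum_mul]
  refine norm_sub_le_of_le ?_ (norm_sum_le_of_le _ fun j hj ↦ ?_)
  all_goals
    rw [norm_smul, norm_eq_abs]
    gcongr
  exacts [hz b le_rfl, hz j (mem_Ico.mp hj).2.le]

theorem norm_sum_Ioc_smul_le_of_monotoneOn {w : ℕ → ℝ} {z : ℕ → E} {a b : ℕ} {B : ℝ}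
    (hw : MonotoneOn w (Set.Icc a b)) (hab : a ≤ b) (ha : 0 ≤ w a)
    (hz : ∀ y ≤ b, ‖∑ n ∈ Ioc a y, z n‖ ≤ B) :
    ‖∑ n ∈ Ioc a b, w n • z n‖ ≤ 2 * w b * B := by
  have hB : 0 ≤ B := (norm_nonneg _).trans (hz b le_rfl)
  have hb : w a ≤ w b := hw ⟨le_rfl, hab⟩ ⟨hab, le_rfl⟩ hab
  have hvariation : ∑ j ∈ Ico a b, |w (j + 1) - w j| = w b - w a := by
    rw [← sum_Ico_sub w hab]
    refine sum_congr rfl fun j hj ↦ abs_of_nonneg (sub_nonneg.mpr ?_)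
    obtain ⟨haj, hjb⟩ := mem_Ico.mp hj
    exact hw ⟨haj, hjb.le⟩ ⟨by omega, hjb⟩ j.le_succ
  refine (norm_sum_Ioc_smul_le hab hz).trans ?_
  rw [hvariation, abs_of_nonneg (ha.trans hb)]
  gcongr
  linarith

theorem norm_sum_Ioc_smul_le_of_antitoneOn {w : ℕ → ℝ} {z : ℕ → E} {a b : ℕ} {B : ℝ}
    (hw : AntitoneOn w (Set.Icc a b)) (hab : a ≤ b) (hb : 0 ≤ w b)
    (hz : ∀ y ≤ b, ‖∑ n ∈ Ioc a y, z n‖ ≤ B) :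
    ‖∑ n ∈ Ioc a b, w n • z n‖ ≤ w a * B := by
  have hvariation : ∑ j ∈ Ico a b, |w (j + 1) - w j| = w a - w b := by
    rw [← neg_sub, ← sum_Ico_sub w hab, ← sum_neg_distrib]
    refine sum_congr rfl fun j hj ↦ abs_of_nonpos (sub_nonpos.mpr ?_)
    obtain ⟨haj, hjb⟩ := mem_Ico.mp hj
    exact hw ⟨haj, hjb.le⟩ ⟨by omega, hjb⟩ j.le_succ
  refine (norm_sum_Ioc_smul_le hab hz).trans_eq ?_
  rw [hvariation, abs_of_nonneg hb, add_sub_cancel]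

end PartialSummation

lemma sum_Ioc_mul_smul {R E : Type*} [Semiring R] [AddCommMonoid E] [Module R E]
    {f g : ArithmeticFunction R} {F : ℕ → E} {X : ℕ}
    (hF : ∀ n, X < n → F n = 0) :
    ∑ n ∈ Ioc 0 X, (f * g) n • F n = ∑ m ∈ Ioc 0 X, ∑ l ∈ Ioc 0 X, f m • g l • F (m * l) := by
  have hconv : ∀ n ∈ Ioc 0 X, (f * g) n • F n =
      ∑ p ∈ Ioc 0 X ×ˢ Ioc 0 X, if p.1 * p.2 = n then f p.1 • g p.2 • F n else 0 := fun n hn ↦ by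
    obtain ⟨hn0, hnX⟩ := mem_Ioc.mp hn
    rw [ArithmeticFunction.mul_apply, Nat.divisorsAntidiagonal_eq_prod_filter_of_le hn0.ne' hnX,
      sum_smul, sum_filter]
    simp only [mul_smul]
  rw [sum_congr rfl hconv, sum_comm, sum_product]
  refine sum_congr rfl fun m hm ↦ sum_congr rfl fun l hl ↦ ?_
  simp only [sum_ite_eq, mem_Ioc]
  split_ifs with hml
  · rfl
  · rw [hF, smul_zero, smul_zero]
    have := Nat.mul_pos (mem_Ioc.mp hm).1 (mem_Ioc.mp hl).1
    omega

theorem norm_sum_Ioc_mul_smul_le {E : Type*} [SeminormedAddCommGroup E] [NormedSpace ℝ E]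
    {f g : ArithmeticFunction ℝ} {F : ℕ → E} {X D : ℕ} {A K : ℝ} (hDX : D ≤ X)
    (hF : ∀ n, X < n → F n = 0) (hf0 : ∀ d, D < d → f d = 0) (hf : ∀ d ∈ Ioc 0 D, |f d| ≤ A)
    (hg : ∀ d ∈ Ioc 0 D, ‖∑ m ∈ Ioc 0 X, g m • F (m * d)‖ ≤ K / d) :
    ‖∑ n ∈ Ioc 0 X, (f * g) n • F n‖ ≤ A * K * harmonic D := by
  rw [sum_Ioc_mul_smul hF]
  have hrestrict : ∑ d ∈ Ioc 0 X, ∑ m ∈ Ioc 0 X, f d • g m • F (d * m) =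
      ∑ d ∈ Ioc 0 D, f d • ∑ m ∈ Ioc 0 X, g m • F (m * d) := by
    simp only [← smul_sum, mul_comm]
    refine (sum_subset (Ioc_subset_Ioc_right hDX) fun d hd hdD ↦ ?_).symm
    rw [hf0 d, zero_smul]
    simp only [mem_Ioc] at hd hdD
    omega
  rw [hrestrict]
  calc _ ≤ ∑ d ∈ Ioc 0 D, A * (K / d) := norm_sum_le_of_le _ fun d hd ↦ by
        rw [norm_smul, norm_eq_abs]
        exact mul_le_mul (hf d hd) (hg d hd) (norm_nonneg _) ((abs_nonneg _).trans (hf d hd))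
    _ = A * K * harmonic D := by
        rw [harmonic_eq_sum_Icc]
        push_cast
        rw [mul_sum]
        exact sum_congr rfl fun d _ ↦ by ring

lemma sum_Ioc_dyadic {E : Type*} [AddCommMonoid E] (f : ℕ → E) (R J : ℕ) :
    ∑ m ∈ Ioc R (2 ^ J * R), f m =
      ∑ j ∈ range J, ∑ m ∈ Ioc (2 ^ j * R) (2 * (2 ^ j * R)), f m := by
  induction J with
  | zero => simp
  | succ J ih =>
    rw [sum_range_succ, ← ih, show 2 ^ (J + 1) * R = 2 * (2 ^ J * R) by ring,
      sum_Ioc_consecutive f (Nat.le_mul_of_pos_left R (by positivity)) (by omega)]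

end

section

open Finset Real
open scoped ArithmeticFunction.Moebius ArithmeticFunction.vonMangoldt ArithmeticFunction.zeta

/-- The truncation of the arithmetic function `f` to arguments `n ≤ y`. -/
noncomputable def arithTrunc {R : Type*} [Zero R] (y : ℕ) (f : ArithmeticFunction R) :
    ArithmeticFunction R :=
  ⟨fun n ↦ if n ≤ y then f n else 0, by simp⟩

lemma arithTrunc_apply {R : Type*} [Zero R] (y : ℕ) (f : ArithmeticFunction R) (n : ℕ) :
    arithTrunc y f n = if n ≤ y then f n else 0 := rfl

/-- Vaughan's identity, for arbitrary approximations `a`, `b` of `Λ` and `μ`. -/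
theorem vonMangoldt_sub_eq_vaughan (a b : ArithmeticFunction ℝ) :
    Λ - a = b * ArithmeticFunction.log - a * b * ζ + (Λ - a) * ((μ - b) * ζ) := by
  have hμ : (μ : ArithmeticFunction ℝ) * ζ = 1 := ArithmeticFunction.coe_moebius_mul_coe_zeta
  linear_combination (a - Λ) * hμ + b * ArithmeticFunction.vonMangoldt_mul_zeta

lemma sum_sum_eq_sum_large_add_sum_large {F a b : ℕ → ℂ} {R X Y : ℕ} (hXY : X ≤ Y)
    (hlow : ∀ m ≤ R, ∀ l ≤ R, F (m * l) = 0) (hupp : ∀ n, X < n → F n = 0) :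
    ∑ m ∈ Ioc 0 X, ∑ l ∈ Ioc 0 X, a m * b l * F (m * l) =
      (∑ m ∈ Ioc R Y, ∑ l ∈ Ioc 0 X, a m * b l * F (m * l)) +
        ∑ l ∈ Ioc R Y, ∑ m ∈ Ioc 0 X, b l * (if m ≤ R then a m else 0) * F (l * m) := by
  have hlarge : ∀ c d : ℕ → ℂ, ∑ m ∈ Ioc R Y, ∑ l ∈ Ioc 0 X, c m * d l * F (m * l) =
      ∑ m ∈ Ioc 0 X, ∑ l ∈ Ioc 0 X, (if R < m then c m else 0) * d l * F (m * l) := fun c d ↦ by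
    have hpull : ∀ m, ∑ l ∈ Ioc 0 X, (if R < m then c m else 0) * d l * F (m * l) =
        if R < m then ∑ l ∈ Ioc 0 X, c m * d l * F (m * l) else 0 := fun m ↦ by
      split_ifs <;> simp
    rw [sum_congr rfl fun m _ ↦ hpull m, ← sum_filter]
    refine (sum_subset (fun m hm ↦ ?_) fun m hm hmX ↦ sum_eq_zero fun l hl ↦ ?_).symm
    · simp only [mem_filter, mem_Ioc] at hm ⊢
      omega
    · simp only [mem_filter, mem_Ioc, not_and] at hm hmX hl
      rw [hupp _ (lt_of_lt_of_le (by omega) (Nat.le_mul_of_pos_right m hl.1)), mul_zero]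
  rw [hlarge, hlarge]
  conv_rhs => rw [add_comm, sum_comm, ← sum_add_distrib]
  refine sum_congr rfl fun m _ ↦ ?_
  rw [← sum_add_distrib]
  refine sum_congr rfl fun l _ ↦ ?_
  rw [mul_comm l m]
  rcases lt_or_ge R m with hm | hm <;> rcases lt_or_ge R l with hl | hl
  · simp [hm, hm.not_ge]
  · simp [hm, hl.not_gt]
  · simp [hm, hl, mul_comm (b l)]
  · simp [hlow m hm l hl]

lemma natLog_two_add_two_le {n : ℕ} (hn : n ≠ 0) : (Nat.log 2 n : ℝ) + 2 ≤ 2 * (1 + log n) := by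
  have hlog : (Nat.log 2 n : ℝ) * log 2 ≤ log n := by
    rw [← log_pow]
    exact log_le_log (by positivity) (mod_cast Nat.pow_log_le_self 2 hn)
  have := log_two_gt_d9
  have : (0 : ℝ) ≤ Nat.log 2 n := Nat.cast_nonneg _
  nlinarith

variable {γ : ℝ} (hγ : 97 / 100 < γ) (hγ1 : γ < 1)

include hγ hγ1

theorem norm_sum_log_smul_psWindow_mul_le :
    ∃ C : ℝ, 1 ≤ C ∧ ∀ {Z Z' d y : ℕ} {α h u : ℝ}, 1 ≤ Z → Z' ≤ 2 * Z →
      h ∈ Set.Icc 1 ((Z : ℝ) ^ (1 / 16 : ℝ)) → u ∈ Set.Icc 0 1 → 0 < d → d ^ 2 ≤ Z →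
      ‖∑ m ∈ Ioc 0 y, log m • psWindow γ α h u Z Z' (m * d)‖ ≤
        C * log y * (Z : ℝ) ^ (1 - 56 / 1000 : ℝ) / d := by
  obtain ⟨C, hC, hbound⟩ := norm_sum_psWindow_mul_le hγ hγ1
  refine ⟨2 * C, by linarith, fun {Z Z' d y α h u} hZ hZ' hh hu hd hdZ ↦ ?_⟩
  have hmono : MonotoneOn (fun n : ℕ ↦ log n) (Set.Icc 0 y) := fun m _ n _ hmn ↦ by
    rcases m.eq_zero_or_pos with rfl | hm
    · simpa using log_natCast_nonneg n
    · exact log_le_log (mod_cast hm) (mod_cast hmn)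
  refine (norm_sum_Ioc_smul_le_of_monotoneOn hmono y.zero_le (by simp) fun x _ ↦
    hbound (y := x) hZ hZ' hh hu hd hdZ).trans_eq ?_
  ring

theorem norm_sum_dyadic_bilinear_psWindow_le :
    ∃ C : ℝ, 1 ≤ C ∧ ∀ {Z Z' R J : ℕ} {α h u A B : ℝ} {a b : ℕ → ℂ}, 1 ≤ Z → Z' ≤ 2 * Z →
      Z ≤ 16 * R ^ 2 → h ∈ Set.Icc 1 ((Z : ℝ) ^ (1 / 16 : ℝ)) → u ∈ Set.Icc 0 1 →
      (∀ m ≤ 4 * Z, ‖a m‖ ≤ A) → (∀ l ≤ 2 * Z, ‖b l‖ ≤ B) →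
      (∀ l : ℕ, (l : ℝ) ≤ (Z : ℝ) ^ (1 / 10 : ℝ) → b l = 0) →
      ‖∑ m ∈ Ioc R (2 ^ J * R), ∑ l ∈ Ioc 0 (2 * Z), a m * b l * psWindow γ α h u Z Z' (m * l)‖ ≤
        C * J * (A * B * (Z : ℝ) ^ (1 - 28 / 1000 : ℝ)) := by
  obtain ⟨C, hC, hbound⟩ := norm_bilinear_sum_psWindow_le hγ hγ1
  refine ⟨C, hC, fun {Z Z' R J α h u A B a b} hZ hZ' hR hh hu ha hb hb0 ↦ ?_⟩
  have hZ0 : (0 : ℝ) < Z := by exact_mod_cast hZ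
  have hA : 0 ≤ A := (norm_nonneg _).trans (ha 0 (by omega))
  have hB : 0 ≤ B := (norm_nonneg _).trans (hb 0 (by omega))
  have hpiece : ∀ j ∈ range J, ‖∑ m ∈ Ioc (2 ^ j * R) (2 * (2 ^ j * R)),
      ∑ l ∈ Ioc 0 (2 * Z), a m * b l * psWindow γ α h u Z Z' (m * l)‖ ≤
        C * (A * B * (Z : ℝ) ^ (1 - 28 / 1000 : ℝ)) := fun j _ ↦ by
    have hRj : Z ≤ 16 * (2 ^ j * R) ^ 2 := by
      refine hR.trans ?_
      gcongr
      exact Nat.le_mul_of_pos_left R (by positivity)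
    generalize 2 ^ j * R = M at hRj ⊢
    by_cases hM : (M : ℝ) ≤ 2 * (Z : ℝ) ^ (9 / 10 : ℝ)
    · refine hbound hZ hZ' hRj hM hh hu (fun m hm ↦ ha m ?_) fun l hl ↦ hb l (mem_Ioc.mp hl).2
      have hMZ : (M : ℝ) ≤ 2 * Z := hM.trans <| by
        gcongr
        exact rpow_le_self_of_one_le (mod_cast hZ) (by norm_num)
      have : M ≤ 2 * Z := by exact_mod_cast hMZ
      have := (mem_Ioc.mp hm).2
      omega
    · rw [sum_eq_zero fun m hm ↦ sum_eq_zero fun l _ ↦ ?_, norm_zero]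
      · positivity
      by_cases hl : (l : ℝ) ≤ (Z : ℝ) ^ (1 / 10 : ℝ)
      · rw [hb0 l hl, mul_zero, zero_mul]
      have hml : (2 : ℝ) * Z < m * l := by
        calc (2 : ℝ) * Z = 2 * (Z : ℝ) ^ (9 / 10 : ℝ) * (Z : ℝ) ^ (1 / 10 : ℝ) := by
              rw [mul_assoc, ← rpow_add hZ0]
              norm_num
          _ < M * l := mul_lt_mul'' (not_le.mp hM) (not_le.mp hl) (by positivity) (by positivity)
          _ ≤ m * l := by
              have := (mem_Ioc.mp hm).1.le
              gcongr
      rw [psWindow_eq_zero hZ' fun hmem ↦ ?_, mul_zero]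
      exact absurd (mem_Ioc.mp hmem).2 (not_le.mpr (mod_cast hml))
  rw [sum_Ioc_dyadic]
  refine (norm_sum_le_of_le _ hpiece).trans_eq ?_
  rw [sum_const, card_range, nsmul_eq_mul]
  ring

theorem norm_sum_mul_smul_psWindow_le :
    ∃ C : ℝ, 1 ≤ C ∧ ∀ {Z Z' : ℕ} {α h u A B : ℝ} {f g : ArithmeticFunction ℝ}, 1 ≤ Z →
      Z' ≤ 2 * Z → h ∈ Set.Icc 1 ((Z : ℝ) ^ (1 / 16 : ℝ)) → u ∈ Set.Icc 0 1 →
      (∀ m ≤ 4 * Z, |f m| ≤ A) → (∀ l ≤ 4 * Z, |g l| ≤ B) →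
      (∀ m : ℕ, (m : ℝ) ≤ (Z : ℝ) ^ (1 / 10 : ℝ) → f m = 0) →
      (∀ l : ℕ, (l : ℝ) ≤ (Z : ℝ) ^ (1 / 10 : ℝ) → g l = 0) →
      ‖∑ n ∈ Ioc 0 (2 * Z), (f * g) n • psWindow γ α h u Z Z' n‖ ≤
        C * (1 + log Z) * (A * B * (Z : ℝ) ^ (1 - 28 / 1000 : ℝ)) := by
  obtain ⟨C, hC, hbound⟩ := norm_sum_dyadic_bilinear_psWindow_le hγ hγ1
  refine ⟨4 * C, by linarith, fun {Z Z' α h u A B f g} hZ hZ' hh hu hf hg hf0 hg0 ↦ ?_⟩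
  have hA : 0 ≤ A := (abs_nonneg _).trans (hf 0 (by omega))
  have hB : 0 ≤ B := (abs_nonneg _).trans (hg 0 (by omega))
  set R := Z.sqrt
  have hR : 0 < R := Nat.sqrt_pos.mpr hZ
  have hRle : R * R ≤ Z := Nat.sqrt_le Z
  have hRgt : Z ≤ 16 * R ^ 2 := by
    have : Z < (R + 1) * (R + 1) := Nat.lt_succ_sqrt Z
    nlinarith
  set J := Nat.log 2 Z + 2 with hJ
  have hJR : 2 * Z ≤ 2 ^ J * R := by
    have hpow : Z < 2 ^ (Nat.log 2 Z + 1) := Nat.lt_pow_succ_log_self one_lt_two Z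
    calc 2 * Z ≤ 2 ^ J := by rw [hJ, pow_succ]; omega
      _ ≤ 2 ^ J * R := Nat.le_mul_of_pos_right _ hR
  have hJlog : (J : ℝ) ≤ 2 * (1 + log Z) := by
    rw [hJ]
    exact_mod_cast natLog_two_add_two_le (by omega)
  rw [sum_Ioc_mul_smul fun n hn ↦ psWindow_eq_zero hZ' fun hmem ↦ hn.not_ge (mem_Ioc.mp hmem).2]
  simp only [Complex.real_smul, ← mul_assoc]
  rw [sum_sum_eq_sum_large_add_sum_large (R := R) hJR
    (fun m hm l hl ↦ psWindow_eq_zero hZ' fun hmem ↦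
      (mem_Ioc.mp hmem).1.not_ge ((Nat.mul_le_mul hm hl).trans hRle))
    fun n hn ↦ psWindow_eq_zero hZ' fun hmem ↦ hn.not_ge (mem_Ioc.mp hmem).2]
  have hfg := hbound (J := J) (α := α) (A := A) (B := B) (a := fun m ↦ (f m : ℂ))
    (b := fun l ↦ (g l : ℂ)) hZ hZ' hRgt hh hu (fun m hm ↦ by simpa using hf m hm)
    (fun l hl ↦ by simpa using hg l (by omega)) fun l hl ↦ by simpa using hg0 l hl
  have hgf := hbound (J := J) (α := α) (A := B) (B := A) (a := fun l ↦ (g l : ℂ))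
    (b := fun m ↦ if m ≤ R then (f m : ℂ) else 0)
    hZ hZ' hRgt hh hu (fun l hl ↦ by simpa using hg l hl)
    (fun m hm ↦ by split_ifs <;> simp [hA, hf m (by omega)])
    fun m hm ↦ by simp [hf0 m hm]
  calc _ ≤ C * J * (A * B * (Z : ℝ) ^ (1 - 28 / 1000 : ℝ)) +
        C * J * (B * A * (Z : ℝ) ^ (1 - 28 / 1000 : ℝ)) := norm_add_le_of_le hfg hgf
    _ = 2 * C * (A * B * (Z : ℝ) ^ (1 - 28 / 1000 : ℝ)) * J := by ring
    _ ≤ 2 * C * (A * B * (Z : ℝ) ^ (1 - 28 / 1000 : ℝ)) * (2 * (1 + log Z)) := by gcongr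
    _ = _ := by ring

end

section

open Finset Real
open scoped ArithmeticFunction.Moebius ArithmeticFunction.vonMangoldt ArithmeticFunction.zeta

lemma abs_mul_apply_le {f g F G : ArithmeticFunction ℝ} (hf : ∀ n, |f n| ≤ F n)
    (hg : ∀ n, |g n| ≤ G n) (n : ℕ) : |(f * g) n| ≤ (F * G) n := by
  simp only [ArithmeticFunction.mul_apply]
  refine (abs_sum_le_sum_abs _ _).trans (sum_le_sum fun x _ ↦ ?_)
  rw [abs_mul]
  gcongr
  exacts [(abs_nonneg _).trans (hf _), hf _, hg _]

lemma abs_arithTrunc_le {f F : ArithmeticFunction ℝ} (hf : ∀ n, |f n| ≤ F n) (y n : ℕ) :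
    |arithTrunc y f n| ≤ F n := by
  rw [arithTrunc_apply]
  split_ifs
  · exact hf n
  · simpa using (abs_nonneg _).trans (hf n)

lemma sub_arithTrunc_apply (f : ArithmeticFunction ℝ) (y n : ℕ) :
    (f - arithTrunc y f) n = if n ≤ y then 0 else f n := by
  rw [sub_eq_add_neg, ArithmeticFunction.add_apply, ArithmeticFunction.neg_apply,
    arithTrunc_apply]
  split_ifs <;> simp

lemma abs_sub_arithTrunc_le {f F : ArithmeticFunction ℝ} (hf : ∀ n, |f n| ≤ F n) (y n : ℕ) :
    |(f - arithTrunc y f) n| ≤ F n := by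
  rw [sub_arithTrunc_apply]
  split_ifs
  · simpa using (abs_nonneg _).trans (hf n)
  · exact hf n

lemma arithTrunc_mul_arithTrunc_eq_zero {f g : ArithmeticFunction ℝ} {x y n : ℕ}
    (hn : x * y < n) : (arithTrunc x f * arithTrunc y g) n = 0 := by
  rw [ArithmeticFunction.mul_apply]
  refine sum_eq_zero fun p hp ↦ ?_
  rw [arithTrunc_apply, arithTrunc_apply]
  split_ifs with h₁ h₂
  · rw [← (Nat.mem_divisorsAntidiagonal.mp hp).1] at hn
    exact absurd (Nat.mul_le_mul h₁ h₂) hn.not_ge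
  all_goals simp

lemma mul_zeta_apply_eq_zero {f : ArithmeticFunction ℝ} {y n : ℕ} (hf : ∀ m ≤ y, f m = 0)
    (hn : n ≤ y) : (f * (ζ : ArithmeticFunction ℝ)) n = 0 := by
  rw [ArithmeticFunction.coe_mul_zeta_apply]
  exact sum_eq_zero fun d hd ↦ hf d ((Nat.divisor_le hd).trans hn)

lemma abs_moebius_le_zeta (n : ℕ) :
    |(μ : ArithmeticFunction ℝ) n| ≤ (ζ : ArithmeticFunction ℝ) n := by
  rcases eq_or_ne n 0 with rfl | hn
  · simp
  · simpa [hn] using mod_cast ArithmeticFunction.abs_moebius_le_one (n := n)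

lemma abs_vonMangoldt_le (n : ℕ) : |Λ n| ≤ Λ n :=
  (abs_of_nonneg ArithmeticFunction.vonMangoldt_nonneg).le

lemma abs_arithTrunc_vonMangoldt_mul_le (y z n : ℕ) :
    |(arithTrunc y (μ : ArithmeticFunction ℝ) * arithTrunc z Λ) n| ≤ log n := by
  rw [mul_comm, ← ArithmeticFunction.log_apply, ← ArithmeticFunction.vonMangoldt_mul_zeta]
  exact abs_mul_apply_le (abs_arithTrunc_le abs_vonMangoldt_le z)
    (abs_arithTrunc_le abs_moebius_le_zeta y) n

lemma abs_moebius_sub_arithTrunc_mul_zeta_le (y n : ℕ) :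
    |(((μ : ArithmeticFunction ℝ) - arithTrunc y (μ : ArithmeticFunction ℝ)) * ζ) n| ≤
      #n.divisors := by
  refine (abs_mul_apply_le (abs_sub_arithTrunc_le abs_moebius_le_zeta y)
    (G := ζ) (fun m ↦ (abs_of_nonneg ?_).le) n).trans_eq ?_
  · simp only [ArithmeticFunction.natCoe_apply, Nat.cast_nonneg]
  · rw [ArithmeticFunction.coe_mul_zeta_apply,
      sum_congr rfl fun d hd ↦ show (ζ : ArithmeticFunction ℝ) d = 1 by
        simp [(Nat.pos_of_mem_divisors hd).ne']]
    simp

lemma exists_one_add_log_le_and_card_divisors_le {ε : ℝ} (hε : 0 < ε) :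
    ∃ K : ℝ, 1 ≤ K ∧ ∀ {Z n : ℕ}, 1 ≤ Z → n ≤ 4 * Z →
      1 + log n ≤ K * (Z : ℝ) ^ ε ∧ #n.divisors ≤ K * (Z : ℝ) ^ ε := by
  set ε₁ := min ε 1
  have hε₁ : 0 < ε₁ := lt_min hε one_pos
  obtain ⟨C, hC, hdiv⟩ := exists_card_divisors_le hε₁
  set K := 4 * (1 + 1 / ε₁) + 4 * C
  have hK : 4 * (1 + 1 / ε₁) ≤ K := by linarith
  have hKC : 4 * C ≤ K := by
    have : 0 < 1 / ε₁ := by positivity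
    linarith
  refine ⟨K, by linarith, fun {Z n} hZ hn ↦ ?_⟩
  have hn' : (n : ℝ) ≤ 4 * Z := by exact_mod_cast hn
  have hZε : (Z : ℝ) ^ ε₁ ≤ (Z : ℝ) ^ ε :=
    rpow_le_rpow_of_exponent_le (mod_cast hZ) (min_le_left _ _)
  constructor
  · refine le_trans ?_ (mul_le_mul hK hZε (by positivity) (by linarith))
    rcases n.eq_zero_or_pos with rfl | hn0
    · have := one_le_rpow (show (1 : ℝ) ≤ Z by exact_mod_cast hZ) hε₁.le
      have : 0 < 1 / ε₁ := by positivity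
      simp only [CharP.cast_eq_zero, log_zero]
      nlinarith
    · exact one_add_log_le_of_le_four_mul (mod_cast hn0) hn' hε₁ (min_le_right _ _)
  · calc (#n.divisors : ℝ) ≤ C * (n : ℝ) ^ ε₁ := hdiv n
      _ ≤ C * (4 * (Z : ℝ) ^ ε₁) := by
          gcongr C * ?_
          exact rpow_le_of_le_four_mul n.cast_nonneg hn' hε₁.le (min_le_right _ _)
      _ = 4 * C * (Z : ℝ) ^ ε₁ := by ring
      _ ≤ K * (Z : ℝ) ^ ε := by gcongr

lemma sum_vonMangoldt_smul_psPhase_eq {γ α h u : ℝ} {Z Z' y : ℕ} (hZ' : Z' ≤ 2 * Z) (hy : y ≤ Z) :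
    ∑ n ∈ Ioc Z Z', Λ n • psPhase γ α h u n =
      ∑ n ∈ Ioc 0 (2 * Z), (arithTrunc y (μ : ArithmeticFunction ℝ) * ArithmeticFunction.log) n •
          psWindow γ α h u Z Z' n -
        ∑ n ∈ Ioc 0 (2 * Z), (arithTrunc y (μ : ArithmeticFunction ℝ) * arithTrunc y Λ * ζ) n •
          psWindow γ α h u Z Z' n +
        ∑ n ∈ Ioc 0 (2 * Z), ((Λ - arithTrunc y Λ) * (((μ : ArithmeticFunction ℝ) -
          arithTrunc y (μ : ArithmeticFunction ℝ)) * ζ)) n • psWindow γ α h u Z Z' n := by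
  have hwindow : ∑ n ∈ Ioc Z Z', Λ n • psPhase γ α h u n =
      ∑ n ∈ Ioc 0 (2 * Z), (Λ - arithTrunc y Λ) n • psWindow γ α h u Z Z' n := by
    refine sum_subset_zero_on_sdiff (Ioc_subset_Ioc Z.zero_le hZ') (fun n hn ↦ ?_) fun n hn ↦ ?_
    · rw [psWindow, Set.indicator_of_notMem, smul_zero]
      simpa using (mem_sdiff.mp hn).2
    · rw [sub_arithTrunc_apply, if_neg (by have := (mem_Ioc.mp hn).1; omega), psWindow,
        Set.indicator_of_mem]
      simpa using hn
  rw [hwindow, ← sum_sub_distrib, ← sum_add_distrib]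
  refine sum_congr rfl fun n _ ↦ ?_
  conv_lhs => rw [vonMangoldt_sub_eq_vaughan (arithTrunc y Λ) (arithTrunc y μ),
    mul_comm (arithTrunc y Λ), ArithmeticFunction.add_apply, sub_eq_add_neg,
    ArithmeticFunction.add_apply, ArithmeticFunction.neg_apply, ← sub_eq_add_neg]
  rw [add_smul, sub_smul]

variable {γ : ℝ} (hγ : 97 / 100 < γ) (hγ1 : γ < 1)

include hγ hγ1

theorem norm_sum_moebius_mul_log_smul_psWindow_le :
    ∃ C : ℝ, 1 ≤ C ∧ ∀ {Z Z' y : ℕ} {α h u Q : ℝ}, 1 ≤ Z → Z' ≤ 2 * Z →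
      h ∈ Set.Icc 1 ((Z : ℝ) ^ (1 / 16 : ℝ)) → u ∈ Set.Icc 0 1 → y ^ 2 ≤ Z →
      (∀ n ≤ 2 * Z, 1 + log n ≤ Q) →
      ‖∑ n ∈ Ioc 0 (2 * Z), (arithTrunc y (μ : ArithmeticFunction ℝ) * ArithmeticFunction.log) n •
        psWindow γ α h u Z Z' n‖ ≤ C * Q ^ 2 * (Z : ℝ) ^ (1 - 56 / 1000 : ℝ) := by
  obtain ⟨C, hC, hbound⟩ := norm_sum_log_smul_psWindow_mul_le hγ hγ1
  refine ⟨C, hC, fun {Z Z' y α h u Q} hZ hZ' hh hu hyZ hQ ↦ ?_⟩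
  have hQ0 : 0 ≤ Q := zero_le_one.trans (by simpa using hQ 0 (by omega))
  have hyZ' : y ≤ 2 * Z := by nlinarith
  calc ‖∑ n ∈ Ioc 0 (2 * Z), (arithTrunc y (μ : ArithmeticFunction ℝ) * ArithmeticFunction.log) n •
        psWindow γ α h u Z Z' n‖
      ≤ 1 * (C * Q * (Z : ℝ) ^ (1 - 56 / 1000 : ℝ)) * harmonic y := by
        refine norm_sum_Ioc_mul_smul_le hyZ'
          (fun n hn ↦ psWindow_eq_zero hZ' fun hmem ↦ hn.not_ge (mem_Ioc.mp hmem).2)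
          (fun d hd ↦ by rw [arithTrunc_apply, if_neg hd.not_ge])
          (fun d hd ↦ (abs_arithTrunc_le abs_moebius_le_zeta y d).trans
            (by simp [(mem_Ioc.mp hd).1.ne'])) fun d hd ↦ ?_
        obtain ⟨hd0, hdy⟩ := mem_Ioc.mp hd
        refine (hbound hZ hZ' hh hu hd0 ((Nat.pow_le_pow_left hdy 2).trans hyZ)).trans ?_
        gcongr
        linarith [hQ _ le_rfl]
    _ ≤ 1 * (C * Q * (Z : ℝ) ^ (1 - 56 / 1000 : ℝ)) * Q := by
        gcongr
        exact (harmonic_le_one_add_log y).trans (hQ y hyZ')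
    _ = _ := by ring

theorem norm_sum_moebius_mul_vonMangoldt_mul_zeta_smul_psWindow_le :
    ∃ C : ℝ, 1 ≤ C ∧ ∀ {Z Z' y : ℕ} {α h u Q : ℝ}, 1 ≤ Z → Z' ≤ 2 * Z →
      h ∈ Set.Icc 1 ((Z : ℝ) ^ (1 / 16 : ℝ)) → u ∈ Set.Icc 0 1 → y ^ 4 ≤ Z →
      (∀ n ≤ 2 * Z, 1 + log n ≤ Q) →
      ‖∑ n ∈ Ioc 0 (2 * Z), (arithTrunc y (μ : ArithmeticFunction ℝ) * arithTrunc y Λ * ζ) n •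
        psWindow γ α h u Z Z' n‖ ≤ C * Q ^ 2 * (Z : ℝ) ^ (1 - 56 / 1000 : ℝ) := by
  obtain ⟨C, hC, hbound⟩ := norm_sum_psWindow_mul_le hγ hγ1
  refine ⟨C, hC, fun {Z Z' y α h u Q} hZ hZ' hh hu hyZ hQ ↦ ?_⟩
  have hQ0 : 0 ≤ Q := zero_le_one.trans (by simpa using hQ 0 (by omega))
  have hyZ2 : (y * y) ^ 2 ≤ Z := by linarith
  have hyZ' : y * y ≤ 2 * Z := by nlinarith
  calc ‖∑ n ∈ Ioc 0 (2 * Z), (arithTrunc y (μ : ArithmeticFunction ℝ) * arithTrunc y Λ * ζ) n •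
        psWindow γ α h u Z Z' n‖
      ≤ Q * (C * (Z : ℝ) ^ (1 - 56 / 1000 : ℝ)) * harmonic (y * y) := by
        refine norm_sum_Ioc_mul_smul_le hyZ'
          (fun n hn ↦ psWindow_eq_zero hZ' fun hmem ↦ hn.not_ge (mem_Ioc.mp hmem).2)
          (fun d hd ↦ arithTrunc_mul_arithTrunc_eq_zero hd)
          (fun d hd ↦ (abs_arithTrunc_vonMangoldt_mul_le y y d).trans ?_) fun d hd ↦ ?_
        · linarith [hQ d ((mem_Ioc.mp hd).2.trans hyZ')]
        obtain ⟨hd0, hdy⟩ := mem_Ioc.mp hd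
        rw [sum_congr rfl fun m hm ↦ show (ζ : ArithmeticFunction ℝ) m •
          psWindow γ α h u Z Z' (m * d) = psWindow γ α h u Z Z' (m * d) by
            simp [(mem_Ioc.mp hm).1.ne']]
        exact hbound hZ hZ' hh hu hd0 ((Nat.pow_le_pow_left hdy 2).trans hyZ2)
    _ ≤ Q * (C * (Z : ℝ) ^ (1 - 56 / 1000 : ℝ)) * Q := by
        gcongr
        exact (harmonic_le_one_add_log _).trans (hQ _ hyZ')
    _ = _ := by ring

theorem norm_sum_vonMangoldt_mul_moebius_mul_zeta_smul_psWindow_le :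
    ∃ C : ℝ, 1 ≤ C ∧ ∀ {Z Z' : ℕ} {α h u Q : ℝ}, 1 ≤ Z → Z' ≤ 2 * Z →
      h ∈ Set.Icc 1 ((Z : ℝ) ^ (1 / 16 : ℝ)) → u ∈ Set.Icc 0 1 →
      (∀ n ≤ 4 * Z, 1 + log n ≤ Q) → (∀ n ≤ 4 * Z, #n.divisors ≤ Q) →
      letI y := ⌊(Z : ℝ) ^ (1 / 10 : ℝ)⌋₊
      ‖∑ n ∈ Ioc 0 (2 * Z), ((Λ - arithTrunc y Λ) * (((μ : ArithmeticFunction ℝ) -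
          arithTrunc y (μ : ArithmeticFunction ℝ)) * ζ)) n • psWindow γ α h u Z Z' n‖ ≤
        C * Q ^ 3 * (Z : ℝ) ^ (1 - 28 / 1000 : ℝ) := by
  obtain ⟨C, hC, hbound⟩ := norm_sum_mul_smul_psWindow_le hγ hγ1
  refine ⟨C, hC, fun {Z Z' α h u Q} hZ hZ' hh hu hlog hdiv ↦ ?_⟩
  have hQ0 : 0 ≤ Q := zero_le_one.trans (by simpa using hlog 0 (by omega))
  refine (hbound (A := Q) (B := Q) hZ hZ' hh hu
    (fun m hm ↦ (abs_sub_arithTrunc_le abs_vonMangoldt_le _ m).trans ?_)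
    (fun l hl ↦ (abs_moebius_sub_arithTrunc_mul_zeta_le _ l).trans (hdiv l hl))
    (fun m hm ↦ by rw [sub_arithTrunc_apply, if_pos (Nat.le_floor hm)])
    fun l hl ↦ mul_zeta_apply_eq_zero
      (fun m hm ↦ by rw [sub_arithTrunc_apply, if_pos hm]) (Nat.le_floor hl)).trans ?_
  · linarith [hlog m hm, ArithmeticFunction.vonMangoldt_le_log (n := m)]
  · calc C * (1 + log Z) * (Q * Q * (Z : ℝ) ^ (1 - 28 / 1000 : ℝ))
        ≤ C * Q * (Q * Q * (Z : ℝ) ^ (1 - 28 / 1000 : ℝ)) := by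
          gcongr
          exact hlog Z (by omega)
      _ = _ := by ring

theorem norm_sum_vonMangoldt_smul_psPhase_le {ε : ℝ} (hε : 0 < ε) :
    ∃ C : ℝ, 1 ≤ C ∧ ∀ {Z Z' : ℕ} {α h u : ℝ}, 1 ≤ Z → Z' ≤ 2 * Z →
      h ∈ Set.Icc 1 ((Z : ℝ) ^ (1 / 16 : ℝ)) → u ∈ Set.Icc 0 1 →
      ‖∑ n ∈ Ioc Z Z', Λ n • psPhase γ α h u n‖ ≤ C * (Z : ℝ) ^ (1 - 28 / 1000 + ε) := by
  obtain ⟨K, hK, hsmall⟩ := exists_one_add_log_le_and_card_divisors_le (div_pos hε three_pos)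
  obtain ⟨C₁, hC₁, hI₁⟩ := norm_sum_moebius_mul_log_smul_psWindow_le hγ hγ1
  obtain ⟨C₂, hC₂, hI₂⟩ := norm_sum_moebius_mul_vonMangoldt_mul_zeta_smul_psWindow_le hγ hγ1
  obtain ⟨C₃, hC₃, hII⟩ := norm_sum_vonMangoldt_mul_moebius_mul_zeta_smul_psWindow_le hγ hγ1
  refine ⟨(C₁ + C₂ + C₃) * K ^ 3, ?_, fun {Z Z' α h u} hZ hZ' hh hu ↦ ?_⟩
  · exact one_le_mul_of_one_le_of_one_le (by linarith) (one_le_pow₀ hK)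
  have hZ1 : (1 : ℝ) ≤ Z := by exact_mod_cast hZ
  set Q := K * (Z : ℝ) ^ (ε / 3) with hQdef
  have hQ : 1 ≤ Q := one_le_mul_of_one_le_of_one_le hK (one_le_rpow hZ1 (by positivity))
  have hlog : ∀ n ≤ 4 * Z, 1 + log n ≤ Q := fun n hn ↦ (hsmall hZ hn).1
  have hlog' : ∀ n ≤ 2 * Z, 1 + log n ≤ Q := fun n hn ↦ hlog n (by omega)
  set y := ⌊(Z : ℝ) ^ (1 / 10 : ℝ)⌋₊
  have hy4 : y ^ 4 ≤ Z := by
    have : (y : ℝ) ^ 4 ≤ Z := by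
      calc (y : ℝ) ^ 4 ≤ ((Z : ℝ) ^ (1 / 10 : ℝ)) ^ 4 := by
            gcongr
            exact Nat.floor_le (by positivity)
        _ = (Z : ℝ) ^ (4 / 10 : ℝ) := by
            rw [← rpow_mul_natCast (by positivity)]
            norm_num
        _ ≤ Z := rpow_le_self_of_one_le hZ1 (by norm_num)
    exact_mod_cast this
  have hy2 : y ^ 2 ≤ Z := by nlinarith [Nat.le_self_pow two_ne_zero (y ^ 2)]
  have hyZ : y ≤ Z := (Nat.le_self_pow four_ne_zero y).trans hy4
  set E := (Z : ℝ) ^ (1 - 28 / 1000 : ℝ)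
  have htypeI : ∀ {C : ℝ}, 1 ≤ C → C * Q ^ 2 * (Z : ℝ) ^ (1 - 56 / 1000 : ℝ) ≤ C * Q ^ 3 * E :=
    fun {C} hC ↦ by
      gcongr C * ?_ * ?_
      · exact pow_le_pow_right₀ hQ (by norm_num)
      · exact rpow_le_rpow_of_exponent_le hZ1 (by norm_num)
  rw [sum_vonMangoldt_smul_psPhase_eq hZ' hyZ]
  calc _ ≤ C₁ * Q ^ 3 * E + C₂ * Q ^ 3 * E + C₃ * Q ^ 3 * E :=
        norm_add_le_of_le (norm_sub_le_of_le ((hI₁ hZ hZ' hh hu hy2 hlog').trans (htypeI hC₁))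
          ((hI₂ hZ hZ' hh hu hy4 hlog').trans (htypeI hC₂)))
          (hII hZ hZ' hh hu hlog fun n hn ↦ (hsmall hZ hn).2)
    _ = (C₁ + C₂ + C₃) * K ^ 3 * (E * ((Z : ℝ) ^ (ε / 3)) ^ 3) := by rw [hQdef]; ring
    _ = _ := by
        rw [← rpow_mul_natCast (by positivity), ← rpow_add (by positivity)]
        norm_num

end

section

open Finset Real ComplexConjugate
open scoped ArithmeticFunction.vonMangoldt

lemma sum_vonMangoldt_not_prime_le {Z Z' : ℕ} (hZ : 1 ≤ Z) (hZ' : Z' ≤ 2 * Z) :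
    ∑ n ∈ Ioc Z Z' with ¬n.Prime, Λ n ≤ 16 * (Z : ℝ) ^ (3 / 4 : ℝ) := by
  set x : ℝ := 2 * Z
  have hx : 1 ≤ x := by
    have : (1 : ℝ) ≤ Z := by exact_mod_cast hZ
    linarith
  have hfloor : Z' ≤ ⌊x⌋₊ := Nat.le_floor (show (Z' : ℝ) ≤ 2 * Z from mod_cast hZ')
  calc ∑ n ∈ Ioc Z Z' with ¬n.Prime, Λ n ≤ ∑ n ∈ Ioc 0 ⌊x⌋₊ with ¬n.Prime, Λ n :=
        sum_le_sum_of_subset_of_nonneg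
          (filter_subset_filter _ (Ioc_subset_Ioc (Nat.zero_le Z) hfloor))
          fun _ _ _ ↦ ArithmeticFunction.vonMangoldt_nonneg
    _ ≤ 2 * √x * log x := by
        rw [← Chebyshev.psi_sub_theta_eq_sum_not_prime]
        exact Chebyshev.psi_sub_theta_le hx
    _ ≤ 2 * √x * (x ^ (1 / 4 : ℝ) / (1 / 4)) := by
        gcongr
        exact log_le_rpow_div (by positivity) (by norm_num)
    _ = 8 * (2 ^ (3 / 4 : ℝ) * (Z : ℝ) ^ (3 / 4 : ℝ)) := by
        rw [← mul_rpow two_pos.le Z.cast_nonneg, sqrt_eq_rpow,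
          show (3 / 4 : ℝ) = 1 / 2 + 1 / 4 by norm_num, rpow_add (by positivity)]
        ring
    _ ≤ 8 * (2 * (Z : ℝ) ^ (3 / 4 : ℝ)) := by
        gcongr
        exact rpow_le_self_of_one_le one_le_two (by norm_num)
    _ = 16 * (Z : ℝ) ^ (3 / 4 : ℝ) := by ring

lemma norm_sum_smul_psPhase_neg (γ α h u : ℝ) (s : Finset ℕ) (w : ℕ → ℝ) :
    ‖∑ n ∈ s, w n • psPhase γ α (-h) u n‖ = ‖∑ n ∈ s, w n • psPhase γ (-α) h u n‖ := by
  rw [← Complex.norm_conj, map_sum]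
  congr 1
  refine sum_congr rfl fun n _ ↦ ?_
  rw [Complex.real_smul, Complex.real_smul, map_mul, Complex.conj_ofReal, psPhase, psPhase,
    ← eexp_neg]
  ring_nf

lemma norm_sum_prime_log_smul_psPhase_le {γ : ℝ} {Z Z' : ℕ} {α h u B : ℝ} (hZ : 1 ≤ Z)
    (hZ' : Z' ≤ 2 * Z) (hΛ : ‖∑ n ∈ Ioc Z Z', Λ n • psPhase γ α h u n‖ ≤ B) :
    ‖∑ p ∈ Ioc Z Z' with p.Prime, log p • psPhase γ α h u p‖ ≤
      B + 16 * (Z : ℝ) ^ (3 / 4 : ℝ) := by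
  have hsplit : ∑ p ∈ Ioc Z Z' with p.Prime, log p • psPhase γ α h u p =
      ∑ n ∈ Ioc Z Z', Λ n • psPhase γ α h u n -
        ∑ n ∈ Ioc Z Z' with ¬n.Prime, Λ n • psPhase γ α h u n := by
    rw [eq_sub_iff_add_eq, ← sum_filter_add_sum_filter_not (Ioc Z Z') Nat.Prime]
    congr 1
    exact sum_congr rfl fun p hp ↦ by
      rw [ArithmeticFunction.vonMangoldt_apply_prime (mem_filter.mp hp).2]
  rw [hsplit]
  refine norm_sub_le_of_le hΛ ((norm_sum_le_of_le _ fun n _ ↦ ?_).trans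
    (sum_vonMangoldt_not_prime_le hZ hZ'))
  rw [norm_smul, norm_psPhase, mul_one, norm_of_nonneg ArithmeticFunction.vonMangoldt_nonneg]

lemma norm_sum_prime_le_of_log_smul {E : Type*} [SeminormedAddCommGroup E] [NormedSpace ℝ E]
    {z : ℕ → E} {a b : ℕ} {B : ℝ} (hab : a ≤ b)
    (hz : ∀ y ≤ b, ‖∑ p ∈ Ioc a y with p.Prime, log p • z p‖ ≤ B) :
    ‖∑ p ∈ Ioc a b with p.Prime, z p‖ ≤ 2 * B := by
  have hB : 0 ≤ B := (norm_nonneg _).trans (hz b le_rfl)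
  -- The maximum with `2` keeps the weight antitone at `0` and `1`, where `log` vanishes.
  have hlog : ∀ n : ℕ, log 2 ≤ log (max n 2 : ℕ) := fun n ↦
    log_le_log two_pos (mod_cast le_max_right n 2)
  have hlog2 : 0 < log 2 := log_pos one_lt_two
  have hanti : Antitone fun n : ℕ ↦ (log (max n 2 : ℕ))⁻¹ := fun m n hmn ↦ by
    have := hlog2.trans_le (hlog m)
    dsimp only
    gcongr
  calc ‖∑ p ∈ Ioc a b with p.Prime, z p‖
      = ‖∑ n ∈ Ioc a b, (log (max n 2 : ℕ))⁻¹ • if n.Prime then log n • z n else 0‖ := by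
        rw [sum_filter]
        congr 1
        refine sum_congr rfl fun n _ ↦ ?_
        split_ifs with hn
        · rw [max_eq_left hn.two_le, inv_smul_smul₀ (log_pos (mod_cast hn.one_lt)).ne']
        · rw [smul_zero]
    _ ≤ (log (max a 2 : ℕ))⁻¹ * B :=
        norm_sum_Ioc_smul_le_of_antitoneOn (hanti.antitoneOn _) hab
          (inv_nonneg.mpr (hlog2.le.trans (hlog b))) fun y hy ↦ by
            simpa only [sum_filter] using hz y hy
    _ ≤ 2 * B := by
        gcongr
        refine inv_le_of_inv_le₀ two_pos (le_trans ?_ (hlog a))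
        linarith [log_two_gt_d9]

lemma norm_sum_prime_rpow_smul_le {E : Type*} [SeminormedAddCommGroup E] [NormedSpace ℝ E]
    {z : ℕ → E} {Z Z' : ℕ} {s B : ℝ} (hs : s ∈ Set.Icc 0 1) (hZZ' : Z ≤ Z') (hZ' : Z' ≤ 2 * Z)
    (hz : ∀ y ≤ Z', ‖∑ p ∈ Ioc Z y with p.Prime, z p‖ ≤ B) :
    ‖∑ p ∈ Ioc Z Z' with p.Prime, (p : ℝ) ^ s • z p‖ ≤ 4 * (Z : ℝ) ^ s * B := by
  obtain ⟨hs0, hs1⟩ := hs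
  have hB : 0 ≤ B := (norm_nonneg _).trans (hz Z' le_rfl)
  have hmono : Monotone fun n : ℕ ↦ (n : ℝ) ^ s := fun m n hmn ↦
    rpow_le_rpow m.cast_nonneg (mod_cast hmn) hs0
  calc ‖∑ p ∈ Ioc Z Z' with p.Prime, (p : ℝ) ^ s • z p‖
      = ‖∑ n ∈ Ioc Z Z', (n : ℝ) ^ s • if n.Prime then z n else 0‖ := by
        simp only [sum_filter, smul_ite, smul_zero]
    _ ≤ 2 * (Z' : ℝ) ^ s * B :=
        norm_sum_Ioc_smul_le_of_monotoneOn (hmono.monotoneOn _) hZZ' (by positivity)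
          fun y hy ↦ by simpa only [sum_filter] using hz y hy
    _ ≤ 2 * (2 * Z : ℝ) ^ s * B := by
        gcongr
        exact_mod_cast hZ'
    _ ≤ 2 * (2 * (Z : ℝ) ^ s) * B := by
        rw [mul_rpow two_pos.le Z.cast_nonneg]
        gcongr
        exact rpow_le_self_of_one_le one_le_two hs1
    _ = 4 * (Z : ℝ) ^ s * B := by ring

variable {γ : ℝ} (hγ : 97 / 100 < γ) (hγ1 : γ < 1)
include hγ hγ1

theorem norm_sum_prime_rpow_smul_psPhase_le {ε : ℝ} (hε : 0 < ε) :
    ∃ C : ℝ, 1 ≤ C ∧ ∀ {Z Z' : ℕ} {α h u : ℝ}, 1 ≤ Z → Z ≤ Z' → Z' ≤ 2 * Z →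
      |h| ∈ Set.Icc 1 ((Z : ℝ) ^ (1 / 16 : ℝ)) → u ∈ Set.Icc 0 1 →
      ‖∑ p ∈ Ioc Z Z' with p.Prime, (p : ℝ) ^ (1 - γ) • psPhase γ α h u p‖ ≤
        C * (Z : ℝ) ^ (1 - γ + (1 - 28 / 1000 + ε)) := by
  obtain ⟨C, hC, hΛ⟩ := norm_sum_vonMangoldt_smul_psPhase_le hγ hγ1 hε
  refine ⟨8 * (C + 16), by linarith, fun {Z Z' α h u} hZ hZZ' hZ' hh hu ↦ ?_⟩
  have hZ1 : (1 : ℝ) ≤ Z := by exact_mod_cast hZ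
  wlog hpos : 0 ≤ h generalizing α h
  · rw [← neg_neg h, norm_sum_smul_psPhase_neg]
    exact this (by rwa [abs_neg]) (by linarith)
  rw [abs_of_nonneg hpos] at hh
  have hexp : (Z : ℝ) ^ (3 / 4 : ℝ) ≤ (Z : ℝ) ^ (1 - 28 / 1000 + ε) :=
    rpow_le_rpow_of_exponent_le hZ1 (by linarith)
  have hprime : ∀ y ≤ Z', ‖∑ p ∈ Ioc Z y with p.Prime, psPhase γ α h u p‖ ≤
      2 * ((C + 16) * (Z : ℝ) ^ (1 - 28 / 1000 + ε)) := fun y hy ↦ by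
    rcases lt_or_ge y Z with hyZ | hZy
    · rw [Ioc_eq_empty_of_le hyZ.le, filter_empty, sum_empty, norm_zero]
      positivity
    refine norm_sum_prime_le_of_log_smul hZy fun x hx ↦ ?_
    refine (norm_sum_prime_log_smul_psPhase_le hZ (by omega)
      (hΛ hZ (by omega) hh hu)).trans ?_
    linarith
  refine (norm_sum_prime_rpow_smul_le ⟨by linarith, by linarith⟩ hZZ' hZ' hprime).trans_eq ?_
  rw [rpow_add (by positivity) (1 - γ)]
  ring

theorem norm_sum_psPhase_le :
    ∃ C : ℝ, 1 ≤ C ∧ ∀ {Z Z' : ℕ} {h u : ℝ}, 1 ≤ Z → Z' ≤ 2 * Z →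
      |h| ∈ Set.Icc 1 ((Z : ℝ) ^ (1 / 16 : ℝ)) → u ∈ Set.Icc 0 1 →
      ‖∑ n ∈ Ioc Z Z', psPhase γ 0 h u n‖ ≤ C * (Z : ℝ) ^ (1 - 56 / 1000 : ℝ) := by
  obtain ⟨C, hC, hwindow⟩ := norm_sum_psWindow_mul_le hγ hγ1
  refine ⟨C, hC, fun {Z Z' h u} hZ hZ' hh hu ↦ ?_⟩
  wlog hpos : 0 ≤ h generalizing h
  · have hneg := norm_sum_smul_psPhase_neg γ 0 (-h) u (Ioc Z Z') fun _ ↦ 1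
    simp only [one_smul, neg_neg, neg_zero] at hneg
    rw [hneg]
    exact this (by rwa [abs_neg]) (by linarith)
  rw [abs_of_nonneg hpos] at hh
  have hblock : ∑ m ∈ Ioc 0 Z', psWindow γ 0 h u Z Z' (m * 1) =
      ∑ n ∈ Ioc Z Z', psPhase γ 0 h u n := by
    simp only [mul_one, psWindow, Set.indicator_apply, ← sum_filter]
    congr 1
    ext n
    simp only [mem_filter, mem_Ioc, Set.mem_Ioc]
    omega
  simpa only [hblock, Nat.cast_one, div_one] using
    hwindow (y := Z') (α := 0) hZ hZ' hh hu one_pos (by omega)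

end

section

open Finset Real

lemma norm_eexp_sub_one_le (x : ℝ) : ‖eexp x - 1‖ ≤ 2 * π * |x| := by
  rw [eexp_eq_exp_mul_I, mul_comm]
  refine norm_exp_I_mul_ofReal_sub_one_le.trans_eq ?_
  rw [norm_eq_abs, abs_mul, abs_of_pos two_pi_pos]

/-- The sawtooth function `{x} - 1/2`, written `ψ` in analytic number theory. -/
noncomputable def sawtooth (x : ℝ) : ℝ := Int.fract x - 1 / 2

/-- The mean of `sawtooth` over `[x, x + η]`, written through the second Bernoulli polynomial, whose
periodization is an antiderivative of twice the sawtooth. -/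
noncomputable def smoothSawtooth (η x : ℝ) : ℝ :=
  (bernoulliFun 2 (Int.fract (x + η)) - bernoulliFun 2 (Int.fract x)) / (2 * η)

lemma smoothSawtooth_sub_le_sawtooth {η : ℝ} (hη : η ∈ Set.Ioc 0 1) (x : ℝ) :
    smoothSawtooth η x - η / 2 ≤ sawtooth x := by
  obtain ⟨hη0, hη1⟩ := hη
  have ht0 := Int.fract_nonneg x
  have ht1 := Int.fract_lt_one x
  rw [smoothSawtooth, sawtooth, sub_le_iff_le_add, div_le_iff₀ (by positivity), bernoulliFun_two,
    bernoulliFun_two]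
  rcases lt_or_ge (Int.fract x + η) 1 with hlt | hge
  · have hfract : Int.fract (x + η) = Int.fract x + η := Int.fract_eq_iff.mpr
      ⟨by linarith, hlt, ⌊x⌋, by rw [Int.fract]; ring⟩
    rw [hfract]
    nlinarith
  · have hfract : Int.fract (x + η) = Int.fract x + η - 1 := Int.fract_eq_iff.mpr
      ⟨by linarith, by linarith, ⌊x⌋ + 1, by rw [Int.fract]; push_cast; ring⟩
    rw [hfract]
    nlinarith

lemma sawtooth_le_smoothSawtooth_add {η : ℝ} (hη : η ∈ Set.Ioc 0 1) (x : ℝ) :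
    sawtooth x ≤ smoothSawtooth η (x - η) + η / 2 := by
  obtain ⟨hη0, hη1⟩ := hη
  have ht0 := Int.fract_nonneg x
  have ht1 := Int.fract_lt_one x
  rw [smoothSawtooth, sawtooth, ← sub_le_iff_le_add, le_div_iff₀ (by positivity), sub_add_cancel,
    bernoulliFun_two, bernoulliFun_two]
  rcases le_or_gt η (Int.fract x) with hle | hgt
  · have hfract : Int.fract (x - η) = Int.fract x - η := Int.fract_eq_iff.mpr
      ⟨by linarith, by linarith, ⌊x⌋, by rw [Int.fract]; ring⟩
    rw [hfract]
    nlinarith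
  · have hfract : Int.fract (x - η) = Int.fract x - η + 1 := Int.fract_eq_iff.mpr
      ⟨by linarith, by linarith, ⌊x⌋ - 1, by rw [Int.fract]; push_cast; ring⟩
    rw [hfract]
    nlinarith

lemma abs_sawtooth_sub_smoothSawtooth_le {η : ℝ} (hη : η ∈ Set.Ioc 0 1) (x : ℝ) :
    |sawtooth x - smoothSawtooth η x| ≤
      smoothSawtooth η (x - η) - smoothSawtooth η x + 3 / 2 * η := by
  have hlower := smoothSawtooth_sub_le_sawtooth hη x
  have hupper := sawtooth_le_smoothSawtooth_add hη x
  have := hη.1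
  rw [abs_le]
  constructor <;> linarith

lemma hasSum_eexp_bernoulliFun_two (x : ℝ) :
    HasSum (fun h : ℤ ↦ 1 / (h : ℂ) ^ 2 * eexp (h * x))
      ((2 * π ^ 2 * bernoulliFun 2 (Int.fract x) : ℝ) : ℂ) := by
  have hbernoulli := hasSum_one_div_pow_mul_fourier_mul_bernoulliFun le_rfl
    ⟨Int.fract_nonneg x, (Int.fract_lt_one x).le⟩
  have hperiod : ((Int.fract x : ℝ) : UnitAddCircle) = x := by
    rw [← Int.self_sub_floor, AddCircle.coe_sub, sub_eq_self]
    exact (AddCircle.coe_eq_zero_iff 1).mpr ⟨⌊x⌋, by simp⟩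
  convert! hbernoulli using 2 with h
  · rw [hperiod, fourier_coe_apply, eexp]
    push_cast
    ring_nf
  · push_cast [Nat.factorial_two]
    rw [mul_pow, Complex.I_sq]
    ring

/-- The `h`-th Fourier coefficient of `smoothSawtooth η`; the quotient is `0` at `h = 0`. -/
noncomputable def smoothSawtoothCoeff (η : ℝ) (h : ℤ) : ℂ :=
  (eexp (h * η) - 1) / (4 * π ^ 2 * η * h ^ 2 : ℝ)

lemma hasSum_smoothSawtooth {η : ℝ} (hη : 0 < η) (x : ℝ) :
    HasSum (fun h : ℤ ↦ smoothSawtoothCoeff η h * eexp (h * x)) (smoothSawtooth η x : ℂ) := by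
  convert! ((hasSum_eexp_bernoulliFun_two (x + η)).sub
    (hasSum_eexp_bernoulliFun_two x)).mul_left (1 / (4 * π ^ 2 * η : ℝ) : ℂ) using 2 with h
  · rw [mul_add, eexp_add, smoothSawtoothCoeff]
    push_cast
    ring
  · have := pi_ne_zero
    have := hη.ne'
    rw [smoothSawtooth]
    push_cast
    field_simp
    ring

lemma norm_smoothSawtoothCoeff_le {η : ℝ} (hη : 0 < η) (h : ℤ) :
    ‖smoothSawtoothCoeff η h‖ ≤ 1 / (2 * |(h : ℝ)|) := by
  rcases eq_or_ne h 0 with rfl | hh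
  · simp [smoothSawtoothCoeff]
  have : 0 < |(h : ℝ)| := by positivity
  rw [smoothSawtoothCoeff, norm_div, Complex.norm_real, norm_of_nonneg (by positivity),
    ← sq_abs (h : ℝ)]
  calc _ ≤ 2 * π * |h * η| / (4 * π ^ 2 * η * |(h : ℝ)| ^ 2) := by
        gcongr
        exact norm_eexp_sub_one_le _
    _ = 1 / (2 * |(h : ℝ)|) * π⁻¹ := by
        rw [abs_mul, abs_of_pos hη]
        field_simp
        ring
    _ ≤ 1 / (2 * |(h : ℝ)|) * 1 := by
        gcongr
        exact inv_le_one_of_one_le₀ (by linarith [pi_gt_three])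
    _ = _ := mul_one _

lemma norm_smoothSawtoothCoeff_le_sq {η : ℝ} (hη : 0 < η) (h : ℤ) :
    ‖smoothSawtoothCoeff η h‖ ≤ 1 / (4 * η) / (h : ℝ) ^ 2 := by
  have hnum : ‖eexp (h * η) - 1‖ ≤ π ^ 2 := by
    refine (norm_sub_le _ _).trans ?_
    rw [norm_eexp, norm_one]
    nlinarith [pi_gt_three]
  rw [smoothSawtoothCoeff, norm_div, Complex.norm_real, norm_of_nonneg (by positivity)]
  calc _ ≤ π ^ 2 / (4 * π ^ 2 * η * (h : ℝ) ^ 2) := by gcongr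
    _ = 1 / (4 * η) / (h : ℝ) ^ 2 := by field_simp

lemma norm_le_of_hasSum_nat {E : Type*} [SeminormedAddCommGroup E] {f : ℕ → E} {s : E} {H : ℕ}
    {A B : ℝ} (hs : HasSum f s) (h0 : f 0 = 0) (hB : ∀ n ∈ Icc 1 H, ‖f n‖ ≤ B / n)
    (hA : ∀ n, ‖f n‖ ≤ A / (n : ℝ) ^ 2) : ‖s‖ ≤ harmonic H * B + 2 * A / (H + 1) := by
  have hA0 : 0 ≤ A := (norm_nonneg _).trans (by simpa using hA 1)
  refine le_of_tendsto hs.tendsto_sum_nat.norm ?_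
  filter_upwards [Filter.eventually_ge_atTop (H + 1)] with N hN
  have hhead : ‖∑ n ∈ range (H + 1), f n‖ ≤ harmonic H * B := by
    rw [range_eq_Ico, sum_eq_sum_Ico_succ_bot (by omega), h0, zero_add, zero_add,
      Ico_add_one_right_eq_Icc]
    refine (norm_sum_le_of_le _ hB).trans_eq ?_
    rw [harmonic_eq_sum_Icc, Rat.cast_sum, sum_mul]
    exact sum_congr rfl fun n _ ↦ by push_cast; ring
  have htail : ‖∑ n ∈ Ico (H + 1) N, f n‖ ≤ 2 * A / (H + 1) := by
    refine (norm_sum_le_of_le _ fun n _ ↦ hA n).trans ?_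
    simp only [div_eq_mul_inv A, ← mul_sum]
    calc A * ∑ n ∈ Ico (H + 1) N, ((n : ℝ) ^ 2)⁻¹ ≤ A * (2 / (H + 1)) := by
          gcongr
          exact sum_Ioo_inv_sq_le H N
      _ = 2 * A / (H + 1) := by ring
  rw [← sum_range_add_sum_Ico f hN]
  exact norm_add_le_of_le hhead htail

lemma norm_le_of_hasSum_int {E : Type*} [SeminormedAddCommGroup E] {f : ℤ → E} {s : E} {H : ℕ}
    {A B : ℝ} (hs : HasSum f s) (h0 : f 0 = 0)
    (hB : ∀ h : ℤ, h ≠ 0 → |h| ≤ H → ‖f h‖ ≤ B / (2 * |(h : ℝ)|))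
    (hA : ∀ h, ‖f h‖ ≤ A / (h : ℝ) ^ 2) : ‖s‖ ≤ harmonic H * B + 4 * A / (H + 1) := by
  have hfold := hs.nat_add_neg
  rw [h0, add_zero] at hfold
  rw [show 4 * A = 2 * (2 * A) by ring]
  refine norm_le_of_hasSum_nat hfold (by simp [h0]) (fun n hn ↦ ?_) fun n ↦ ?_
  · obtain ⟨hn1, hnH⟩ := mem_Icc.mp hn
    refine (norm_add_le_of_le (hB n (by omega) (by simpa using hnH))
      (hB (-n) (by omega) (by simpa using hnH))).trans_eq ?_
    push_cast
    rw [abs_neg, Nat.abs_cast]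
    ring
  · refine (norm_add_le_of_le (hA n) (hA (-n))).trans_eq ?_
    push_cast
    ring

section SawtoothSums

variable {ι : Type*} {S : Finset ι} {z : ι → ℂ} {x : ι → ℝ} {η : ℝ} {H : ℕ}

theorem norm_sum_mul_smoothSawtooth_le {B I : ℝ} (hη : 0 < η) (hI : ∑ n ∈ S, ‖z n‖ ≤ I)
    (hB : ∀ h : ℤ, h ≠ 0 → |h| ≤ H → ‖∑ n ∈ S, z n * eexp (h * x n)‖ ≤ B) :
    ‖∑ n ∈ S, z n * smoothSawtooth η (x n)‖ ≤ harmonic H * B + I / ((H + 1) * η) := by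
  have hseries : HasSum (fun h : ℤ ↦ smoothSawtoothCoeff η h * ∑ n ∈ S, z n * eexp (h * x n))
      (∑ n ∈ S, z n * smoothSawtooth η (x n)) := by
    simp only [mul_sum, mul_left_comm (smoothSawtoothCoeff η _)]
    exact hasSum_sum fun n _ ↦ (hasSum_smoothSawtooth hη (x n)).mul_left (z n)
  have htrivial : ∀ h : ℤ, ‖∑ n ∈ S, z n * eexp (h * x n)‖ ≤ I := fun h ↦
    (norm_sum_le_of_le _ fun n _ ↦ by rw [norm_mul, norm_eexp, mul_one]).trans hI
  refine (norm_le_of_hasSum_int (A := I / (4 * η)) (B := B) hseries (by simp [smoothSawtoothCoeff])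
    (fun h hh hhH ↦ ?_) fun h ↦ ?_).trans_eq (by field_simp)
  · calc _ ≤ 1 / (2 * |(h : ℝ)|) * B :=
          norm_mul_le_of_le (norm_smoothSawtoothCoeff_le hη h) (hB h hh hhH)
      _ = _ := by ring
  · calc _ ≤ 1 / (4 * η) / (h : ℝ) ^ 2 * I :=
          norm_mul_le_of_le (norm_smoothSawtoothCoeff_le_sq hη h) (htrivial h)
      _ = _ := by ring

lemma norm_sum_mul_eexp_sub (h c : ℝ) :
    ‖∑ n ∈ S, z n * eexp (h * (x n - c))‖ = ‖∑ n ∈ S, z n * eexp (h * x n)‖ := by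
  have hfactor : ∀ n, z n * eexp (h * (x n - c)) = z n * eexp (h * x n) * eexp (-(h * c)) :=
    fun n ↦ by rw [mul_assoc, ← eexp_add, mul_sub, sub_eq_add_neg]
  simp only [hfactor, ← sum_mul, norm_mul, norm_eexp, mul_one]

theorem norm_sum_mul_sawtooth_le {B₁ B₂ W : ℝ} (hη : η ∈ Set.Ioc 0 1) (hW : 0 ≤ W)
    (hz : ∀ n ∈ S, ‖z n‖ ≤ W)
    (hB₁ : ∀ h : ℤ, h ≠ 0 → |h| ≤ H → ‖∑ n ∈ S, z n * eexp (h * x n)‖ ≤ B₁)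
    (hB₂ : ∀ h : ℤ, h ≠ 0 → |h| ≤ H → ‖∑ n ∈ S, eexp (h * x n)‖ ≤ B₂) :
    ‖∑ n ∈ S, z n * sawtooth (x n)‖ ≤
      harmonic H * (B₁ + 2 * W * B₂) + W * #S * (3 / ((H + 1) * η) + 3 / 2 * η) := by
  have hη0 := hη.1
  have hweighted := norm_sum_mul_smoothSawtooth_le hη0
    ((sum_le_card_nsmul S _ W hz).trans_eq (nsmul_eq_mul _ _)) hB₁
  have hunweighted : ∀ c, |∑ n ∈ S, smoothSawtooth η (x n - c)| ≤
      harmonic H * B₂ + #S / ((H + 1) * η) := fun c ↦ by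
    have hsmooth := norm_sum_mul_smoothSawtooth_le (S := S) (z := 1) (x := fun n ↦ x n - c)
      (I := #S) (B := B₂) (H := H) hη0 (by simp) fun h hh hhH ↦ by
        rw [norm_sum_mul_eexp_sub]
        simpa only [Pi.one_apply, one_mul] using hB₂ h hh hhH
    simpa only [Pi.one_apply, one_mul, ← Complex.ofReal_sum, Complex.norm_real, norm_eq_abs]
      using hsmooth
  have herror : ‖∑ n ∈ S, z n * ((sawtooth (x n) - smoothSawtooth η (x n) : ℝ) : ℂ)‖ ≤
      W * (2 * (harmonic H * B₂ + #S / ((H + 1) * η)) + #S * (3 / 2 * η)) := by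
    calc _ ≤ ∑ n ∈ S, W * (smoothSawtooth η (x n - η) - smoothSawtooth η (x n) + 3 / 2 * η) :=
          norm_sum_le_of_le _ fun n hn ↦ norm_mul_le_of_le (hz n hn) (by
            rw [Complex.norm_real]
            exact abs_sawtooth_sub_smoothSawtooth_le hη (x n))
      _ = W * (∑ n ∈ S, smoothSawtooth η (x n - η) - ∑ n ∈ S, smoothSawtooth η (x n - 0) +
            #S * (3 / 2 * η)) := by
          rw [← mul_sum, sum_add_distrib, sum_sub_distrib, sum_const, nsmul_eq_mul]
          simp only [sub_zero]
      _ ≤ _ := by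
          gcongr
          linarith [(abs_le.mp (hunweighted η)).2, (abs_le.mp (hunweighted 0)).1]
  calc _ = ‖∑ n ∈ S, z n * smoothSawtooth η (x n) +
        ∑ n ∈ S, z n * ((sawtooth (x n) - smoothSawtooth η (x n) : ℝ) : ℂ)‖ := by
        rw [← sum_add_distrib]
        exact congrArg _ (sum_congr rfl fun n _ ↦ by push_cast; ring)
    _ ≤ _ := norm_add_le_of_le hweighted herror
    _ = _ := by ring

end SawtoothSums

end

section

open Finset Real

/-- The weight `p^{1-γ} e(αp³)` on the primes, extended by zero. -/
noncomputable def weightedPrimePhase (γ α : ℝ) (n : ℕ) : ℂ :=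
  if n.Prime then ((n : ℝ) ^ (1 - γ) : ℝ) * eexp (α * (n : ℝ) ^ 3) else 0

lemma norm_weightedPrimePhase_le {γ : ℝ} (hγ : γ ∈ Set.Icc 0 1) (α : ℝ) {Z n : ℕ}
    (hn : n ≤ 2 * Z) : ‖weightedPrimePhase γ α n‖ ≤ 2 * (Z : ℝ) ^ (1 - γ) := by
  obtain ⟨hγ0, hγ1⟩ := hγ
  rw [weightedPrimePhase]
  split_ifs
  · rw [norm_mul, norm_eexp, mul_one, Complex.norm_real, norm_of_nonneg (by positivity)]
    calc (n : ℝ) ^ (1 - γ) ≤ (2 * (Z : ℝ)) ^ (1 - γ) :=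
          rpow_le_rpow (by positivity) (mod_cast hn) (by linarith)
      _ = 2 ^ (1 - γ) * (Z : ℝ) ^ (1 - γ) := mul_rpow two_pos.le Z.cast_nonneg
      _ ≤ 2 * (Z : ℝ) ^ (1 - γ) := by
          gcongr
          exact rpow_le_self_of_one_le one_le_two (by linarith)
  · rw [norm_zero]
    positivity

lemma eexp_mul_neg_rpow (γ h u : ℝ) (n : ℕ) :
    eexp (h * -((n : ℝ) + u) ^ γ) = psPhase γ 0 h u n := by
  rw [psPhase]
  ring_nf

lemma sum_weightedPrimePhase_mul_eexp (γ α h u : ℝ) (s : Finset ℕ) :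
    ∑ n ∈ s, weightedPrimePhase γ α n * eexp (h * -((n : ℝ) + u) ^ γ) =
      ∑ p ∈ s with p.Prime, (p : ℝ) ^ (1 - γ) • psPhase γ α h u p := by
  rw [sum_filter]
  refine sum_congr rfl fun n _ ↦ ?_
  rw [weightedPrimePhase, ite_mul, zero_mul, mul_assoc, ← eexp_add, psPhase, mul_neg,
    ← sub_eq_add_neg, Complex.real_smul]

/-- Smoothing the sawtooth at scale `η = Z^{-28/1000}` and truncating its Fourier series at
`H ≈ Z^{1/16}` costs no more than the exponential sums themselves. -/
lemma sawtooth_truncation_error_le {γ Z : ℝ} (hZ : 1 ≤ Z) :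
    2 * Z ^ (1 - γ) * Z * (3 / ((⌊Z ^ (1 / 16 : ℝ)⌋₊ + 1) * Z ^ (-28 / 1000 : ℝ)) +
      3 / 2 * Z ^ (-28 / 1000 : ℝ)) ≤ 9 * Z ^ (1 - γ + (1 - 28 / 1000)) := by
  have : 0 < Z := by linarith
  have hfourier : 3 / ((⌊Z ^ (1 / 16 : ℝ)⌋₊ + 1) * Z ^ (-28 / 1000 : ℝ)) ≤
      3 * Z ^ (-28 / 1000 : ℝ) := by
    calc _ ≤ 3 / (Z ^ (1 / 16 : ℝ) * Z ^ (-28 / 1000 : ℝ)) := by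
          gcongr
          exact (Nat.lt_floor_add_one _).le
      _ = 3 * Z ^ (-(1 / 16 + -28 / 1000) : ℝ) := by
          rw [← rpow_add this, rpow_neg this.le, div_eq_mul_inv]
      _ ≤ 3 * Z ^ (-28 / 1000 : ℝ) := by
          gcongr 3 * ?_
          exact rpow_le_rpow_of_exponent_le hZ (by norm_num)
  calc _ ≤ 2 * Z ^ (1 - γ) * Z * (3 * Z ^ (-28 / 1000 : ℝ) + 3 / 2 * Z ^ (-28 / 1000 : ℝ)) := by
        gcongr
    _ = 9 * (Z ^ (1 - γ) * (Z ^ (1 : ℝ) * Z ^ (-28 / 1000 : ℝ))) := by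
        rw [rpow_one]
        ring
    _ = 9 * Z ^ (1 - γ + (1 - 28 / 1000)) := by
        rw [← rpow_add this, ← rpow_add this]
        norm_num

lemma exponential_sum_terms_le {γ Z ε K C₁ C₂ : ℝ} (hZ : 1 ≤ Z) (hε : 0 ≤ ε) (hK : 0 ≤ K)
    (hC₂ : 0 ≤ C₂) :
    K * Z ^ (ε / 2) * (C₁ * Z ^ (1 - γ + (1 - 28 / 1000 + ε / 2)) +
      2 * (2 * Z ^ (1 - γ)) * (C₂ * Z ^ (1 - 56 / 1000 : ℝ))) ≤
        K * (C₁ + 4 * C₂) * Z ^ (1 - γ + (1 - 28 / 1000 + ε)) := by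
  have : 0 < Z := by linarith
  calc _ ≤ K * Z ^ (ε / 2) * (C₁ * Z ^ (1 - γ + (1 - 28 / 1000 + ε / 2)) +
          2 * (2 * Z ^ (1 - γ)) * (C₂ * Z ^ (1 - 28 / 1000 + ε / 2))) := by
        gcongr K * Z ^ (ε / 2) * (_ + 2 * (2 * Z ^ (1 - γ)) * (C₂ * ?_))
        exact rpow_le_rpow_of_exponent_le hZ (by linarith)
    _ = K * (C₁ + 4 * C₂) * (Z ^ (1 - γ + (1 - 28 / 1000 + ε / 2)) * Z ^ (ε / 2)) := by
        rw [rpow_add this (1 - γ)]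
        ring
    _ = K * (C₁ + 4 * C₂) * Z ^ (1 - γ + (1 - 28 / 1000 + ε)) := by
        rw [← rpow_add this]
        ring_nf

lemma exists_harmonic_floor_rpow_le {s ε : ℝ} (hs : s ≤ 1) (hε : 0 < ε) :
    ∃ K : ℝ, 1 ≤ K ∧ ∀ {Z : ℕ}, 1 ≤ Z → (harmonic ⌊(Z : ℝ) ^ s⌋₊ : ℝ) ≤ K * (Z : ℝ) ^ ε := by
  obtain ⟨K, hK, hlog⟩ := exists_one_add_log_le_and_card_divisors_le hε
  refine ⟨K, hK, fun {Z} hZ ↦ (harmonic_le_one_add_log _).trans (hlog hZ ?_).1⟩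
  have : ⌊(Z : ℝ) ^ s⌋₊ ≤ Z :=
    Nat.floor_le_of_le (rpow_le_self_of_one_le (mod_cast hZ) hs)
  omega

theorem norm_sum_weightedPrimePhase_mul_sawtooth_le {γ ε : ℝ} (hγ : 97 / 100 < γ) (hγ1 : γ < 1)
    (hε : 0 < ε) : ∃ C : ℝ, 1 ≤ C ∧ ∀ {Z Z' : ℕ} {α u : ℝ}, 1 ≤ Z → Z ≤ Z' → Z' ≤ 2 * Z →
      u ∈ Set.Icc 0 1 →
      ‖∑ n ∈ Ioc Z Z', weightedPrimePhase γ α n * sawtooth (-((n : ℝ) + u) ^ γ)‖ ≤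
        C * (Z : ℝ) ^ (1 - γ + (1 - 28 / 1000 + ε)) := by
  obtain ⟨C₁, hC₁, hweighted⟩ := norm_sum_prime_rpow_smul_psPhase_le hγ hγ1 (half_pos hε)
  obtain ⟨C₂, hC₂, hunweighted⟩ := norm_sum_psPhase_le hγ hγ1
  obtain ⟨K, hK, hharmonic⟩ :=
    exists_harmonic_floor_rpow_le (s := 1 / 16) (by norm_num) (half_pos hε)
  refine ⟨K * (C₁ + 4 * C₂) + 9, by nlinarith, fun {Z Z' α u} hZ hZZ' hZ' hu ↦ ?_⟩
  have hZ1 : (1 : ℝ) ≤ Z := by exact_mod_cast hZ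
  set H := ⌊(Z : ℝ) ^ (1 / 16 : ℝ)⌋₊
  have hfreq : ∀ h : ℤ, h ≠ 0 → |h| ≤ H → |(h : ℝ)| ∈ Set.Icc 1 ((Z : ℝ) ^ (1 / 16 : ℝ)) :=
    fun h hh hhH ↦ ⟨mod_cast Int.one_le_abs hh,
      le_trans (mod_cast hhH) (Nat.floor_le (by positivity))⟩
  have hsaw := norm_sum_mul_sawtooth_le (S := Ioc Z Z') (z := weightedPrimePhase γ α)
    (x := fun n ↦ -((n : ℝ) + u) ^ γ) (H := H) (η := (Z : ℝ) ^ (-28 / 1000 : ℝ))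
    (W := 2 * (Z : ℝ) ^ (1 - γ))
    ⟨by positivity, rpow_le_one_of_one_le_of_nonpos hZ1 (by norm_num)⟩ (by positivity)
    (fun n hn ↦ norm_weightedPrimePhase_le ⟨by linarith, hγ1.le⟩ α
      ((mem_Ioc.mp hn).2.trans hZ'))
    (fun h hh hhH ↦ by
      rw [sum_weightedPrimePhase_mul_eexp]
      exact hweighted hZ hZZ' hZ' (hfreq h hh hhH) hu)
    (fun h hh hhH ↦ by
      simp only [eexp_mul_neg_rpow]
      exact hunweighted hZ hZ' (hfreq h hh hhH) hu)
  have hcard : (#(Ioc Z Z') : ℝ) ≤ Z := by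
    rw [Nat.card_Ioc]
    exact_mod_cast (by omega : Z' - Z ≤ Z)
  calc _ ≤ K * (Z : ℝ) ^ (ε / 2) * (C₁ * (Z : ℝ) ^ (1 - γ + (1 - 28 / 1000 + ε / 2)) +
          2 * (2 * (Z : ℝ) ^ (1 - γ)) * (C₂ * (Z : ℝ) ^ (1 - 56 / 1000 : ℝ))) +
        2 * (Z : ℝ) ^ (1 - γ) * Z * (3 / ((H + 1) * (Z : ℝ) ^ (-28 / 1000 : ℝ)) +
          3 / 2 * (Z : ℝ) ^ (-28 / 1000 : ℝ)) := by
        refine hsaw.trans ?_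
        gcongr
        exact hharmonic hZ
    _ ≤ K * (C₁ + 4 * C₂) * (Z : ℝ) ^ (1 - γ + (1 - 28 / 1000 + ε)) +
        9 * (Z : ℝ) ^ (1 - γ + (1 - 28 / 1000 + ε)) := by
        refine add_le_add (exponential_sum_terms_le hZ1 hε.le (by linarith) (by linarith))
          ((sawtooth_truncation_error_le hZ1).trans ?_)
        gcongr 9 * ?_
        exact rpow_le_rpow_of_exponent_le hZ1 (by linarith)
    _ = _ := by ring

end

section

open Finset Real

lemma mem_PiatetskiShapiroSet_iff {γ : ℝ} (hγ : 0 < γ) {p : ℕ} (hp : p.Prime) :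
    p ∈ PiatetskiShapiroSet γ ↔ ∃ k : ℕ, (p : ℝ) ^ γ ≤ k ∧ k < ((p : ℝ) + 1) ^ γ := by
  have hfloor : ∀ k : ℕ, p = ⌊(k : ℝ) ^ (1 / γ)⌋₊ ↔ (p : ℝ) ^ γ ≤ k ∧ k < ((p : ℝ) + 1) ^ γ :=
    fun k ↦ by
      rw [eq_comm, Nat.floor_eq_iff (by positivity), one_div,
        le_rpow_inv_iff_of_pos (by positivity) (by positivity) hγ,
        rpow_inv_lt_iff_of_pos (by positivity) (by positivity) hγ]
  constructor
  · rintro ⟨_, k, _, hk⟩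
    exact ⟨k, (hfloor k).mp hk⟩
  · rintro ⟨k, hk⟩
    have : (0 : ℝ) < p := by exact_mod_cast hp.pos
    have hk0 : (0 : ℝ) < k := lt_of_lt_of_le (by positivity) hk.1
    exact ⟨hp, k, mod_cast hk0, (hfloor k).mpr hk⟩

lemma sawtooth_neg {y : ℝ} (hy : 0 ≤ y) : sawtooth (-y) = ⌈y⌉₊ - y - 1 / 2 := by
  rw [sawtooth, Int.fract, Int.floor_neg, natCast_ceil_eq_intCast_ceil hy]
  push_cast
  ring

theorem indicator_PiatetskiShapiroSet_eq {γ : ℝ} (hγ : γ ∈ Set.Ioc 0 1) {p : ℕ} (hp : p.Prime) :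
    (PiatetskiShapiroSet γ).indicator 1 p = ((p : ℝ) + 1) ^ γ - (p : ℝ) ^ γ +
      (sawtooth (-((p : ℝ) + 1) ^ γ) - sawtooth (-(p : ℝ) ^ γ)) := by
  obtain ⟨hγ0, hγ1⟩ := hγ
  set a : ℝ := (p : ℝ) ^ γ
  set b : ℝ := ((p : ℝ) + 1) ^ γ
  have ha : 0 ≤ a := by positivity
  have hmem : p ∈ PiatetskiShapiroSet γ ↔ ⌈a⌉₊ < ⌈b⌉₊ := by
    simp only [mem_PiatetskiShapiroSet_iff hγ0 hp, ← Nat.ceil_le, ← Nat.lt_ceil]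
    exact ⟨fun ⟨_, hak, hkb⟩ ↦ hak.trans_lt hkb, fun hlt ↦ ⟨_, le_rfl, hlt⟩⟩
  have hle : ⌈a⌉₊ ≤ ⌈b⌉₊ := Nat.ceil_mono (rpow_le_rpow p.cast_nonneg (by linarith) hγ0.le)
  have hle_add_one : ⌈b⌉₊ ≤ ⌈a⌉₊ + 1 := by
    rw [← Nat.ceil_add_one ha]
    refine Nat.ceil_mono ?_
    simpa only [one_rpow] using rpow_add_le_add_rpow p.cast_nonneg zero_le_one hγ0.le hγ1
  rw [sawtooth_neg ha, sawtooth_neg (y := b) (by positivity)]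
  by_cases hp' : p ∈ PiatetskiShapiroSet γ
  · have hceil : ⌈b⌉₊ = ⌈a⌉₊ + 1 := le_antisymm hle_add_one (hmem.mp hp')
    rw [Set.indicator_of_mem hp', Pi.one_apply, hceil]
    push_cast
    ring
  · have hceil : ⌈b⌉₊ = ⌈a⌉₊ := le_antisymm (not_lt.mp (mt hmem.mpr hp')) hle
    rw [Set.indicator_of_notMem hp', hceil]
    ring

/-- The reverse of Bernoulli's inequality `(1 + t) ^ γ ≤ 1 + γ t`, up to a quadratic error: apply
the latter with exponent `1 - γ` and use `(1 + t) ^ γ * (1 + t) ^ (1 - γ) = 1 + t`. -/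
lemma one_add_mul_one_sub_le_one_add_rpow {γ t : ℝ} (hγ : γ ∈ Set.Icc 0 1) (ht : 0 ≤ t) :
    1 + γ * t * (1 - t) ≤ (1 + t) ^ γ := by
  obtain ⟨hγ0, hγ1⟩ := hγ
  have hbernoulli : (1 + t) ^ (1 - γ) ≤ 1 + (1 - γ) * t :=
    rpow_one_add_le_one_add_mul_self (by linarith) (by linarith) (by linarith)
  have hmul : (1 + t) ^ γ * (1 + t) ^ (1 - γ) = 1 + t := by
    rw [← rpow_add (by positivity), add_sub_cancel, rpow_one]
  have : 0 ≤ 1 - γ := by linarith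
  refine le_of_mul_le_mul_right ?_ (by positivity : 0 < 1 + (1 - γ) * t)
  calc (1 + γ * t * (1 - t)) * (1 + (1 - γ) * t) = 1 + t - γ * t ^ 2 * (γ + (1 - γ) * t) := by ring
    _ ≤ 1 + t := sub_le_self _ (by positivity)
    _ = (1 + t) ^ γ * (1 + t) ^ (1 - γ) := hmul.symm
    _ ≤ (1 + t) ^ γ * (1 + (1 - γ) * t) := by gcongr

theorem abs_inv_mul_rpow_mul_rpow_sub_sub_one_le {γ x : ℝ} (hγ : γ ∈ Set.Ioc 0 1) (hx : 0 < x) :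
    |γ⁻¹ * x ^ (1 - γ) * ((x + 1) ^ γ - x ^ γ) - 1| ≤ 1 / x := by
  obtain ⟨hγ0, hγ1⟩ := hγ
  have hscale : γ⁻¹ * x ^ (1 - γ) * ((x + 1) ^ γ - x ^ γ) =
      γ⁻¹ * x * ((1 + 1 / x) ^ γ - 1) := by
    have hmul : x ^ (1 - γ) * x ^ γ = x := by rw [← rpow_add hx, sub_add_cancel, rpow_one]
    calc _ = γ⁻¹ * x ^ (1 - γ) * ((x * (1 + 1 / x)) ^ γ - x ^ γ) := by
          rw [mul_one_add, mul_one_div_cancel hx.ne']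
      _ = γ⁻¹ * (x ^ (1 - γ) * x ^ γ) * ((1 + 1 / x) ^ γ - 1) := by
          rw [mul_rpow hx.le (by positivity)]
          ring
      _ = _ := by rw [hmul]
  have hupper : (1 + 1 / x) ^ γ ≤ 1 + γ * (1 / x) :=
    rpow_one_add_le_one_add_mul_self (by linarith [one_div_pos.mpr hx]) hγ0.le hγ1
  have hlower := one_add_mul_one_sub_le_one_add_rpow (γ := γ) (t := 1 / x) ⟨hγ0.le, hγ1⟩
    (by positivity)
  rw [hscale, abs_sub_le_iff]
  constructor
  · calc _ ≤ γ⁻¹ * x * (γ * (1 / x)) - 1 := by gcongr; linarith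
      _ = 0 := by field_simp; ring
      _ ≤ 1 / x := by positivity
  · calc _ ≤ 1 - γ⁻¹ * x * (γ * (1 / x) * (1 - 1 / x)) := by gcongr; linarith
      _ = 1 / x := by field_simp; ring

end

section

open Finset Real

/-- The contribution of `n` to `T₃ - S₃`: on primes, the amount by which the normalized indicator
of `PiatetskiShapiroSet γ` differs from `1`, twisted by `e(αn³)`; off the primes, zero. -/
noncomputable def psDiscrepancy (γ α : ℝ) (n : ℕ) : ℂ :=
  if n.Prime then
    ((γ⁻¹ * (n : ℝ) ^ (1 - γ) * (PiatetskiShapiroSet γ).indicator 1 n - 1 : ℝ) : ℂ) *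
      eexp (α * (n : ℝ) ^ 3)
  else 0

lemma norm_psDiscrepancy_sub_le {γ : ℝ} (hγ : γ ∈ Set.Ioc 0 1) (α : ℝ) {n : ℕ} (hn : 0 < n) :
    ‖psDiscrepancy γ α n - (γ⁻¹ : ℝ) * (weightedPrimePhase γ α n *
      sawtooth (-((n : ℝ) + 1) ^ γ) - weightedPrimePhase γ α n * sawtooth (-((n : ℝ) + 0) ^ γ))‖ ≤
        1 / n := by
  rw [psDiscrepancy, weightedPrimePhase, add_zero]
  split_ifs with hp
  · calc _ = ‖((γ⁻¹ * (n : ℝ) ^ (1 - γ) * (((n : ℝ) + 1) ^ γ - (n : ℝ) ^ γ) - 1 : ℝ) : ℂ) *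
          eexp (α * (n : ℝ) ^ 3)‖ := by
          rw [indicator_PiatetskiShapiroSet_eq hγ hp]
          push_cast
          ring_nf
      _ ≤ 1 / n := by
          rw [norm_mul, norm_eexp, mul_one, Complex.norm_real]
          exact abs_inv_mul_rpow_mul_rpow_sub_sub_one_le hγ (mod_cast hn)
  · simp

theorem norm_sum_psDiscrepancy_block_le {γ ε : ℝ} (hγ : 97 / 100 < γ) (hγ1 : γ < 1) (hε : 0 < ε) :
    ∃ C : ℝ, 1 ≤ C ∧ ∀ {Z Z' : ℕ} {α : ℝ}, 1 ≤ Z → Z ≤ Z' → Z' ≤ 2 * Z →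
      ‖∑ n ∈ Ioc Z Z', psDiscrepancy γ α n‖ ≤ C * (Z : ℝ) ^ (1 - γ + (1 - 28 / 1000 + ε)) := by
  obtain ⟨C, hC, hsaw⟩ := norm_sum_weightedPrimePhase_mul_sawtooth_le hγ hγ1 hε
  refine ⟨1 + 4 * C, by linarith, fun {Z Z' α} hZ hZZ' hZ' ↦ ?_⟩
  have hZ1 : (1 : ℝ) ≤ Z := by exact_mod_cast hZ
  set s : ℝ → ℂ := fun u ↦
    ∑ n ∈ Ioc Z Z', weightedPrimePhase γ α n * sawtooth (-((n : ℝ) + u) ^ γ)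
  set B : ℝ := (Z : ℝ) ^ (1 - γ + (1 - 28 / 1000 + ε))
  have hB : 1 ≤ B := one_le_rpow hZ1 (by linarith)
  have hmain : ‖∑ n ∈ Ioc Z Z', psDiscrepancy γ α n - (γ⁻¹ : ℝ) * (s 1 - s 0)‖ ≤ 1 := by
    have hcard : (#(Ioc Z Z') : ℝ) ≤ Z := by
      rw [Nat.card_Ioc]
      exact_mod_cast (by omega : Z' - Z ≤ Z)
    rw [← sum_sub_distrib, mul_sum, ← sum_sub_distrib]
    calc _ ≤ ∑ n ∈ Ioc Z Z', 1 / (Z : ℝ) := norm_sum_le_of_le _ fun n hn ↦ by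
          have hZn := (mem_Ioc.mp hn).1
          refine (norm_psDiscrepancy_sub_le ⟨by linarith, hγ1.le⟩ α (by omega)).trans ?_
          gcongr
      _ = #(Ioc Z Z') / (Z : ℝ) := by rw [sum_const, nsmul_eq_mul, mul_one_div]
      _ ≤ 1 := div_le_one_of_le₀ hcard Z.cast_nonneg
  have hsawteeth : ‖((γ⁻¹ : ℝ) : ℂ) * (s 1 - s 0)‖ ≤ 2 * (C * B + C * B) := by
    refine norm_mul_le_of_le ?_ (norm_sub_le_of_le (hsaw hZ hZZ' hZ' ⟨zero_le_one, le_rfl⟩)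
      (hsaw hZ hZZ' hZ' ⟨le_rfl, zero_le_one⟩))
    rw [Complex.norm_real, norm_of_nonneg (by positivity)]
    exact inv_le_of_inv_le₀ two_pos (by linarith)
  calc _ = ‖∑ n ∈ Ioc Z Z', psDiscrepancy γ α n - (γ⁻¹ : ℝ) * (s 1 - s 0) +
        (γ⁻¹ : ℝ) * (s 1 - s 0)‖ := by rw [sub_add_cancel]
    _ ≤ 1 + 2 * (C * B + C * B) := norm_add_le_of_le hmain hsawteeth
    _ ≤ (1 + 4 * C) * B := by linarith

lemma rpow_le_of_le_three_quarters_mul {x y e : ℝ} (hx : 0 ≤ x) (hxy : x ≤ 3 / 4 * y)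
    (he : 1 / 2 ≤ e) : x ^ e ≤ 87 / 100 * y ^ e := by
  have hy : 0 ≤ y := by linarith
  calc x ^ e ≤ (3 / 4 * y) ^ e := rpow_le_rpow hx hxy (by linarith)
    _ = (3 / 4) ^ e * y ^ e := mul_rpow (by norm_num) hy
    _ ≤ (3 / 4) ^ (1 / 2 : ℝ) * y ^ e := by
        gcongr ?_ * _
        exact rpow_le_rpow_of_exponent_ge (by norm_num) (by norm_num) he
    _ ≤ 87 / 100 * y ^ e := by
        gcongr
        rw [← sqrt_eq_rpow, sqrt_le_left (by norm_num)]
        norm_num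

theorem norm_sum_Ioc_le_of_dyadic {E : Type*} [SeminormedAddCommGroup E] {f : ℕ → E} {C e : ℝ}
    (he : 1 / 2 ≤ e) (hf : f 1 = 0)
    (hblock : ∀ {Z Z' : ℕ}, 1 ≤ Z → Z ≤ Z' → Z' ≤ 2 * Z →
      ‖∑ n ∈ Ioc Z Z', f n‖ ≤ C * (Z : ℝ) ^ e) (X : ℕ) :
    ‖∑ n ∈ Ioc 0 X, f n‖ ≤ 10 * C * (X : ℝ) ^ e := by
  have hC : 0 ≤ C := by simpa using hblock le_rfl le_rfl one_le_two
  induction X using Nat.strong_induction_on with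
  | _ X ih =>
    rcases Nat.lt_or_ge X 2 with hX | hX
    · rw [sum_eq_zero fun n hn ↦ ?_, norm_zero]
      · positivity
      · obtain rfl : n = 1 := by
          have := mem_Ioc.mp hn
          omega
        exact hf
    · set Z := (X + 1) / 2
      have hZX : Z < X := by omega
      have hZe : (Z : ℝ) ^ e ≤ 87 / 100 * (X : ℝ) ^ e := by
        have : (4 * Z : ℝ) ≤ 3 * X := by exact_mod_cast (by omega : 4 * Z ≤ 3 * X)
        exact rpow_le_of_le_three_quarters_mul Z.cast_nonneg (by linarith) he
      have : 0 ≤ C * (X : ℝ) ^ e := by positivity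
      rw [← sum_Ioc_consecutive f (Nat.zero_le Z) hZX.le]
      calc _ ≤ 10 * C * (Z : ℝ) ^ e + C * (Z : ℝ) ^ e :=
            norm_add_le_of_le (ih Z hZX) (hblock (by omega) hZX.le (by omega))
        _ = 11 * C * (Z : ℝ) ^ e := by ring
        _ ≤ 11 * C * (87 / 100 * (X : ℝ) ^ e) := by gcongr
        _ ≤ 10 * C * (X : ℝ) ^ e := by linarith

lemma T₃_sub_S₃ (γ : ℝ) {N : ℕ} (hN : 1 ≤ N) (α : ℝ) :
    T₃ γ N α - S₃ N α = ∑ n ∈ Ioc 0 ⌊(N : ℝ) ^ (1 / 3 : ℝ)⌋₊, psDiscrepancy γ α n := by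
  have hcube : ∀ n : ℕ, (n : ℝ) ≤ (N : ℝ) ^ (1 / 3 : ℝ) → n < N + 1 := fun n hn ↦ by
    have hnN : (n : ℝ) ≤ N := hn.trans (rpow_le_self_of_one_le (mod_cast hN) (by norm_num))
    exact Nat.lt_succ_of_le (mod_cast hnN)
  have hrange : Ioc 0 ⌊(N : ℝ) ^ (1 / 3 : ℝ)⌋₊ =
      (range (N + 1)).filter fun n : ℕ ↦ 0 < n ∧ (n : ℝ) ≤ (N : ℝ) ^ (1 / 3 : ℝ) := by
    ext n
    rw [mem_Ioc, mem_filter, mem_range, Nat.le_floor_iff (by positivity)]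
    exact ⟨fun h ↦ ⟨hcube n h.2, h⟩, And.right⟩
  rw [T₃, S₃, hrange, sum_filter, sum_filter, sum_filter, mul_sum, ← sum_sub_distrib]
  refine sum_congr rfl fun n _ ↦ ?_
  by_cases hp : n.Prime
  · by_cases hle : (n : ℝ) ≤ (N : ℝ) ^ (1 / 3 : ℝ)
    · rw [psDiscrepancy]
      by_cases hmem : n ∈ PiatetskiShapiroSet γ
      · simp only [hp, hp.pos, hle, hmem, and_self, if_true, Set.indicator_of_mem, Pi.one_apply]
        push_cast
        ring
      · simp [-one_div, hp, hp.pos, hle, hmem]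
    · simp [-one_div, hle]
  · have hmem : n ∉ PiatetskiShapiroSet γ := fun h ↦ hp h.1
    simp [psDiscrepancy, hp, hmem]

lemma psDiscrepancy_one (α : ℝ) (n : ℕ) : psDiscrepancy 1 α n = 0 := by
  rw [psDiscrepancy]
  split_ifs with hp
  · have hmem : n ∈ PiatetskiShapiroSet 1 := ⟨hp, n, hp.pos, by simp⟩
    simp [hmem]
  · rfl

theorem T₃_approx_S₃_general (γ δ : ℝ) (hγ : γ ≤ 1) (hδ : 0 < δ) (h : (1 - γ) + δ < 7 / 250) :
    ∃ ε > (0 : ℝ), ∃ C > (0 : ℝ), ∀ N : ℕ, 2 ≤ N → ∀ α : ℝ,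
      ‖T₃ γ N α - S₃ N α‖ ≤ C * ((N : ℝ) ^ ((1 : ℝ) / 3)) ^ (1 - δ - ε) := by
  rcases hγ.lt_or_eq with hγ1 | rfl
  · obtain ⟨ε, hε, hεδ⟩ : ∃ ε > 0, 1 - γ + (1 - 28 / 1000 + ε) = 1 - δ - ε :=
      ⟨(7 / 250 - (1 - γ + δ)) / 2, by linarith, by ring⟩
    obtain ⟨C, hC, hblock⟩ := norm_sum_psDiscrepancy_block_le (by linarith) hγ1 hε
    refine ⟨ε, hε, 10 * C, by linarith, fun N hN α ↦ ?_⟩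
    rw [T₃_sub_S₃ γ (by omega), ← hεδ]
    refine (norm_sum_Ioc_le_of_dyadic (by linarith) (if_neg Nat.not_prime_one) hblock _).trans ?_
    gcongr
    exact Nat.floor_le (by positivity)
  · refine ⟨1, one_pos, 1, one_pos, fun N hN α ↦ ?_⟩
    rw [T₃_sub_S₃ 1 (by omega), sum_eq_zero fun n _ ↦ psDiscrepancy_one α n, norm_zero]
    positivity

end

theorem T₃_approx_S₃ (γ δ : ℝ) (hγ : 0 < γ) (hγ' : γ ≤ 1) (hδ : 0 < δ)
    (h : 1714 * (1 - γ) + 1725 * δ < 46) :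
    ∃ ε > (0 : ℝ), ∃ C > (0 : ℝ), ∀ N : ℕ, 2 ≤ N → ∀ α : ℝ,
      ‖T₃ γ N α - S₃ N α‖ ≤ C * ((N : ℝ) ^ ((1 : ℝ) / 3)) ^ (1 - δ - ε) :=
  T₃_approx_S₃_general γ δ hγ' hδ (by linarith)
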